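/- There exists a compact metrisable space Y carrying a free minimal action of the free group F₃ on three generators, together with two F₃-invariant metrics d and d' inducing the topology of Y, such that: (i) both open cones (tY, t·d)_{t>0} and (tY, t·d')_{t>0} have asymptotic Assouad–Nagata dimension 0; (ii) there is an isometric embedding (Y,d) → (Y,d'); (iii) neither warped cone O_{F₃}(Y,d) nor O_{F₃}(Y,d') has property A; (iv) the warped cone O_{F₃}(Y,d) does not coarsely embed into a Hilbert space while O_{F₃}(Y,d') does; in particular there is no coarse embedding O_{F₃}(Y,d) → O_{F₃}(Y,d'), so these two warped cones are not quasi-isometric. -/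

import Mathlib

/-!
STATEMENT 5: There is a compact metrisable space Y with a free minimal action of F₃ and
two invariant metrics d, d' inducing its topology such that both open cones have
asymptotic Assouad–Nagata dimension 0, (Y,d) embeds isometrically into (Y,d'), neither
warped cone has property A, the d-warped cone does not coarsely embed into a Hilbert
space while the d'-warped cone does; in particular there is no coarse embedding of the
d-warped cone into the d'-warped cone and they are not quasi-isometric.
-/

open Metric Set

def IsMetricOn {Y : Type*} (ρ : Y → Y → ℝ) : Prop :=
  (∀ y, ρ y y = 0) ∧ (∀ y y' : Y, y ≠ y' → 0 < ρ y y') ∧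
  (∀ y y' : Y, ρ y y' = ρ y' y) ∧ ∀ x y z : Y, ρ x z ≤ ρ x y + ρ y z

def IsWarpedMetric {G Y : Type*} (act : G → Y → Y) (S : Set G)
    (d : Y → Y → ℝ) (t : ℝ) (ρ : Y → Y → ℝ) : Prop :=
  IsMetricOn ρ ∧ (∀ y y', ρ y y' ≤ t * d y y') ∧
  (∀ s ∈ S, ∀ y, ρ y (act s y) ≤ 1) ∧
  ∀ ρ' : Y → Y → ℝ, IsMetricOn ρ' → (∀ y y', ρ' y y' ≤ t * d y y') →
    (∀ s ∈ S, ∀ y, ρ' y (act s y) ≤ 1) → ∀ y y', ρ' y y' ≤ ρ y y'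

/-- The two distance functions induce the same topology. -/
def SameTopology {Y : Type*} (d d' : Y → Y → ℝ) : Prop :=
  (∀ y : Y, ∀ ε : ℝ, 0 < ε → ∃ δ : ℝ, 0 < δ ∧ ∀ y', d y y' < δ → d' y y' < ε) ∧
  (∀ y : Y, ∀ ε : ℝ, 0 < ε → ∃ δ : ℝ, 0 < δ ∧ ∀ y', d' y y' < δ → d y y' < ε)

/-- (Sequential) compactness with respect to the distance function `d`. -/
def SeqCompactWith {Y : Type*} (d : Y → Y → ℝ) : Prop :=
  ∀ u : ℕ → Y, ∃ (y : Y) (φ : ℕ → ℕ), StrictMono φ ∧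
    ∀ ε : ℝ, 0 < ε → ∃ N : ℕ, ∀ n ≥ N, d (u (φ n)) y < ε

def RConn {Z : Type*} (ρ : Z → Z → ℝ) (R : ℝ) (U : Set Z) : Z → Z → Prop :=
  Relation.ReflTransGen (fun a b => a ∈ U ∧ b ∈ U ∧ ρ a b < R)

/-- A family of distance functions (on a common carrier, indexed by `ι`) has
asymptotic Assouad–Nagata dimension 0: there is `c` such that for every `R > 0` the
`R`-components of each member have diameter at most `c·R`. -/
def FamANdimZero {ι Y : Type*} (ρ : ι → Y → Y → ℝ) : Prop :=
  ∃ c : ℝ, 0 < c ∧ ∀ R : ℝ, 0 < R → ∀ i : ι,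
    ∀ a b : Y, RConn (ρ i) R (univ : Set Y) a b → ρ i a b ≤ c * R

/-- Property A for a family of distance functions on a common carrier. -/
def FamPropA' {ι Y : Type*} (ρ : ι → Y → Y → ℝ) : Prop :=
  ∀ R : ℕ, 0 < R → ∃ Sb : ℕ, ∀ i : ι, ∃ f : Y → Y → ℝ,
    (∀ x y, 0 ≤ f x y) ∧ (∀ x, HasSum (f x) 1) ∧
    (∀ x y, f x y ≠ 0 → ρ i x y ≤ Sb) ∧
    ∀ x x', ρ i x x' ≤ R → (∑' y, |f x y - f x' y|) ≤ 1 / R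

/-- A coarse embedding of a family of distance functions into a single metric target
(given by a distance function `dE`). -/
def FamCEinto {ι Y E : Type*} (ρ : ι → Y → Y → ℝ) (dE : E → E → ℝ) : Prop :=
  ∃ (f : ι → Y → E) (ρm ρp : ℝ → ℝ), Monotone ρm ∧ Monotone ρp ∧
    Filter.Tendsto ρm Filter.atTop Filter.atTop ∧
    Filter.Tendsto ρp Filter.atTop Filter.atTop ∧
    ∀ i x x', ρm (ρ i x x') ≤ dE (f i x) (f i x') ∧ dE (f i x) (f i x') ≤ ρp (ρ i x x')

/-- A coarse embedding of one family into another family (on possibly different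
carriers), as in Definition 2.2: a surjection onto the source family. -/
def FamCEfam {ι κ Y Z : Type*} (ρ : ι → Y → Y → ℝ) (σ : κ → Z → Z → ℝ) : Prop :=
  ∃ (I : Type) (p : I → ι) (q : I → κ) (f : I → Y → Z) (ρm ρp : ℝ → ℝ),
    Function.Surjective p ∧ Monotone ρm ∧ Monotone ρp ∧
    Filter.Tendsto ρm Filter.atTop Filter.atTop ∧
    Filter.Tendsto ρp Filter.atTop Filter.atTop ∧
    ∀ i x x', ρm (ρ (p i) x x') ≤ σ (q i) (f i x) (f i x') ∧
      σ (q i) (f i x) (f i x') ≤ ρp (ρ (p i) x x')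

/-- Quasi-isometry of two families of distance functions. -/
def FamQIfam {ι κ Y Z : Type*} (ρ : ι → Y → Y → ℝ) (σ : κ → Z → Z → ℝ) : Prop :=
  ∃ (I : Type) (p : I → ι) (q : I → κ) (f : I → Y → Z) (C A : ℝ),
    1 ≤ C ∧ 0 ≤ A ∧ Function.Surjective p ∧ Function.Surjective q ∧
    ∀ i, (∀ x x', C⁻¹ * ρ (p i) x x' - A ≤ σ (q i) (f i x) (f i x')) ∧
      (∀ x x', σ (q i) (f i x) (f i x') ≤ C * ρ (p i) x x' + A) ∧
      ∀ z, ∃ x, σ (q i) (f i x) z ≤ A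

/-- The standard symmetric generating set of the free group F₃. -/
def S3 : Set (FreeGroup (Fin 3)) :=
  {g | ∃ i : Fin 3, g = FreeGroup.of i ∨ g = (FreeGroup.of i)⁻¹}

/-- A fixed infinite-dimensional separable Hilbert space. -/
noncomputable abbrev ell2 : Type := lp (fun _ : ℕ => ℝ) 2

/-!
The space is the inverse limit `Y = lim F₃/M_k` of finite quotients, taken from two interlaced
decreasing chains `M_k ⊇ N_{k+1} ⊇ M_{k+1}` of finite-index normal subgroups of `F₃` (`Chain`).
Both chains define the same topology on `Y`. For one rapidly decreasing sequence of scales `a_k`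
(`Scale`), the metric `d` is the ultrametric that sees agreement modulo `N_k` at scale `a_k`, and
`d'` is the same construction for `M_k` (`um`). Left translation is minimal and preserves both
metrics, and it is free since the girth of `F₃/M_k` tends to infinity. Ultrametrics give open cones
of asymptotic Assouad-Nagata dimension zero (`andim_ultra`). An isometric embedding `(Y,d) → (Y,d')`
exists as soon as every `M_k/M_{k+1}` has at least as many elements as `F₃/N_{k+1}`; this is
arranged by choosing `M_{k+1}` deep enough (`exists_inj`, `isom_emb`).

For an isometric action the warped distance of `x` and `y` at level `t` is, up to `1`, the minimum
over `γ ∈ F₃` of `|γ| + t d(γx, y)` (`warp_upper`, `warp_lower`). At `t = 1/a_{k+1}` the warped cone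
therefore looks like the Cayley graph of `F₃/N_k`, respectively `F₃/M_k`.

* Property A fails for both cones because the Cayley graphs have unbounded girth: the paradoxical
  decomposition of `F₃` contradicts almost invariant measures of small support (`no_reiter`, `notA`).
* The cone of `d` does not embed into a Hilbert space. One takes
  `N_{k+1} = M_k ∩ ker (F₃ → SL₃(𝔽_p))` with `p` large compared with `|F₃/M_k|`. The two maps to
  `F₃/M_k` and to `SL₃(𝔽_p)` are jointly surjective, and a Poincaré inequality holds along the second
  factor with a constant independent of everything (`poincare`). Consequently every Hilbert space
  valued map on `F₃/N_{k+1}` with bounded displacement along edges brings two distinct points of some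
  `M_k`-fibre close to each other (`rel_step`), while such points are far apart (`notCE`). The Poincaré
  inequality rests on a uniform spectral gap of `SL₃(𝔽_p)` (`gapA`), which follows from relative
  property (T) of `(ℤ/p)² ⋊ SL₂` (`relT`) and bounded generation. It passes to the product by a trace
  argument: eigenvalues that are not constant along `SL₃(𝔽_p)` have multiplicity at least `p`
  (`quasirandom`), and return probabilities bound the trace (`eig_bound`, `eig_unif`).
* The cone of `d'` embeds into `ℓ²`. One takes `M_{k+1}` to be the mod-`2` homology cover (`HC`) of
  `N_{k+1}` intersected with a deep subgroup. Sending a point to the mod-`2` chain of a path from the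
  base point maps `F₃/M_{k+1}` to a Hamming cube; the map is `1`-Lipschitz and isometric below the
  girth (`ch_short`, `HC_cube`). The kernel `2T(1 - (1 - 1/T)^n)` of the Hamming distance `n`
  truncates the cube at the scale `T` at which the next coarser quotient takes over, and the two
  quotients visible at a level combine to a map into `ℓ²` (`level_emb`, `isCE`).

A coarse embedding of the first cone into the second could be composed with the embedding of the
second into `ℓ²` (`ce_comp`), and a quasi-isometry is a coarse embedding (`ce_of_qi`).
-/

namespace WC

/-! ### Almost invariant weights on `(ℤ/p)²` -/

section Region

variable {p : ℕ} [NeZero p]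

/-- The box of residue pairs whose representatives of least absolute value are below `p / 4`. -/
def Bx (w : ZMod p × ZMod p) : Prop :=
  4 * |w.1.valMinAbs| < p ∧ 4 * |w.2.valMinAbs| < p

lemma vma_add {x y : ZMod p} (hx : 4 * |x.valMinAbs| < p) (hy : 4 * |y.valMinAbs| < p) :
    (x + y).valMinAbs = x.valMinAbs + y.valMinAbs := by
  rw [ZMod.valMinAbs_spec]
  refine ⟨by push_cast; simp, ?_⟩
  have h1 := abs_lt.1 (show |x.valMinAbs| < (p : ℤ) - 3 * |x.valMinAbs| by linarith)
  have a1 := neg_abs_le x.valMinAbs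
  have a2 := le_abs_self x.valMinAbs
  have a3 := neg_abs_le y.valMinAbs
  have a4 := le_abs_self y.valMinAbs
  constructor <;> linarith

lemma vma_neg {x : ZMod p} (hx : 4 * |x.valMinAbs| < p) :
    (-x).valMinAbs = - x.valMinAbs := by
  rw [ZMod.valMinAbs_spec]
  refine ⟨by push_cast; simp, ?_⟩
  have a1 := neg_abs_le x.valMinAbs
  have a2 := le_abs_self x.valMinAbs
  have : (0:ℤ) < p := by exact_mod_cast NeZero.pos p
  constructor <;> linarith

open Classical in
/-- Mass transport along an injective map `al` that almost preserves the weight: if `al` sends the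
part of `E` that stays in the box into `F`, then the mass of `E` is almost bounded by that of `F`.
-/
lemma region_step (m : ZMod p × ZMod p → ℝ) (hm : ∀ w, 0 ≤ m w) (δ : ℝ)
    (hbox : ∑ w with ¬ Bx w, m w ≤ δ)
    (al : ZMod p × ZMod p → ZMod p × ZMod p) (hinj : Function.Injective al)
    (E F : Finset (ZMod p × ZMod p))
    (h : ∑ w ∈ E, m w ≤ ∑ w ∈ E, m (al w) + δ)
    (hEF : ∀ w ∈ E, Bx (al w) → al w ∈ F) :
    ∑ w ∈ E, m w ≤ ∑ w ∈ F, m w + 2 * δ := by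
  have h1 : ∑ w ∈ E, m (al w) = ∑ w ∈ E.image al, m w := by
    rw [Finset.sum_image (fun a _ b _ hab => hinj hab)]
  have h2 : ∑ w ∈ E.image al, m w ≤ ∑ w ∈ F ∪ (Finset.univ.filter fun w => ¬ Bx w), m w := by
    refine Finset.sum_le_sum_of_subset_of_nonneg ?_ fun w _ _ => hm w
    intro w hw
    obtain ⟨v, hv, rfl⟩ := Finset.mem_image.1 hw
    by_cases hb : Bx (al v)
    · exact Finset.mem_union_left _ (hEF v hv hb)
    · exact Finset.mem_union_right _ (by simpa using hb)
  have h3 : ∑ w ∈ F ∪ (Finset.univ.filter fun w => ¬ Bx w), m w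
      ≤ ∑ w ∈ F, m w + ∑ w with ¬ Bx w, m w := by
    rw [← Finset.sum_union_inter]
    have := Finset.sum_nonneg (s := F ∩ (Finset.univ.filter fun w => ¬ Bx w))
      (fun w _ => hm w)
    linarith
  linarith

open Classical in
/-- The part of the box where both coordinates are nonzero of the same sign, together with the
two axes without the origin, carries little mass of an almost invariant weight. The two shears push
this set, with the `x`-axis and the `y`-axis respectively, into its parts `|x| ≤ |y|` and
`|y| ≤ |x|`, which overlap only in the diagonal; a further shear moves the diagonal to the disjoint
line `y = 2x`. -/
lemma region_pos (m : ZMod p × ZMod p → ℝ) (hm : ∀ w, 0 ≤ m w) (δ : ℝ)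
    (hA : ∀ E : Finset (ZMod p × ZMod p),
      ∑ w ∈ E, m w ≤ ∑ w ∈ E, m (w.1, w.1 + w.2) + δ)
    (hB : ∀ E : Finset (ZMod p × ZMod p),
      ∑ w ∈ E, m w ≤ ∑ w ∈ E, m (w.1 + w.2, w.2) + δ)
    (hbox : ∑ w with ¬ Bx w, m w ≤ δ) :
    ∑ w with Bx w ∧ w ≠ 0 ∧ 0 ≤ w.1.valMinAbs * w.2.valMinAbs, m w ≤ 10 * δ := by
  have iA : Function.Injective (fun w : ZMod p × ZMod p => (w.1, w.1 + w.2)) := by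
    rintro ⟨a, b⟩ ⟨c, d⟩ h
    simp only [Prod.mk.injEq] at h
    obtain ⟨rfl, h⟩ := h
    simpa using h
  have iB : Function.Injective (fun w : ZMod p × ZMod p => (w.1 + w.2, w.2)) := by
    rintro ⟨a, b⟩ ⟨c, d⟩ h
    simp only [Prod.mk.injEq] at h
    obtain ⟨h, rfl⟩ := h
    simpa using h
  let Pos : Finset (ZMod p × ZMod p) :=
    Finset.univ.filter fun w => Bx w ∧ 0 < w.1.valMinAbs * w.2.valMinAbs
  let AX : Finset (ZMod p × ZMod p) :=
    Finset.univ.filter fun w => Bx w ∧ w.1.valMinAbs ≠ 0 ∧ w.2.valMinAbs = 0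
  let AY : Finset (ZMod p × ZMod p) :=
    Finset.univ.filter fun w => Bx w ∧ w.1.valMinAbs = 0 ∧ w.2.valMinAbs ≠ 0
  let PT : Finset (ZMod p × ZMod p) :=
    Pos.filter fun w => |w.1.valMinAbs| ≤ |w.2.valMinAbs|
  let PW : Finset (ZMod p × ZMod p) :=
    Pos.filter fun w => |w.2.valMinAbs| ≤ |w.1.valMinAbs|
  let D : Finset (ZMod p × ZMod p) :=
    Pos.filter fun w => w.1.valMinAbs = w.2.valMinAbs
  let D2 : Finset (ZMod p × ZMod p) :=
    Pos.filter fun w => 2 * w.1.valMinAbs = w.2.valMinAbs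
  have e1 : ∑ w ∈ Pos ∪ AX, m w ≤ ∑ w ∈ PT, m w + 2 * δ := by
    refine region_step m hm δ hbox _ iA _ _ (hA _) ?_
    intro w hw hb
    have hbw : Bx w := by
      rcases Finset.mem_union.1 hw with h | h
      · exact (Finset.mem_filter.1 h).2.1
      · exact (Finset.mem_filter.1 h).2.1
    have hs := vma_add hbw.1 hbw.2
    simp only [PT, Pos, Finset.mem_filter, Finset.mem_univ, true_and, hb, hs]
    set x := w.1.valMinAbs
    set y := w.2.valMinAbs
    have hxy : 0 ≤ x * y ∧ x ≠ 0 := by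
      rcases Finset.mem_union.1 hw with h | h
      · have := (Finset.mem_filter.1 h).2.2
        exact ⟨this.le, left_ne_zero_of_mul this.ne'⟩
      · have := (Finset.mem_filter.1 h).2.2
        refine ⟨?_, this.1⟩
        show 0 ≤ x * y
        rw [show y = 0 from this.2]; simp
    have hx2 : 0 < x * x := mul_self_pos.2 hxy.2
    constructor
    · nlinarith
    · rw [← sq_le_sq]; nlinarith [sq_nonneg y]
  have e2 : ∑ w ∈ Pos ∪ AY, m w ≤ ∑ w ∈ PW, m w + 2 * δ := by
    refine region_step m hm δ hbox _ iB _ _ (hB _) ?_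
    intro w hw hb
    have hbw : Bx w := by
      rcases Finset.mem_union.1 hw with h | h
      · exact (Finset.mem_filter.1 h).2.1
      · exact (Finset.mem_filter.1 h).2.1
    have hs := vma_add hbw.1 hbw.2
    simp only [PW, Pos, Finset.mem_filter, Finset.mem_univ, true_and, hb, hs]
    set x := w.1.valMinAbs
    set y := w.2.valMinAbs
    have hxy : 0 ≤ x * y ∧ y ≠ 0 := by
      rcases Finset.mem_union.1 hw with h | h
      · have := (Finset.mem_filter.1 h).2.2
        exact ⟨this.le, right_ne_zero_of_mul this.ne'⟩
      · have := (Finset.mem_filter.1 h).2.2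
        refine ⟨?_, this.2⟩
        show 0 ≤ x * y
        rw [show x = 0 from this.1]; simp
    have hx2 : 0 < y * y := mul_self_pos.2 hxy.2
    constructor
    · nlinarith
    · rw [← sq_le_sq]; nlinarith [sq_nonneg x]
  have e3 : ∑ w ∈ D, m w ≤ ∑ w ∈ D2, m w + 2 * δ := by
    refine region_step m hm δ hbox _ iA _ _ (hA _) ?_
    intro w hw hb
    obtain ⟨h1, h2⟩ := Finset.mem_filter.1 hw
    have h3 := (Finset.mem_filter.1 h1).2
    have hs := vma_add h3.1.1 h3.1.2
    simp only [D2, Pos, Finset.mem_filter, Finset.mem_univ, true_and, hb, hs]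
    have h4 := h3.2
    rw [← h2] at h4 ⊢
    constructor
    · nlinarith
    · ring
  have f1 : ∑ w ∈ PT, m w + ∑ w ∈ PW, m w = ∑ w ∈ Pos, m w + ∑ w ∈ D, m w := by
    rw [← Finset.sum_union_inter]
    congr 1
    · congr 1
      ext w
      simp only [PT, PW, Finset.mem_union, Finset.mem_filter]
      have := le_total |w.1.valMinAbs| |w.2.valMinAbs|
      tauto
    · congr 1
      ext w
      simp only [PT, PW, D, Pos, Finset.mem_inter, Finset.mem_filter, Finset.mem_univ, true_and]
      constructor
      · rintro ⟨⟨⟨h1, h2⟩, h3⟩, -, h4⟩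
        refine ⟨⟨h1, h2⟩, ?_⟩
        rcases abs_eq_abs.1 (le_antisymm h3 h4) with h | h
        · exact h
        · rw [h] at h2; nlinarith [sq_nonneg w.2.valMinAbs]
      · rintro ⟨h1, h2⟩
        exact ⟨⟨h1, by rw [h2]⟩, h1, by rw [h2]⟩
  have f2 : ∑ w ∈ D, m w + ∑ w ∈ D2, m w ≤ ∑ w ∈ Pos, m w := by
    rw [← Finset.sum_union]
    · refine Finset.sum_le_sum_of_subset_of_nonneg ?_ fun w _ _ => hm w
      exact Finset.union_subset (Finset.filter_subset _ _) (Finset.filter_subset _ _)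
    · rw [Finset.disjoint_left]
      intro w h1 h2
      have h3 := (Finset.mem_filter.1 h1).2
      have h4 := (Finset.mem_filter.1 h2).2
      have h5 := (Finset.mem_filter.1 (Finset.mem_filter.1 h1).1).2.2
      have : w.1.valMinAbs = 0 := by linarith
      rw [this] at h5; simp at h5
  have f3 : ∑ w ∈ Pos ∪ AX, m w = ∑ w ∈ Pos, m w + ∑ w ∈ AX, m w := by
    rw [Finset.sum_union]
    rw [Finset.disjoint_left]
    intro w h1 h2
    have h3 := (Finset.mem_filter.1 h1).2.2
    rw [(Finset.mem_filter.1 h2).2.2.2] at h3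
    simp at h3
  have f4 : ∑ w ∈ Pos ∪ AY, m w = ∑ w ∈ Pos, m w + ∑ w ∈ AY, m w := by
    rw [Finset.sum_union]
    rw [Finset.disjoint_left]
    intro w h1 h2
    have h3 := (Finset.mem_filter.1 h1).2.2
    rw [(Finset.mem_filter.1 h2).2.2.1] at h3
    simp at h3
  have f5 : ∑ w with Bx w ∧ w ≠ 0 ∧ 0 ≤ w.1.valMinAbs * w.2.valMinAbs, m w
      ≤ ∑ w ∈ Pos ∪ (AX ∪ AY), m w := by
    refine Finset.sum_le_sum_of_subset_of_nonneg ?_ fun w _ _ => hm w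
    intro w hw
    obtain ⟨-, h1, h2, h3⟩ := Finset.mem_filter.1 hw
    simp only [Pos, AX, AY, Finset.mem_union, Finset.mem_filter, Finset.mem_univ, true_and, h1]
    rcases h3.lt_or_eq with h | h
    · exact Or.inl h
    · right
      rcases mul_eq_zero.1 h.symm with h4 | h4
      · right
        refine ⟨h4, fun h5 => h2 ?_⟩
        exact Prod.ext ((ZMod.valMinAbs_eq_zero _).1 h4) ((ZMod.valMinAbs_eq_zero _).1 h5)
      · left
        refine ⟨fun h5 => h2 ?_, h4⟩
        exact Prod.ext ((ZMod.valMinAbs_eq_zero _).1 h5) ((ZMod.valMinAbs_eq_zero _).1 h4)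
  have f6 : ∑ w ∈ Pos ∪ (AX ∪ AY), m w ≤ ∑ w ∈ Pos, m w + (∑ w ∈ AX, m w + ∑ w ∈ AY, m w) := by
    have un : ∀ E F : Finset (ZMod p × ZMod p),
        ∑ w ∈ E ∪ F, m w ≤ ∑ w ∈ E, m w + ∑ w ∈ F, m w := by
      intro E F
      rw [← Finset.sum_union_inter]
      have := Finset.sum_nonneg (s := E ∩ F) (fun w _ => hm w)
      linarith
    linarith [un Pos (AX ∪ AY), un AX AY]
  have g1 := Finset.sum_nonneg (s := AX) (fun w _ => hm w)
  have g2 := Finset.sum_nonneg (s := AY) (fun w _ => hm w)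
  linarith

open Classical in
/-- An almost `SL₂`-invariant weight on `(ℤ/p)²` with little mass outside the box is concentrated
at the origin. -/
lemma region (m : ZMod p × ZMod p → ℝ) (hm : ∀ w, 0 ≤ m w) (δ : ℝ)
    (hA : ∀ E : Finset (ZMod p × ZMod p),
      ∑ w ∈ E, m w ≤ ∑ w ∈ E, m (w.1, w.1 + w.2) + δ)
    (hB : ∀ E : Finset (ZMod p × ZMod p),
      ∑ w ∈ E, m w ≤ ∑ w ∈ E, m (w.1 + w.2, w.2) + δ)
    (hA' : ∀ E : Finset (ZMod p × ZMod p),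
      ∑ w ∈ E, m w ≤ ∑ w ∈ E, m (w.1, w.2 - w.1) + δ)
    (hB' : ∀ E : Finset (ZMod p × ZMod p),
      ∑ w ∈ E, m w ≤ ∑ w ∈ E, m (w.1 - w.2, w.2) + δ)
    (hbox : ∑ w with ¬ Bx w, m w ≤ δ) :
    ∑ w with w ≠ 0, m w ≤ 21 * δ := by
  have hn : ∀ x : ZMod p, (4 * |(-x).valMinAbs| < p ↔ 4 * |x.valMinAbs| < p) := by
    intro x
    have := ZMod.natAbs_valMinAbs_neg x
    rw [Int.abs_eq_natAbs, this, ← Int.abs_eq_natAbs]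
  have hBn : ∀ w : ZMod p × ZMod p, Bx (-w.1, w.2) ↔ Bx w := by
    intro w; simp only [Bx, hn]
  let sg : ZMod p × ZMod p → ZMod p × ZMod p := fun w => (-w.1, w.2)
  have hsg : Function.Injective sg := by
    rintro ⟨a, b⟩ ⟨c, d⟩ h
    simpa [sg] using h
  have tr : ∀ (f : ZMod p × ZMod p → ℝ) (E : Finset (ZMod p × ZMod p)),
      ∑ w ∈ E.image sg, f w = ∑ w ∈ E, f (-w.1, w.2) := fun f E => by
    rw [Finset.sum_image (fun a _ b _ hab => hsg hab)]
  have h1 := region_pos m hm δ hA hB hbox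
  have h2 := region_pos (fun w => m (-w.1, w.2)) (fun w => hm _) δ
    (fun E => by
      have := hA' (E.image sg)
      rw [tr, tr] at this
      convert this using 5
      ring)
    (fun E => by
      have := hB' (E.image sg)
      rw [tr, tr] at this
      convert this using 5
      ring)
    (by
      refine le_trans (le_of_eq ?_) hbox
      rw [← tr]
      congr 1
      ext w
      simp only [Finset.mem_image, Finset.mem_filter, Finset.mem_univ, true_and]
      constructor
      · rintro ⟨v, hv, rfl⟩
        simpa [sg, hBn] using hv
      · intro hw
        exact ⟨(-w.1, w.2), by rwa [hBn], by simp [sg]⟩)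
  rw [← tr] at h2
  have h3 : ∑ w with w ≠ 0, m w ≤
      ∑ w with Bx w ∧ w ≠ 0 ∧ 0 ≤ w.1.valMinAbs * w.2.valMinAbs, m w +
      (∑ w ∈ (Finset.univ.filter fun w : ZMod p × ZMod p =>
        Bx w ∧ w ≠ 0 ∧ 0 ≤ w.1.valMinAbs * w.2.valMinAbs).image sg, m w +
       ∑ w with ¬ Bx w, m w) := by
    have un : ∀ E F : Finset (ZMod p × ZMod p),
        ∑ w ∈ E ∪ F, m w ≤ ∑ w ∈ E, m w + ∑ w ∈ F, m w := by
      intro E F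
      rw [← Finset.sum_union_inter]
      have := Finset.sum_nonneg (s := E ∩ F) (fun w _ => hm w)
      linarith
    refine le_trans ?_ (le_trans (un _ _) (add_le_add_right (un _ _) _))
    refine Finset.sum_le_sum_of_subset_of_nonneg ?_ fun w _ _ => hm w
    intro w hw
    have hw := (Finset.mem_filter.1 hw).2
    by_cases hb : Bx w
    · rcases le_total 0 (w.1.valMinAbs * w.2.valMinAbs) with h | h
      · exact Finset.mem_union_left _ (by simp [hb, hw, h])
      · refine Finset.mem_union_right _ (Finset.mem_union_left _ ?_)
        refine Finset.mem_image.2 ⟨(-w.1, w.2), ?_, by simp [sg]⟩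
        simp only [Finset.mem_filter, Finset.mem_univ, true_and, hBn, hb]
        refine ⟨fun h0 => hw ?_, ?_⟩
        · simp only [Prod.mk_eq_zero, neg_eq_zero] at h0
          exact Prod.ext h0.1 h0.2
        · rw [vma_neg hb.1]; linarith
    · exact Finset.mem_union_right _ (Finset.mem_union_right _ (by simp [hb]))
  linarith

end Region
end WC

namespace WC

/-! ### Relative property (T) -/

section Rel

variable {p : ℕ} [NeZero p]

/-- The pairing of `(ℤ/p)²` with itself through which vectors are viewed as characters. -/
def dot (w v : ZMod p × ZMod p) : ZMod p := w.1 * v.1 + w.2 * v.2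

/-- The character of `(ℤ/p)²` attached to `w`. -/
noncomputable def chi (w v : ZMod p × ZMod p) : ℂ := ZMod.stdAddChar (dot w v)

lemma norm_chi (w v : ZMod p × ZMod p) : ‖chi w v‖ = 1 := by
  simp [chi]

lemma chi_add (w v v' : ZMod p × ZMod p) : chi w (v + v') = chi w v * chi w v' := by
  simp only [chi, ← AddChar.map_add_eq_mul]
  congr 1
  simp only [dot, Prod.fst_add, Prod.snd_add]; ring

lemma conj_chi_mul (w v : ZMod p × ZMod p) : (starRingEnd ℂ) (chi w v) * chi w v = 1 := by
  rw [Complex.conj_mul', norm_chi]; simp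

lemma sum_chi (v : ZMod p × ZMod p) :
    ∑ w, chi w v = if v = 0 then ((p : ℂ) ^ 2) else 0 := by
  have h : ∀ w : ZMod p × ZMod p, chi w v =
      (ZMod.stdAddChar (w.1 * v.1) : ℂ) * ZMod.stdAddChar (w.2 * v.2) := by
    intro w
    rw [← AddChar.map_add_eq_mul]; rfl
  simp_rw [h]
  rw [Fintype.sum_prod_type]
  simp_rw [← Finset.mul_sum]
  rw [← Finset.sum_mul]
  have hp := ZMod.isPrimitive_stdAddChar p
  rw [AddChar.sum_mulShift _ hp, AddChar.sum_mulShift _ hp]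
  simp only [ZMod.card]
  by_cases h1 : v.1 = 0 <;> by_cases h2 : v.2 = 0 <;>
    simp [h1, h2, Prod.ext_iff, sq]

/-- The additive character is at distance at least `√2` from `1` at residues of absolute value at
least `p / 4`. -/
lemma stdAddChar_far (x : ZMod p) (hx : (p : ℤ) ≤ 4 * |x.valMinAbs|) :
    2 ≤ ‖(ZMod.stdAddChar x : ℂ) - 1‖ ^ 2 := by
  have hp : (0 : ℝ) < p := by exact_mod_cast NeZero.pos p
  set j : ℤ := x.valMinAbs with hj
  have hxj : x = ((j : ℤ) : ZMod p) := by rw [hj, ZMod.coe_valMinAbs]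
  have hle : 2 * |j| ≤ p := by
    have := ZMod.valMinAbs_mem_Ioc x
    rw [← hj] at this
    have h1 := this.1
    have h2 := this.2
    rcases abs_cases j with h | h <;> linarith
  have hxR : (p : ℝ) ≤ 4 * |(j : ℝ)| := by exact_mod_cast hx
  have hleR : 2 * |(j : ℝ)| ≤ p := by exact_mod_cast hle
  rw [hxj, ZMod.stdAddChar_coe]
  have e : (2 * Real.pi * Complex.I * j / p : ℂ) = ((2 * Real.pi * j / p : ℝ) : ℂ) * Complex.I := by
    push_cast; ring
  rw [e]
  set θ : ℝ := 2 * Real.pi * j / p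
  have hcos : Real.cos θ ≤ 0 := by
    rw [← Real.cos_abs]
    have hθ : |θ| = 2 * Real.pi * |(j : ℝ)| / p := by
      simp only [θ, abs_div, abs_mul, abs_two, abs_of_pos Real.pi_pos, abs_of_pos hp]
    apply Real.cos_nonpos_of_pi_div_two_le_of_le
    · rw [hθ, le_div_iff₀ hp]; nlinarith [Real.pi_pos]
    · have : |θ| ≤ Real.pi := by rw [hθ, div_le_iff₀ hp]; nlinarith [Real.pi_pos]
      linarith [Real.pi_pos]
  rw [← Complex.normSq_eq_norm_sq, Complex.normSq_apply]
  simp only [Complex.sub_re, Complex.sub_im, Complex.one_re, Complex.one_im,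
    Complex.exp_ofReal_mul_I_re, Complex.exp_ofReal_mul_I_im]
  nlinarith [Real.sin_sq_add_cos_sq θ]

variable {V : Type*} [NormedAddCommGroup V] [InnerProductSpace ℂ V]

/-- The component of `ξ` in the isotypic subspace of the character `w`, for an action `τ` of
`(ℤ/p)²`. -/
noncomputable def Pw (τ : ZMod p × ZMod p → (V ≃ₗᵢ[ℂ] V)) (w : ZMod p × ZMod p) (ξ : V) : V :=
  ((p : ℂ) ^ 2)⁻¹ • ∑ v, (starRingEnd ℂ) (chi w v) • τ v ξ

variable {τ : ZMod p × ZMod p → (V ≃ₗᵢ[ℂ] V)}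

lemma Pw_sub (w : ZMod p × ZMod p) (ξ η : V) : Pw τ w (ξ - η) = Pw τ w ξ - Pw τ w η := by
  simp only [Pw, map_sub, smul_sub, Finset.sum_sub_distrib]

lemma Pw_tau (hτ : ∀ u v ξ, τ (u + v) ξ = τ u (τ v ξ)) (w u : ZMod p × ZMod p) (ξ : V) :
    Pw τ w (τ u ξ) = chi w u • Pw τ w ξ := by
  simp only [Pw]
  rw [smul_comm]
  congr 1
  rw [Finset.smul_sum]
  rw [← Equiv.sum_comp (Equiv.addRight u) (fun v => chi w u • (starRingEnd ℂ) (chi w v) • τ v ξ)]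
  refine Finset.sum_congr rfl fun v _ => ?_
  simp only [Equiv.coe_addRight, hτ, chi_add, map_mul, smul_smul]
  congr 1
  calc _ = (starRingEnd ℂ) (chi w v) * ((starRingEnd ℂ) (chi w u) * chi w u) := by
        rw [conj_chi_mul, mul_one]
    _ = _ := by ring

lemma Pw_conj (c : V ≃ₗᵢ[ℂ] V) (f : (ZMod p × ZMod p) ≃ (ZMod p × ZMod p))
    (g : ZMod p × ZMod p → ZMod p × ZMod p)
    (hc : ∀ v ξ, c (τ v ξ) = τ (f v) (c ξ)) (hfg : ∀ w v, dot w (f v) = dot (g w) v)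
    (w : ZMod p × ZMod p) (ξ : V) : Pw τ w (c ξ) = c (Pw τ (g w) ξ) := by
  simp only [Pw, map_smul, map_sum]
  congr 1
  rw [← Equiv.sum_comp f]
  refine Finset.sum_congr rfl fun v _ => ?_
  rw [hc]
  simp only [chi, hfg]

/-- The isotypic components of a vector under the translations are orthogonal: their squared norms
add up. -/
lemma parseval (τ : ZMod p × ZMod p → (V ≃ₗᵢ[ℂ] V)) (ξ : V) :
    ∑ w, ‖Pw τ w ξ‖ ^ 2 = ‖ξ‖ ^ 2 := by
  have hp : (p : ℂ) ≠ 0 := by exact_mod_cast NeZero.ne p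
  have h0 : ∀ w, ((‖Pw τ w ξ‖ ^ 2 : ℝ) : ℂ) = ((p : ℂ) ^ 4)⁻¹ *
      ∑ v, ∑ v', chi w (v - v') * inner ℂ (τ v ξ) (τ v' ξ) := by
    intro w
    have h1 : ((‖Pw τ w ξ‖ ^ 2 : ℝ) : ℂ) = inner ℂ (Pw τ w ξ) (Pw τ w ξ) := by
      rw [inner_self_eq_norm_sq_to_K]; norm_cast
    rw [h1]
    simp only [Pw, inner_smul_left, inner_smul_right, sum_inner, inner_sum]
    simp only [Finset.mul_sum]
    rw [Finset.sum_comm]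
    refine Finset.sum_congr rfl fun v _ => ?_
    refine Finset.sum_congr rfl fun v' _ => ?_
    simp only [map_inv₀, map_pow, Complex.conj_natCast, Complex.conj_conj]
    have : chi w v = chi w (v - v') * chi w v' := by rw [← chi_add, sub_add_cancel]
    rw [this]
    calc _ = ((p : ℂ) ^ 4)⁻¹ * (chi w (v - v') * (((starRingEnd ℂ) (chi w v') * chi w v') *
          inner ℂ (τ v ξ) (τ v' ξ))) := by
            rw [show ((p : ℂ) ^ 4)⁻¹ = ((p : ℂ) ^ 2)⁻¹ * ((p : ℂ) ^ 2)⁻¹ by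
              rw [← mul_inv]; congr 1; ring]
            ring
      _ = _ := by rw [conj_chi_mul, one_mul]
  have key : ((∑ w, ‖Pw τ w ξ‖ ^ 2 : ℝ) : ℂ) = ((‖ξ‖ ^ 2 : ℝ) : ℂ) := by
    rw [Complex.ofReal_sum]
    simp_rw [h0]
    rw [← Finset.mul_sum, Finset.sum_comm]
    have h2 : ∀ v : ZMod p × ZMod p, ∑ w, ∑ v', chi w (v - v') * inner ℂ (τ v ξ) (τ v' ξ)
        = (p : ℂ) ^ 2 * ((‖ξ‖ ^ 2 : ℝ) : ℂ) := by
      intro v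
      rw [Finset.sum_comm]
      simp_rw [← Finset.sum_mul, sum_chi, sub_eq_zero]
      rw [Finset.sum_eq_single v]
      · rw [if_pos rfl, inner_self_eq_norm_sq_to_K, LinearIsometryEquiv.norm_map]; push_cast; rfl
      · intro b _ hb
        rw [if_neg (Ne.symm hb), zero_mul]
      · simp
    simp_rw [h2]
    rw [Finset.sum_const, Finset.card_univ, Fintype.card_prod, ZMod.card, nsmul_eq_mul]
    push_cast
    field_simp
  exact_mod_cast key

/-- An isometry that moves `ξ` little and permutes the isotypic subspaces changes the spectral
weight of `ξ` little. -/
lemma weight_shift (c : V ≃ₗᵢ[ℂ] V) (f : (ZMod p × ZMod p) ≃ (ZMod p × ZMod p))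
    (g : ZMod p × ZMod p → ZMod p × ZMod p)
    (hc : ∀ v ξ, c (τ v ξ) = τ (f v) (c ξ)) (hfg : ∀ w v, dot w (f v) = dot (g w) v)
    (ξ : V) (ε : ℝ) (hε : 0 < ε) (hd : ‖c ξ - ξ‖ ≤ ε * ‖ξ‖) (E : Finset (ZMod p × ZMod p)) :
    ∑ w ∈ E, ‖Pw τ w ξ‖ ^ 2 ≤ ∑ w ∈ E, ‖Pw τ (g w) ξ‖ ^ 2 + 3 * ε * ‖ξ‖ ^ 2 := by
  have h1 : ∀ w, ‖Pw τ w ξ‖ ^ 2 ≤ ‖Pw τ (g w) ξ‖ ^ 2 +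
      ((1 / (2 * ε)) * ‖Pw τ w (c ξ - ξ)‖ ^ 2 + ε * (‖Pw τ w ξ‖ ^ 2 + ‖Pw τ w (c ξ)‖ ^ 2)) := by
    intro w
    have e1 : ‖Pw τ (g w) ξ‖ = ‖Pw τ w (c ξ)‖ := by
      rw [Pw_conj c f g hc hfg, LinearIsometryEquiv.norm_map]
    rw [e1]
    have e2 : |‖Pw τ w (c ξ)‖ - ‖Pw τ w ξ‖| ≤ ‖Pw τ w (c ξ - ξ)‖ := by
      rw [Pw_sub]; exact abs_norm_sub_norm_le _ _
    set x := ‖Pw τ w ξ‖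
    set y := ‖Pw τ w (c ξ)‖
    set z := ‖Pw τ w (c ξ - ξ)‖
    have e3 : (y - x) ^ 2 ≤ z ^ 2 := sq_le_sq' (by linarith [neg_abs_le (y - x)])
      (by linarith [le_abs_self (y - x)])
    have e4 : 1 / (2 * ε) * (y - x) ^ 2 ≤ 1 / (2 * ε) * z ^ 2 := by gcongr
    have e5 : x ^ 2 - y ^ 2 ≤ 1 / (2 * ε) * (y - x) ^ 2 + (ε / 2) * (x + y) ^ 2 := by
      have : 1 / (2 * ε) * (y - x) ^ 2 + (ε / 2) * (x + y) ^ 2 - (x ^ 2 - y ^ 2)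
        = 1 / (2 * ε) * ((y - x) + ε * (x + y)) ^ 2 := by field_simp; ring
      have : 0 ≤ 1 / (2 * ε) * ((y - x) + ε * (x + y)) ^ 2 := by positivity
      linarith
    nlinarith [sq_nonneg (x - y)]
  refine le_trans (Finset.sum_le_sum fun w _ => h1 w) ?_
  rw [Finset.sum_add_distrib]
  refine add_le_add_right ?_ _
  refine le_trans (Finset.sum_le_univ_sum_of_nonneg fun w => by positivity) ?_
  rw [Finset.sum_add_distrib, ← Finset.mul_sum, ← Finset.mul_sum, Finset.sum_add_distrib,
    parseval τ, parseval τ, parseval τ, LinearIsometryEquiv.norm_map]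
  have h3 : ‖c ξ - ξ‖ ^ 2 ≤ (ε * ‖ξ‖) ^ 2 := by gcongr
  have h4 : 1 / (2 * ε) * ‖c ξ - ξ‖ ^ 2 ≤ 1 / (2 * ε) * (ε * ‖ξ‖) ^ 2 := by gcongr
  have h5 : 1 / (2 * ε) * (ε * ‖ξ‖) ^ 2 = ε / 2 * ‖ξ‖ ^ 2 := by field_simp
  nlinarith [sq_nonneg ‖ξ‖, mul_nonneg hε.le (sq_nonneg ‖ξ‖)]

/-- Relative property (T) of `(ℤ/p)² ⋊ SL₂`, with constants independent of `p`: a vector almost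
fixed by the two elementary generators of `SL₂` and by the unit translations is almost fixed by
all translations. -/
lemma relT (hτ : ∀ u v ξ, τ (u + v) ξ = τ u (τ v ξ)) (a b : V ≃ₗᵢ[ℂ] V)
    (ha : ∀ x y ξ, a (τ (x, y) ξ) = τ (x + y, y) (a ξ))
    (hb : ∀ x y ξ, b (τ (x, y) ξ) = τ (x, x + y) (b ξ))
    (ξ : V) (ε : ℝ) (hε : 0 < ε) (hε1 : ε ≤ 1)
    (da : ‖a ξ - ξ‖ ≤ ε * ‖ξ‖) (db : ‖b ξ - ξ‖ ≤ ε * ‖ξ‖)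
    (d1 : ‖τ (1, 0) ξ - ξ‖ ≤ ε * ‖ξ‖) (d2 : ‖τ (0, 1) ξ - ξ‖ ≤ ε * ‖ξ‖)
    (u : ZMod p × ZMod p) : ‖τ u ξ - ξ‖ ^ 2 ≤ 252 * ε * ‖ξ‖ ^ 2 := by
  classical
  let fA : (ZMod p × ZMod p) ≃ (ZMod p × ZMod p) :=
    ⟨fun v => (v.1 + v.2, v.2), fun v => (v.1 - v.2, v.2), fun v => by simp, fun v => by simp⟩
  let fB : (ZMod p × ZMod p) ≃ (ZMod p × ZMod p) :=
    ⟨fun v => (v.1, v.1 + v.2), fun v => (v.1, v.2 - v.1), fun v => by simp, fun v => by simp⟩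
  have inv : ∀ c : V ≃ₗᵢ[ℂ] V, ‖c ξ - ξ‖ ≤ ε * ‖ξ‖ → ‖c.symm ξ - ξ‖ ≤ ε * ‖ξ‖ := by
    intro c hc
    rw [← LinearIsometryEquiv.norm_map c, map_sub, LinearIsometryEquiv.apply_symm_apply,
      norm_sub_rev]
    exact hc
  have main : ∑ w with w ≠ 0, ‖Pw τ w ξ‖ ^ 2 ≤ 21 * (3 * ε * ‖ξ‖ ^ 2) := by
    refine region (fun w => ‖Pw τ w ξ‖ ^ 2) (fun w => by positivity) _ ?_ ?_ ?_ ?_ ?_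
    · intro E
      exact weight_shift a fA (fun w => (w.1, w.1 + w.2)) (fun v ξ => ha _ _ _)
        (fun w v => by simp only [dot, fA, Equiv.coe_fn_mk]; ring) ξ ε hε da E
    · intro E
      exact weight_shift b fB (fun w => (w.1 + w.2, w.2)) (fun v ξ => hb _ _ _)
        (fun w v => by simp only [dot, fB, Equiv.coe_fn_mk]; ring) ξ ε hε db E
    · intro E
      refine weight_shift a.symm fA.symm (fun w => (w.1, w.2 - w.1)) (fun v ξ => ?_)
        (fun w v => by simp only [dot, fA, Equiv.coe_fn_symm_mk]; ring) ξ ε hε (inv a da) E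
      rw [LinearIsometryEquiv.symm_apply_eq]
      simp only [fA, Equiv.coe_fn_symm_mk, ha, sub_add_cancel,
        LinearIsometryEquiv.apply_symm_apply]
    · intro E
      refine weight_shift b.symm fB.symm (fun w => (w.1 - w.2, w.2)) (fun v ξ => ?_)
        (fun w v => by simp only [dot, fB, Equiv.coe_fn_symm_mk]; ring) ξ ε hε (inv b db) E
      rw [LinearIsometryEquiv.symm_apply_eq]
      simp only [fB, Equiv.coe_fn_symm_mk, hb, add_sub_cancel,
        LinearIsometryEquiv.apply_symm_apply]
    · have h1 : ∀ w : ZMod p × ZMod p, ¬ Bx w → 2 * ‖Pw τ w ξ‖ ^ 2 ≤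
          ‖Pw τ w (τ (1, 0) ξ - ξ)‖ ^ 2 + ‖Pw τ w (τ (0, 1) ξ - ξ)‖ ^ 2 := by
        intro w hw
        have e : ∀ u : ZMod p × ZMod p, ‖Pw τ w (τ u ξ - ξ)‖ ^ 2 =
            ‖chi w u - 1‖ ^ 2 * ‖Pw τ w ξ‖ ^ 2 := by
          intro u
          rw [Pw_sub, Pw_tau hτ, ← mul_pow, ← norm_smul, sub_smul, one_smul]
        rw [e, e, ← add_mul]
        refine mul_le_mul_of_nonneg_right ?_ (by positivity)
        have c1 : chi w (1, 0) = ZMod.stdAddChar w.1 := by simp [chi, dot]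
        have c2 : chi w (0, 1) = ZMod.stdAddChar w.2 := by simp [chi, dot]
        rw [c1, c2]
        simp only [Bx, not_and_or, not_lt] at hw
        rcases hw with h | h
        · have := stdAddChar_far _ h
          nlinarith [sq_nonneg ‖(ZMod.stdAddChar w.2 : ℂ) - 1‖]
        · have := stdAddChar_far _ h
          nlinarith [sq_nonneg ‖(ZMod.stdAddChar w.1 : ℂ) - 1‖]
      have h2 : 2 * ∑ w with ¬ Bx w, ‖Pw τ w ξ‖ ^ 2 ≤
          ‖τ (1, 0) ξ - ξ‖ ^ 2 + ‖τ (0, 1) ξ - ξ‖ ^ 2 := by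
        rw [← parseval τ, ← parseval τ (τ (0, 1) ξ - ξ), Finset.mul_sum,
          ← Finset.sum_add_distrib]
        refine le_trans (Finset.sum_le_sum fun w hw => h1 w (Finset.mem_filter.1 hw).2) ?_
        exact Finset.sum_le_univ_sum_of_nonneg fun w => by positivity
      have h3 : ‖τ (1, 0) ξ - ξ‖ ^ 2 ≤ (ε * ‖ξ‖) ^ 2 := by gcongr
      have h4 : ‖τ (0, 1) ξ - ξ‖ ^ 2 ≤ (ε * ‖ξ‖) ^ 2 := by gcongr
      have h5 : (ε * ‖ξ‖) ^ 2 ≤ ε * ‖ξ‖ ^ 2 := by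
        rw [mul_pow]; nlinarith [sq_nonneg ‖ξ‖, mul_nonneg hε.le (sq_nonneg ‖ξ‖)]
      nlinarith [mul_nonneg hε.le (sq_nonneg ‖ξ‖)]
  rw [← parseval τ (τ u ξ - ξ)]
  have h6 : ∀ w, ‖Pw τ w (τ u ξ - ξ)‖ ^ 2 ≤ if w ≠ 0 then 4 * ‖Pw τ w ξ‖ ^ 2 else 0 := by
    intro w
    have e : ‖Pw τ w (τ u ξ - ξ)‖ ^ 2 = ‖chi w u - 1‖ ^ 2 * ‖Pw τ w ξ‖ ^ 2 := by
      rw [Pw_sub, Pw_tau hτ, ← mul_pow, ← norm_smul, sub_smul, one_smul]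
    rw [e]
    split_ifs with h
    · have : ‖chi w u - 1‖ ≤ 2 := by
        refine (norm_sub_le _ _).trans ?_
        rw [norm_chi, norm_one]; norm_num
      have : ‖chi w u - 1‖ ^ 2 ≤ 2 ^ 2 := by gcongr
      nlinarith [sq_nonneg ‖Pw τ w ξ‖]
    · have : w = 0 := not_not.1 h
      subst this
      simp [chi, dot]
  refine le_trans (Finset.sum_le_sum fun w _ => h6 w) ?_
  rw [← Finset.sum_filter, ← Finset.mul_sum]
  linarith

end Rel
end WC

namespace WC

/-! ### Bounded generation and spectral gap of `SL₃(𝔽_p)` -/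

section SL3

open Matrix

/-- The group `SL₃` over the prime field with `p` elements. -/
abbrev SLp (p : ℕ) : Type := Matrix.SpecialLinearGroup (Fin 3) (ZMod p)

variable {p : ℕ}

/-- The elementary matrix with entry `t` in place `(i, j)`; the junk value `1` is taken on the
diagonal. -/
def el (i j : Fin 3) (t : ZMod p) : SLp p :=
  if h : i = j then 1 else Matrix.SpecialLinearGroup.transvection h t

lemma el_coe {i j : Fin 3} (h : i ≠ j) (t : ZMod p) :
    (el i j t : Matrix (Fin 3) (Fin 3) (ZMod p)) = 1 + Matrix.single i j t := by
  unfold el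
  rw [dif_neg h, Matrix.SpecialLinearGroup.transvection_coe]

lemma el_mul_apply {i j : Fin 3} (h : i ≠ j) (t : ZMod p) (g : SLp p) (a b : Fin 3) :
    (el i j t * g) a b = g a b + if a = i then t * g j b else 0 := by
  rw [Matrix.SpecialLinearGroup.coe_mul, el_coe h, add_mul, one_mul, Matrix.add_apply]
  split_ifs with h1
  · subst h1; rw [Matrix.single_mul_apply_same]
  · rw [Matrix.single_mul_apply_of_ne _ _ _ _ _ h1]

lemma el_add {i j : Fin 3} (h : i ≠ j) (s t : ZMod p) : el i j (s + t) = el i j s * el i j t := by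
  apply Subtype.ext
  rw [Matrix.SpecialLinearGroup.coe_mul, el_coe h, el_coe h, el_coe h]
  simp only [add_mul, mul_add, one_mul, mul_one, Matrix.single_mul_single_of_ne _ _ _ _ h.symm,
    add_zero, Matrix.single_add]
  abel

lemma el_zero (i j : Fin 3) : el i j (0 : ZMod p) = 1 := by
  by_cases h : i = j
  · simp [el, h]
  · apply Subtype.ext
    rw [el_coe h]; simp

lemma el_neg {i j : Fin 3} (h : i ≠ j) (t : ZMod p) : el i j (-t) = (el i j t)⁻¹ := by
  rw [eq_inv_iff_mul_eq_one, ← el_add h, neg_add_cancel, el_zero]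

lemma el_pow {i j : Fin 3} (h : i ≠ j) (t : ZMod p) (n : ℕ) : (el i j t) ^ n = el i j ((n : ZMod p) * t) := by
  induction n with
  | zero => simp [el_zero]
  | succ n ih => rw [pow_succ, ih, ← el_add h]; congr 1; push_cast; ring

lemma el_inj {i j : Fin 3} (h : i ≠ j) {s t : ZMod p} (e : el i j s = el i j t) : s = t := by
  have := congrArg (fun g : SLp p => (g : Matrix (Fin 3) (Fin 3) (ZMod p)) i j) e
  simpa [el_coe h] using this

lemma el_act {i j k : Fin 3} (hij : i ≠ j) (hik : i ≠ k) (hjk : j ≠ k) (x y : ZMod p) :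
    el i j 1 * (el i k x * el j k y) = (el i k (x + y) * el j k y) * el i j 1 := by
  apply Subtype.ext
  simp only [Matrix.SpecialLinearGroup.coe_mul, el_coe hij, el_coe hik, el_coe hjk]
  simp only [add_mul, mul_add, one_mul, mul_one, Matrix.single_mul_single_same, hij, hik, hjk,
    hij.symm, hik.symm, hjk.symm, Matrix.single_mul_single_of_ne, ne_eq, not_false_eq_true, add_zero,
    Matrix.single_add, zero_add]
  abel

lemma el_comm {i j k : Fin 3} (hik : i ≠ k) (hjk : j ≠ k) (x y : ZMod p) :
    el i k x * el j k y = el j k y * el i k x := by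
  apply Subtype.ext
  simp only [Matrix.SpecialLinearGroup.coe_mul, el_coe hik, el_coe hjk]
  simp only [add_mul, mul_add, one_mul, mul_one, hik, hjk,
    hik.symm, hjk.symm, Matrix.single_mul_single_of_ne, ne_eq, not_false_eq_true, add_zero]
  abel

lemma el_commutator {i j k : Fin 3} (hij : i ≠ j) (hik : i ≠ k) (hjk : j ≠ k) :
    (el i k 1 : SLp p) = el i j 1 * el j k 1 * (el i j 1)⁻¹ * (el j k 1)⁻¹ := by
  have := el_act (p := p) hij hik hjk 0 1
  rw [el_zero, one_mul, zero_add] at this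
  rw [this]; group

/-- The cyclic permutation matrix. -/
def cyc : SLp p := ⟨!![0, 0, 1; 1, 0, 0; 0, 1, 0], by simp [Matrix.det_fin_three]⟩

lemma cyc_el {i j i' j' : Fin 3} (hi : i' = i + 1) (hj : j' = j + 1) (t : ZMod p) :
    el i' j' t = cyc * el i j t * cyc⁻¹ := by
  rw [eq_mul_inv_iff_mul_eq]
  subst hi hj
  by_cases h : i = j
  · subst h; simp [el]
  have h' : i + 1 ≠ j + 1 := fun e => h (add_right_cancel e)
  apply Subtype.ext
  rw [Matrix.SpecialLinearGroup.coe_mul, Matrix.SpecialLinearGroup.coe_mul, el_coe h, el_coe h',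
    add_mul, mul_add, one_mul, mul_one]
  congr 1
  simp only [cyc]
  ext a b
  fin_cases i <;> fin_cases j <;> fin_cases a <;> fin_cases b <;>
    simp [Matrix.mul_apply, Fin.sum_univ_three, Matrix.single]

variable [Fact p.Prime]

/-- Bounded generation of `SL₃` over a field: ten elementary matrices suffice. It is stated for an
arbitrary submultiplicative cost `Q`. -/
lemma bddgen (Q : ℕ → SLp p → Prop)
    (h1 : ∀ i j : Fin 3, i ≠ j → ∀ t, Q 1 (el i j t))
    (hm : ∀ m n g h, Q m g → Q n h → Q (m + n) (g * h))
    (hmono : ∀ m n g, m ≤ n → Q m g → Q n g) (g : SLp p) : Q 10 g := by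
  have red : ∀ (i j : Fin 3), i ≠ j → ∀ t n (g : SLp p), Q n (el i j t * g) → Q (n + 1) g := by
    intro i j h t n g hQ
    have := hm 1 n _ _ (h1 i j h (-t)) hQ
    rwa [el_neg h, inv_mul_cancel_left, add_comm] at this
  have det : ∀ g : SLp p, g 0 0 * g 1 1 * g 2 2 - g 0 0 * g 1 2 * g 2 1 - g 0 1 * g 1 0 * g 2 2
      + g 0 1 * g 1 2 * g 2 0 + g 0 2 * g 1 0 * g 2 1 - g 0 2 * g 1 1 * g 2 0 = 1 := by
    intro g
    have := g.det_coe
    rw [Matrix.det_fin_three] at this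
    exact this
  have L1 : ∀ g : SLp p, g 0 0 = 1 → g 1 0 = 0 → g 2 0 = 0 → g 1 1 = 1 → g 2 1 = 0 → g 1 2 = 0 →
      g 2 2 = 1 → Q 2 g := by
    intro g a1 a2 a3 a4 a5 a6 a7
    have : g = el 0 1 (g 0 1) * el 0 2 (g 0 2) := by
      have e : el 0 1 (g 0 1) * el 0 2 (g 0 2) = el 0 1 (g 0 1) * (el 0 2 (g 0 2) * 1) := by
        rw [mul_one]
      rw [e]
      ext a b
      rw [el_mul_apply (by decide), el_mul_apply (by decide), el_mul_apply (by decide)]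
      fin_cases a <;> fin_cases b <;> simp [a1, a2, a3, a4, a5, a6, a7]
    rw [this]
    exact hm 1 1 _ _ (h1 _ _ (by decide) _) (h1 _ _ (by decide) _)
  have L2 : ∀ g : SLp p, g 0 0 = 1 → g 1 0 = 0 → g 2 0 = 0 → g 1 1 = 1 → g 2 1 = 0 → Q 3 g := by
    intro g a1 a2 a3 a4 a5
    have a6 : g 2 2 = 1 := by have := det g; simpa [a1, a2, a3, a4, a5] using this
    refine red 1 2 (by decide) (- g 1 2) 2 g (L1 _ ?_ ?_ ?_ ?_ ?_ ?_ ?_) <;>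
      rw [el_mul_apply (by decide)] <;> simp [a1, a2, a3, a4, a5, a6]
  have L3 : ∀ g : SLp p, g 0 0 = 1 → g 1 0 = 0 → g 2 0 = 0 → g 1 1 = 1 → Q 4 g := by
    intro g a1 a2 a3 a4
    refine red 2 1 (by decide) (- g 2 1) 3 g (L2 _ ?_ ?_ ?_ ?_ ?_) <;>
      rw [el_mul_apply (by decide)] <;> simp [a1, a2, a3, a4]
  have L4 : ∀ g : SLp p, g 0 0 = 1 → g 1 0 = 0 → g 2 0 = 0 → g 2 1 ≠ 0 → Q 5 g := by
    intro g a1 a2 a3 a4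
    refine red 1 2 (by decide) ((1 - g 1 1) / g 2 1) 4 g (L3 _ ?_ ?_ ?_ ?_) <;>
      rw [el_mul_apply (by decide)] <;> simp [a1, a2, a3, a4]
  have L5 : ∀ g : SLp p, g 0 0 = 1 → g 1 0 = 0 → g 2 0 = 0 → Q 6 g := by
    intro g a1 a2 a3
    by_cases a4 : g 2 1 = 0
    · have a5 : g 1 1 ≠ 0 := by
        intro h; have := det g; simp [a1, a2, a3, a4, h] at this
      refine red 2 1 (by decide) 1 5 g (L4 _ ?_ ?_ ?_ ?_) <;>
        rw [el_mul_apply (by decide)] <;> simp [a1, a2, a3, a4, a5]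
    · exact hmono 5 6 g (by norm_num) (L4 g a1 a2 a3 a4)
  have L6 : ∀ g : SLp p, g 0 0 = 1 → Q 8 g := by
    intro g a1
    refine red 1 0 (by decide) (- g 1 0) 7 g (red 2 0 (by decide) (- g 2 0) 6 _ (L5 _ ?_ ?_ ?_)) <;>
      rw [el_mul_apply (by decide), el_mul_apply (by decide)] <;>
      simp [a1, el_mul_apply (show (1 : Fin 3) ≠ 0 by decide)]
  have L7 : ∀ g : SLp p, g 1 0 ≠ 0 → Q 9 g := by
    intro g a1
    refine red 0 1 (by decide) ((1 - g 0 0) / g 1 0) 8 g (L6 _ ?_)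
    rw [el_mul_apply (by decide)]; simp [a1]
  have L7' : ∀ g : SLp p, g 2 0 ≠ 0 → Q 9 g := by
    intro g a1
    refine red 0 2 (by decide) ((1 - g 0 0) / g 2 0) 8 g (L6 _ ?_)
    rw [el_mul_apply (by decide)]; simp [a1]
  by_cases a1 : g 1 0 = 0
  · by_cases a2 : g 2 0 = 0
    · have a3 : g 0 0 ≠ 0 := by
        intro h; have := det g; simp [a1, a2, h] at this
      refine red 1 0 (by decide) 1 9 g (L7 _ ?_)
      rw [el_mul_apply (by decide)]; simp [a1, a3]
    · exact hmono 9 10 g (by norm_num) (L7' g a2)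
  · exact hmono 9 10 g (by norm_num) (L7 g a1)

variable {V : Type*} [NormedAddCommGroup V] [InnerProductSpace ℂ V]

lemma lie_mul (a b : V ≃ₗᵢ[ℂ] V) (ξ : V) : (a * b) ξ = a (b ξ) := rfl

/-- Spectral gap for `SL₃(𝔽_p)` with respect to one elementary matrix and the cyclic permutation,
uniform in `p`: the relative property (T) of the six root subgroups combined with bounded
generation. -/
lemma gapA (U : SLp p →* (V ≃ₗᵢ[ℂ] V)) (ξ : V)
    (dx : ‖U (el 0 1 1) ξ - ξ‖ ≤ (1 / 416000) * ‖ξ‖) (dw : ‖U cyc ξ - ξ‖ ≤ (1 / 416000) * ‖ξ‖)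
    (h0 : ∑ g, U g ξ = 0) : ξ = 0 := by
  have dm : ∀ (g h : SLp p) (s t : ℝ), ‖U g ξ - ξ‖ ≤ s * ‖ξ‖ → ‖U h ξ - ξ‖ ≤ t * ‖ξ‖ →
      ‖U (g * h) ξ - ξ‖ ≤ (s + t) * ‖ξ‖ := by
    intro g h s t hg hh
    have e : U (g * h) ξ - ξ = U g (U h ξ - ξ) + (U g ξ - ξ) := by
      rw [map_mul, map_sub]; simp [lie_mul]
    rw [e]
    refine (norm_add_le _ _).trans ?_
    rw [LinearIsometryEquiv.norm_map]; linarith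
  have di : ∀ (g : SLp p) (s : ℝ), ‖U g ξ - ξ‖ ≤ s * ‖ξ‖ → ‖U g⁻¹ ξ - ξ‖ ≤ s * ‖ξ‖ := by
    intro g s hg
    have e : U g (U g⁻¹ ξ - ξ) = - (U g ξ - ξ) := by
      rw [map_sub, ← lie_mul, ← map_mul]; simp
    rw [← LinearIsometryEquiv.norm_map (U g), e, norm_neg]; exact hg
  -- words of length at most `16` in the two generators reach all `el i j 1`, which costs `16 e0`;
  -- relative property (T) turns this into `√(252 · 16 e0) ≤ 99/1000` for all `el i j t`, and ten
  -- elementary matrices then displace `ξ` by at most `99/100` of its norm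
  set e0 : ℝ := 1 / 416000 with he0
  have mono : ∀ (g : SLp p) (s t : ℝ), s ≤ t → ‖U g ξ - ξ‖ ≤ s * ‖ξ‖ → ‖U g ξ - ξ‖ ≤ t * ‖ξ‖ :=
    fun g s t hst h => h.trans (mul_le_mul_of_nonneg_right hst (norm_nonneg _))
  have d12 : ‖U (el 1 2 1) ξ - ξ‖ ≤ (3 * e0) * ‖ξ‖ := by
    rw [cyc_el (i := 0) (j := 1) (i' := 1) (j' := 2) rfl rfl]
    exact mono _ _ _ (by linarith) (dm _ _ _ _ (dm _ _ _ _ dw dx) (di _ _ dw))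
  have d20 : ‖U (el 2 0 1) ξ - ξ‖ ≤ (5 * e0) * ‖ξ‖ := by
    rw [cyc_el (i := 1) (j := 2) (i' := 2) (j' := 0) rfl rfl]
    exact mono _ _ _ (by linarith) (dm _ _ _ _ (dm _ _ _ _ dw d12) (di _ _ dw))
  have e0pos : 0 < e0 := by norm_num [he0]
  have dcom : ∀ (g h : SLp p) (s t : ℝ), ‖U g ξ - ξ‖ ≤ s * ‖ξ‖ → ‖U h ξ - ξ‖ ≤ t * ‖ξ‖ →
      ‖U (g * h * g⁻¹ * h⁻¹) ξ - ξ‖ ≤ (s + t + s + t) * ‖ξ‖ := fun g h s t hg hh =>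
    dm _ _ _ _ (dm _ _ _ _ (dm _ _ _ _ hg hh) (di _ _ hg)) (di _ _ hh)
  have d02 : ‖U (el 0 2 1) ξ - ξ‖ ≤ (16 * e0) * ‖ξ‖ := by
    rw [el_commutator (j := 1) (by decide) (by decide) (by decide)]
    exact mono _ _ _ (by linarith) (dcom _ _ _ _ dx d12)
  have d10 : ‖U (el 1 0 1) ξ - ξ‖ ≤ (16 * e0) * ‖ξ‖ := by
    rw [el_commutator (j := 2) (by decide) (by decide) (by decide)]
    exact mono _ _ _ (by linarith) (dcom _ _ _ _ d12 d20)
  have d21 : ‖U (el 2 1 1) ξ - ξ‖ ≤ (16 * e0) * ‖ξ‖ := by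
    rw [el_commutator (j := 0) (by decide) (by decide) (by decide)]
    exact mono _ _ _ (by linarith) (dcom _ _ _ _ d20 dx)
  have dall : ∀ i j : Fin 3, i ≠ j → ‖U (el i j 1) ξ - ξ‖ ≤ (16 * e0) * ‖ξ‖ := by
    intro i j hij
    fin_cases i <;> fin_cases j
    · exact absurd rfl hij
    · exact mono _ _ _ (by linarith) dx
    · exact d02
    · exact d10
    · exact absurd rfl hij
    · exact mono _ _ _ (by linarith) d12
    · exact mono _ _ _ (by linarith) d20
    · exact d21
    · exact absurd rfl hij
  have hrel : ∀ i j k : Fin 3, i ≠ j → i ≠ k → j ≠ k → ∀ t : ZMod p,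
      ‖U (el i k t) ξ - ξ‖ ^ 2 ≤ 252 * (16 * e0) * ‖ξ‖ ^ 2 := by
    intro i j k hij hik hjk t
    have act : ∀ (g h k l : SLp p), g * h = k * l → ∀ ξ, U g (U h ξ) = U k (U l ξ) := by
      intro g h k l e ξ
      rw [← lie_mul, ← map_mul, e, map_mul, lie_mul]
    have := relT (τ := fun u => U (el i k u.1 * el j k u.2)) ?_ (U (el i j 1)) (U (el j i 1)) ?_ ?_
      ξ (16 * e0) (by positivity) (by norm_num [he0]) (dall i j hij) (dall j i hij.symm)
      (by simpa [el_zero] using dall i k hik) (by simpa [el_zero] using dall j k hjk) (t, 0)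
    · simpa [el_zero] using this
    · intro u v ξ
      rw [← lie_mul, ← map_mul]
      congr 2
      simp only [Prod.fst_add, Prod.snd_add, el_add hik, el_add hjk]
      rw [mul_assoc, mul_assoc, ← mul_assoc (el i k v.1), el_comm hik hjk v.1 u.2]
      simp only [mul_assoc]
    · intro x y ξ
      exact act _ _ _ _ (el_act hij hik hjk x y) ξ
    · intro x y ξ
      refine act _ _ _ _ ?_ ξ
      simp only
      rw [el_comm hik hjk, el_act hij.symm hjk hik, el_comm hik hjk, add_comm]
  have hel : ∀ i k : Fin 3, i ≠ k → ∀ t : ZMod p, ‖U (el i k t) ξ - ξ‖ ≤ (99 / 1000) * ‖ξ‖ := by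
    intro i k hik t
    obtain ⟨j, hij, hjk⟩ : ∃ j : Fin 3, i ≠ j ∧ j ≠ k := by
      revert i k; decide
    have := hrel i j k hij hik hjk t
    refine abs_le_of_sq_le_sq' ?_ (by positivity) |>.2
    rw [mul_pow]
    refine this.trans (mul_le_mul_of_nonneg_right ?_ (by positivity))
    norm_num [he0]
  have hg : ∀ g : SLp p, ‖U g ξ - ξ‖ ≤ (99 / 100) * ‖ξ‖ := by
    intro g
    have := bddgen (fun n g => ‖U g ξ - ξ‖ ≤ (n * (99 / 1000)) * ‖ξ‖)
      (fun i j h t => by simpa using hel i j h t)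
      (fun m n g h hg hh => by
        have := dm g h _ _ hg hh
        refine mono _ _ _ (le_of_eq ?_) this
        push_cast; ring)
      (fun m n g h hg => mono _ _ _ (by gcongr) hg) g
    refine mono _ _ _ ?_ this
    norm_num
  by_contra hξ
  have hpos : 0 < ‖ξ‖ := norm_pos_iff.2 hξ
  have hcard : (0 : ℝ) < Fintype.card (SLp p) := by exact_mod_cast Fintype.card_pos
  have e1 : ∑ g : SLp p, (U g ξ - ξ) = - ((Fintype.card (SLp p) : ℂ) • ξ) := by
    rw [Finset.sum_sub_distrib, h0, Finset.sum_const, Finset.card_univ, zero_sub]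
    simp [Nat.cast_smul_eq_nsmul]
  have e2 : ‖∑ g : SLp p, (U g ξ - ξ)‖ ≤ Fintype.card (SLp p) * ((99 / 100) * ‖ξ‖) := by
    refine (norm_sum_le _ _).trans ?_
    refine (Finset.sum_le_sum fun g _ => hg g).trans ?_
    rw [Finset.sum_const, Finset.card_univ, nsmul_eq_mul]
  rw [e1, norm_neg, norm_smul] at e2
  simp only [Complex.norm_natCast] at e2
  nlinarith [mul_pos hcard hpos]

end SL3
end WC

namespace WC

/-! ### Quasirandomness of `SL₃(𝔽_p)` -/

section Quasirandom

variable {p : ℕ}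

lemma el_comm_row {i j k : Fin 3} (hij : i ≠ j) (hik : i ≠ k) (x y : ZMod p) :
    el i j x * el i k y = el i k y * el i j x := by
  apply Subtype.ext
  simp only [Matrix.SpecialLinearGroup.coe_mul, el_coe hij, el_coe hik]
  simp only [add_mul, mul_add, one_mul, mul_one, hij, hik,
    hik.symm, hij.symm, Matrix.single_mul_single_of_ne, ne_eq, not_false_eq_true, add_zero]
  abel

variable [Fact p.Prime]

/-- A normal subgroup of `SL₃(𝔽_p)` containing a nontrivial elementary matrix is everything. -/
lemma normal_top (K : Subgroup (SLp p)) [hK : K.Normal] (h : el 0 2 1 ∈ K) (g : SLp p) : g ∈ K := by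
  have h10 : el 1 0 1 ∈ K := by
    rw [cyc_el (i := 0) (j := 2) (i' := 1) (j' := 0) rfl rfl]; exact hK.conj_mem _ h _
  have h21 : el 2 1 1 ∈ K := by
    rw [cyc_el (i := 1) (j := 0) (i' := 2) (j' := 1) rfl rfl]; exact hK.conj_mem _ h10 _
  have com : ∀ g h : SLp p, g ∈ K → h ∈ K → g * h * g⁻¹ * h⁻¹ ∈ K := fun g h hg hh =>
    K.mul_mem (K.mul_mem (K.mul_mem hg hh) (K.inv_mem hg)) (K.inv_mem hh)
  have h12 : el 1 2 1 ∈ K := by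
    rw [el_commutator (j := 0) (by decide) (by decide) (by decide)]; exact com _ _ h10 h
  have h01 : el 0 1 1 ∈ K := by
    rw [el_commutator (j := 2) (by decide) (by decide) (by decide)]; exact com _ _ h h21
  have h20 : el 2 0 1 ∈ K := by
    rw [el_commutator (j := 1) (by decide) (by decide) (by decide)]; exact com _ _ h21 h10
  have hall : ∀ i j : Fin 3, i ≠ j → el i j 1 ∈ K := by
    intro i j hij
    fin_cases i <;> fin_cases j <;> first | exact absurd rfl hij | assumption
  refine bddgen (fun _ g => g ∈ K) ?_ (fun _ _ g h hg hh => K.mul_mem hg hh)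
    (fun _ _ _ _ h => h) g
  intro i j hij t
  have := K.pow_mem (hall i j hij) t.val
  rw [el_pow hij] at this
  simpa using this

/-- Quasirandomness of `SL₃(𝔽_p)`: a complex representation without invariant vectors has
dimension at least `p`. The centre of a Heisenberg subgroup acts by a nontrivial character `ζ` on
some nonzero subspace, and taking determinants in `XY = ζYX` shows that its dimension is a multiple
of `p`. -/
lemma quasirandom {E : Type*} [AddCommGroup E] [Module ℂ E] [FiniteDimensional ℂ E]
    (σ : SLp p →* (E →ₗ[ℂ] E)) [Nontrivial E] (hinv : ∀ v, (∀ g, σ g v = v) → v = 0) :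
    p ≤ Module.finrank ℂ E := by
  have hp : p.Prime := Fact.out
  have mulap : ∀ g h v, σ (g * h) v = σ g (σ h v) := fun g h v => by rw [map_mul]; rfl
  let Ez : ZMod p → Submodule ℂ E := fun j =>
    ⨅ k : ZMod p, LinearMap.ker (σ (el 0 2 k) - (ZMod.stdAddChar (j * k) : ℂ) • LinearMap.id)
  have memE : ∀ j v, v ∈ Ez j ↔ ∀ k, σ (el 0 2 k) v = (ZMod.stdAddChar (j * k) : ℂ) • v := by
    intro j v
    simp only [Ez, Submodule.mem_iInf, LinearMap.mem_ker, LinearMap.sub_apply,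
      LinearMap.smul_apply, LinearMap.id_apply, sub_eq_zero]
  obtain ⟨j, hj, v, hv, hv0⟩ : ∃ j : ZMod p, j ≠ 0 ∧ ∃ v ∈ Ez j, v ≠ 0 := by
    by_contra! hcon
    have hZ : ∀ v, σ (el 0 2 1) v = v := by
      intro v
      let pr : ZMod p → E := fun j => ∑ k, (ZMod.stdAddChar (- (j * k)) : ℂ) • σ (el 0 2 k) v
      have hpr : ∀ j, pr j ∈ Ez j := by
        intro j
        rw [memE]
        intro k
        simp only [pr, map_sum, map_smul, Finset.smul_sum, smul_smul]
        rw [← Equiv.sum_comp (Equiv.addLeft k)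
          (fun l => ((ZMod.stdAddChar (j * k) : ℂ) * ZMod.stdAddChar (- (j * l))) •
            σ (el 0 2 l) v)]
        refine Finset.sum_congr rfl fun l _ => ?_
        rw [← mulap, ← el_add (by decide), ← AddChar.map_add_eq_mul]
        simp only [Equiv.coe_addLeft]
        congr 3; ring
      have h0 : ∀ j, j ≠ 0 → pr j = 0 := fun j hj => hcon j hj _ (hpr j)
      have hs : ∑ j, pr j = (p : ℂ) • v := by
        simp only [pr]
        rw [Finset.sum_comm]
        simp_rw [← Finset.sum_smul]
        have : ∀ k : ZMod p, ∑ j, (ZMod.stdAddChar (- (j * k)) : ℂ) = if k = 0 then (p : ℂ) else 0 := by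
          intro k
          have := AddChar.sum_mulShift (-k) (ZMod.isPrimitive_stdAddChar p)
          simp only [ZMod.card, neg_eq_zero, mul_neg] at this
          rw [this]; split_ifs <;> simp
        simp_rw [this]
        rw [Finset.sum_eq_single 0]
        · simp [el_zero]
        · intro b _ hb; rw [if_neg hb, zero_smul]
        · simp
      rw [Finset.sum_eq_single 0 (fun b _ hb => h0 b hb) (by simp)] at hs
      have h1 := (memE 0 _).1 (hpr 0) 1
      rw [hs] at h1
      simp only [zero_mul, AddChar.map_zero_eq_one, one_smul, map_smul] at h1
      have hpc : (p : ℂ) ≠ 0 := by exact_mod_cast hp.ne_zero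
      exact smul_right_injective E hpc h1
    obtain ⟨v, hv⟩ := exists_ne (0 : E)
    refine hv (hinv v fun g => ?_)
    have : g ∈ σ.ker := normal_top σ.ker (by
      rw [MonoidHom.mem_ker]; ext v; exact hZ v) g
    rw [MonoidHom.mem_ker.1 this]; rfl
  -- the generators of the Heisenberg group preserve the isotypic subspace of its centre
  have pres : ∀ g : SLp p, (∀ k, el 0 2 k * g = g * el 0 2 k) → ∀ v ∈ Ez j, σ g v ∈ Ez j := by
    intro g hg v hv
    rw [memE] at hv ⊢
    intro k
    rw [← mulap, hg, mulap, hv, map_smul]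
  have cX : ∀ t k, el 0 2 k * el 0 1 t = el 0 1 t * el 0 2 k := fun t k => 
    el_comm_row (p := p) (by decide) (by decide) _ _
  have cY : ∀ t k, el 0 2 k * el 1 2 t = el 1 2 t * el 0 2 k := fun t k => 
    el_comm (p := p) (by decide) (by decide) _ _
  let X : ZMod p → (Ez j →ₗ[ℂ] Ez j) := fun t => (σ (el 0 1 t)).restrict (pres _ (cX t))
  let Y : ZMod p → (Ez j →ₗ[ℂ] Ez j) := fun t => (σ (el 1 2 t)).restrict (pres _ (cY t))
  have hX : LinearMap.det (X 1) ≠ 0 := by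
    have : X 1 ∘ₗ X (-1) = LinearMap.id := by
      ext v
      simp only [X, LinearMap.comp_apply, LinearMap.restrict_coe_apply, LinearMap.id_apply]
      rw [← mulap, ← el_add (by decide), add_neg_cancel, el_zero, map_one]; rfl
    have h2 := congrArg LinearMap.det this
    rw [LinearMap.det_comp, LinearMap.det_id] at h2
    exact left_ne_zero_of_mul_eq_one h2
  have hY : LinearMap.det (Y 1) ≠ 0 := by
    have : Y 1 ∘ₗ Y (-1) = LinearMap.id := by
      ext v
      simp only [Y, LinearMap.comp_apply, LinearMap.restrict_coe_apply, LinearMap.id_apply]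
      rw [← mulap, ← el_add (by decide), add_neg_cancel, el_zero, map_one]; rfl
    have h2 := congrArg LinearMap.det this
    rw [LinearMap.det_comp, LinearMap.det_id] at h2
    exact left_ne_zero_of_mul_eq_one h2
  have hXY : X 1 ∘ₗ Y 1 = (ZMod.stdAddChar j : ℂ) • (Y 1 ∘ₗ X 1) := by
    ext v
    have hv := (memE j _).1 v.2 1
    simp only [X, Y, LinearMap.comp_apply, LinearMap.restrict_coe_apply, LinearMap.smul_apply,
      Submodule.coe_smul]
    have := el_act (p := p) (i := 0) (j := 1) (k := 2) (by decide) (by decide) (by decide) 0 1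
    rw [el_zero, one_mul, zero_add] at this
    rw [← mulap, this, mul_assoc, mulap, mulap (el 1 2 1)]
    rw [(memE j _).1 (pres _ (cY 1) _ (pres _ (cX 1) _ v.2)) 1, mul_one]
  have hdet := congrArg LinearMap.det hXY
  rw [LinearMap.det_smul, LinearMap.det_comp, LinearMap.det_comp] at hdet
  have hz : (ZMod.stdAddChar j : ℂ) ^ (Module.finrank ℂ (Ez j)) = 1 := by
    have h3 : LinearMap.det (X 1) * LinearMap.det (Y 1) ≠ 0 := mul_ne_zero hX hY
    refine mul_right_cancel₀ h3 ?_
    rw [one_mul]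
    rw [mul_comm (LinearMap.det (Y 1))] at hdet
    exact hdet.symm
  have hdvd : p ∣ Module.finrank ℂ (Ez j) := by
    rw [← AddChar.map_nsmul_eq_pow] at hz
    have h4 := ZMod.injective_stdAddChar (hz.trans (AddChar.map_zero_eq_one _).symm)
    rw [nsmul_eq_mul] at h4
    have h5 := (mul_eq_zero.1 h4).resolve_right hj
    exact (ZMod.natCast_eq_zero_iff _ _).1 h5
  have hpos : 0 < Module.finrank ℂ (Ez j) := by
    have : Nontrivial (Ez j) := ⟨⟨⟨v, hv⟩, 0, fun h => hv0 (congrArg Subtype.val h)⟩⟩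
    exact Module.finrank_pos
  exact (Nat.le_of_dvd hpos hdvd).trans (Submodule.finrank_le _)

end Quasirandom
end WC

namespace WC

/-! ### Random walk operators -/

section Walk

/-- Left translation by a group element on `ℓ²(G)`: `(LT g f)(h) = f (g⁻¹h)`. -/
noncomputable def LT (G : Type) [Group G] [Fintype G] :
    G →* (EuclideanSpace ℂ G ≃ₗᵢ[ℂ] EuclideanSpace ℂ G) where
  toFun g := LinearIsometryEquiv.piLpCongrLeft 2 ℂ ℂ (Equiv.mulLeft g)
  map_one' := by ext f h; simp [LinearIsometryEquiv.piLpCongrLeft_apply]; rfl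
  map_mul' a b := by
    ext f h
    simp [LinearIsometryEquiv.piLpCongrLeft_apply, lie_mul, mul_assoc]
    exact congrArg f (by simp [Equiv.symm_apply_eq])

variable {G : Type} [Group G] [Fintype G]

lemma LT_apply (g : G) (f : EuclideanSpace ℂ G) (h : G) : LT G g f h = f (g⁻¹ * h) := by
  simp [LT, LinearIsometryEquiv.piLpCongrLeft_apply]

variable {V : Type*} [NormedAddCommGroup V] [InnerProductSpace ℂ V]

/-- The lazy random walk operator attached to three unitaries,
`½ + (1/12) ∑ᵢ (Uᵢ + Uᵢ⁻¹)`. -/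
noncomputable def Rop (U : Fin 3 → (V ≃ₗᵢ[ℂ] V)) : V →ₗ[ℂ] V :=
  (1 / 2 : ℂ) • LinearMap.id + (1 / 12 : ℂ) • ∑ i, 
    ((U i).toLinearEquiv.toLinearMap + (U i).symm.toLinearEquiv.toLinearMap)

lemma Rop_apply (U : Fin 3 → (V ≃ₗᵢ[ℂ] V)) (ξ : V) :
    Rop U ξ = (1 / 2 : ℂ) • ξ + (1 / 12 : ℂ) • ∑ i, (U i ξ + (U i).symm ξ) := by
  simp [Rop, LinearMap.sum_apply]

lemma inner_symm_lie (U : V ≃ₗᵢ[ℂ] V) (x y : V) : inner ℂ (U.symm x) y = inner ℂ x (U y) := by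
  rw [← U.inner_map_map (U.symm x) y, U.apply_symm_apply]

lemma Rop_symm (U : Fin 3 → (V ≃ₗᵢ[ℂ] V)) : (Rop U).IsSymmetric := by
  intro x y
  rw [Rop_apply, Rop_apply]
  simp only [inner_add_left, inner_add_right, inner_smul_left, inner_smul_right, sum_inner,
    inner_sum]
  congr 1
  · rw [map_div₀, map_one, RCLike.conj_ofNat]
  · congr 1
    · rw [map_div₀, map_one, RCLike.conj_ofNat]
    · refine Finset.sum_congr rfl fun i _ => ?_
      rw [inner_symm_lie, add_comm]
      congr 1
      have := inner_symm_lie (U i).symm x y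
      simpa using this

/-- The quadratic form of `1 - R` is the Dirichlet energy. -/
lemma Rop_energy (U : Fin 3 → (V ≃ₗᵢ[ℂ] V)) (ξ : V) :
    ‖ξ‖ ^ 2 - RCLike.re (inner ℂ (Rop U ξ) ξ) = (1 / 12) * ∑ i, ‖U i ξ - ξ‖ ^ 2 := by
  have h1 : ∀ i, ‖U i ξ - ξ‖ ^ 2 = 2 * ‖ξ‖ ^ 2 - 2 * RCLike.re (inner ℂ (U i ξ) ξ) := by
    intro i
    rw [@norm_sub_sq ℂ, LinearIsometryEquiv.norm_map]; ring
  have h2 : ∀ i, (inner ℂ ((U i).symm ξ) ξ) = starRingEnd ℂ (inner ℂ (U i ξ) ξ) := by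
    intro i
    rw [inner_symm_lie, inner_conj_symm]
  have h3 : inner ℂ (Rop U ξ) ξ = (1 / 2 : ℂ) * (inner ℂ ξ ξ) + (1 / 12 : ℂ) * ∑ i, 
      (inner ℂ (U i ξ) ξ + starRingEnd ℂ (inner ℂ (U i ξ) ξ)) := by
    rw [Rop_apply]
    simp only [inner_add_left, inner_smul_left, sum_inner, h2, map_div₀, map_one, RCLike.conj_ofNat]
  have h4 : RCLike.re (inner ℂ (Rop U ξ) ξ) = 1 / 2 * ‖ξ‖ ^ 2 + (1 / 12) * ∑ i, 
      (2 * RCLike.re (inner ℂ (U i ξ) ξ)) := by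
    rw [h3, inner_self_eq_norm_sq_to_K]
    simp only [Complex.add_conj]
    have : (1 / 2 : ℂ) * ((‖ξ‖ : ℝ) : ℂ) ^ 2 + (1 / 12 : ℂ) * ∑ i, ((2 * (inner ℂ (U i ξ) ξ).re : ℝ) : ℂ)
      = ((1 / 2 * ‖ξ‖ ^ 2 + (1 / 12) * ∑ i, 2 * (inner ℂ (U i ξ) ξ).re : ℝ) : ℂ) := by
      push_cast; ring
    erw [this]
    exact Complex.ofReal_re _
  rw [h4]
  simp only [h1, Fin.sum_univ_three]
  ring

/-- Uniform convexity of the Hilbert norm: a displacement of `ε ‖ξ‖` shortens the sum of `ξ` and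
its image. -/
lemma norm_add_le_of_disp (U : V ≃ₗᵢ[ℂ] V) (ξ : V) (ε : ℝ) (h0 : 0 ≤ ε) (h2 : ε ≤ 2)
    (h : ε * ‖ξ‖ ≤ ‖U ξ - ξ‖) : ‖ξ + U ξ‖ ≤ (2 - ε ^ 2 / 4) * ‖ξ‖ := by
  have h1 := parallelogram_law_with_norm ℂ ξ (U ξ)
  rw [LinearIsometryEquiv.norm_map, norm_sub_rev] at h1
  have h3 : (ε * ‖ξ‖) ^ 2 ≤ ‖U ξ - ξ‖ ^ 2 := by gcongr
  refine abs_le_of_sq_le_sq' ?_ ?_ |>.2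
  · nlinarith [sq_nonneg (ε ^ 2 * ‖ξ‖)]
  · have : ε ^ 2 ≤ 4 := by nlinarith
    have := norm_nonneg ξ
    apply mul_nonneg <;> linarith

/-- The lazy walk operator contracts a vector that is displaced by one of the generators. -/
lemma norm_Rop_le (U : Fin 3 → (V ≃ₗᵢ[ℂ] V)) (ξ : V) (ε : ℝ) (h0 : 0 ≤ ε) (h2 : ε ≤ 2)
    (i₀ : Fin 3) (h : ε * ‖ξ‖ ≤ ‖U i₀ ξ - ξ‖) : ‖Rop U ξ‖ ≤ (1 - ε ^ 2 / 48) * ‖ξ‖ := by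
  have e : Rop U ξ = (1 / 12 : ℂ) • ∑ i, ((ξ + U i ξ) + (ξ + (U i).symm ξ)) := by
    rw [Rop_apply]
    simp only [Fin.sum_univ_three]
    module
  rw [e, norm_smul]
  have hb : ∀ i, ‖(ξ + U i ξ) + (ξ + (U i).symm ξ)‖ ≤
      (if i = i₀ then (4 - ε ^ 2 / 4) * ‖ξ‖ else 4 * ‖ξ‖) := by
    intro i
    have h3 : ‖ξ + (U i).symm ξ‖ ≤ 2 * ‖ξ‖ := by
      refine (norm_add_le _ _).trans ?_
      rw [LinearIsometryEquiv.norm_map]; linarith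
    split_ifs with hi
    · subst hi
      have := norm_add_le_of_disp _ _ _ h0 h2 h
      refine (norm_add_le _ _).trans ?_
      linarith
    · refine (norm_add_le _ _).trans ?_
      have h3 : ‖ξ + (U i) ξ‖ ≤ 2 * ‖ξ‖ := by
        refine (norm_add_le _ _).trans ?_
        rw [LinearIsometryEquiv.norm_map]; linarith
      linarith
  have h5 := (norm_sum_le Finset.univ fun i => (ξ + U i ξ) + (ξ + (U i).symm ξ)).trans
    (Finset.sum_le_sum fun i _ => hb i)
  have h6 : (∑ i : Fin 3, (if i = i₀ then (4 - ε ^ 2 / 4) * ‖ξ‖ else 4 * ‖ξ‖)) =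
      (12 - ε ^ 2 / 4) * ‖ξ‖ := by
    fin_cases i₀ <;> simp [Fin.sum_univ_three] <;> ring
  rw [h6] at h5
  have : ‖(1 / 12 : ℂ)‖ = 1 / 12 := by simp
  rw [this]
  linarith

/-- Distribution of the lazy walk on a group, driven by three elements. -/
noncomputable def wk {G : Type} [Group G] (s : Fin 3 → G) : ℕ → G → ℝ
  | 0, g => by classical exact if g = 1 then 1 else 0
  | k + 1, g => 1 / 2 * wk s k g + 1 / 12 * ∑ i, (wk s k ((s i)⁻¹ * g) + wk s k (s i * g))

lemma wk_nonneg {G : Type} [Group G] (s : Fin 3 → G) (k : ℕ) (g : G) : 0 ≤ wk s k g := by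
  induction k generalizing g with
  | zero => simp only [wk]; split_ifs <;> norm_num
  | succ k ih =>
    simp only [wk]
    have := Finset.sum_nonneg (s := Finset.univ) fun (i : Fin 3) _ =>
      add_nonneg (ih ((s i)⁻¹ * g)) (ih (s i * g))
    have := ih g
    positivity

/-- Projecting to a factor can only increase return probabilities. -/
lemma wk_prod_le {A B : Type} [Group A] [Group B] (a : Fin 3 → A) (b : Fin 3 → B) (k : ℕ) (g : A × B) :
    wk (fun i => (a i, b i)) k g ≤ wk a k g.1 := by
  induction k generalizing g with
  | zero =>
    simp only [wk]
    split_ifs with h1 h2 h2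
    · exact le_rfl
    · exact absurd (by rw [h1]; rfl) h2
    · norm_num
    · norm_num
  | succ k ih =>
    simp only [wk]
    gcongr with i
    · exact ih g
    · exact ih _
    · exact ih _

lemma Rop_pow_single [DecidableEq G] (s : Fin 3 → G) (k : ℕ) (g h : G) :
    ((Rop fun i => LT G (s i)) ^ k) (EuclideanSpace.single g (1 : ℂ)) h = (wk s k (h * g⁻¹) : ℝ) := by
  induction k generalizing h with
  | zero =>
    simp only [pow_zero, wk, Module.End.one_apply, EuclideanSpace.single_apply, mul_inv_eq_one]
    split_ifs <;> simp
  | succ k ih =>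
    rw [pow_succ', Module.End.mul_apply, Rop_apply]
    have hs : ∀ i, (LT G (s i)).symm = LT G (s i)⁻¹ := fun i => by rw [map_inv]; rfl
    simp only [hs]
    simp only [PiLp.add_apply, PiLp.smul_apply, WithLp.ofLp_sum, Finset.sum_apply, LT_apply, ih, wk,
      inv_inv, smul_eq_mul]
    push_cast
    simp only [mul_assoc]

end Walk
end WC

namespace WC

/-! ### The trace argument -/

section Trace

variable {p : ℕ} [Fact p.Prime]

/-- The contraction rate of the walk on `SL₃(𝔽_p)`. -/
noncomputable def rate : ℝ := 1 - (1 / 416000 : ℝ) ^ 2 / 48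

lemma rate_pos : 0 < rate := by unfold rate; norm_num
lemma rate_lt : rate < 1 := by unfold rate; norm_num

/-- On functions of mean zero on `SL₃(𝔽_p)` the walk operator contracts by `rate`, uniformly in
`p`: by the spectral gap some generator displaces the function. -/
lemma Rop_rate (a : Fin 3 → SLp p) (h0 : a 0 = el 0 1 1) (h1 : a 1 = cyc)
    (ξ : EuclideanSpace ℂ (SLp p)) (hξ : ∑ g, ξ g = 0) :
    ‖Rop (fun i => LT _ (a i)) ξ‖ ≤ rate * ‖ξ‖ := by
  by_cases hz : ξ = 0
  · simp [hz]
  have hsum : ∑ g, LT (SLp p) g ξ = 0 := by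
    ext h
    simp only [WithLp.ofLp_sum, Finset.sum_apply, LT_apply]
    refine Eq.trans ?_ hξ
    exact Fintype.sum_equiv ((Equiv.inv _).trans (Equiv.mulRight h)) _ _ fun g => rfl
  by_contra hc
  have key : ∀ i, ‖LT _ (a i) ξ - ξ‖ ≤ 1 / 416000 * ‖ξ‖ := by
    intro i
    by_contra hh
    exact hc (norm_Rop_le (fun i => LT _ (a i)) ξ (1 / 416000) (by norm_num) (by norm_num) i
      (le_of_not_ge hh))
  exact hz (gapA (LT (SLp p)) ξ (h0 ▸ key 0) (h1 ▸ key 1) hsum)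

lemma Rop_sum {G : Type} [Group G] [Fintype G] (s : Fin 3 → G) (ξ : EuclideanSpace ℂ G) :
    ∑ g, Rop (fun i => LT G (s i)) ξ g = ∑ g, ξ g := by
  have hs : ∀ i, (LT G (s i)).symm = LT G (s i)⁻¹ := fun i => by rw [map_inv]; rfl
  have h1 : ∀ g : G, ∑ h, ξ (g * h) = ∑ h, ξ h := fun g => Equiv.sum_comp (Equiv.mulLeft g) ξ
  simp only [Rop_apply, hs, PiLp.add_apply, PiLp.smul_apply, WithLp.ofLp_sum, Finset.sum_apply,
    LT_apply, inv_inv, smul_eq_mul]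
  rw [Finset.sum_add_distrib, ← Finset.mul_sum, ← Finset.mul_sum, Finset.sum_comm]
  simp only [Finset.sum_add_distrib, h1]
  simp
  ring

/-- The return probability of the walk on `SL₃(𝔽_p)` is close to `1 / |SL₃(𝔽_p)|` after a time
logarithmic in `p`. -/
lemma ret_le (a : Fin 3 → SLp p) (h0 : a 0 = el 0 1 1) (h1 : a 1 = cyc) (k : ℕ) :
    wk a k 1 ≤ 1 / Fintype.card (SLp p) + 2 * rate ^ k := by
  classical
  set n : ℝ := (Fintype.card (SLp p) : ℝ) with hn
  have hn1 : 1 ≤ n := by rw [hn]; exact_mod_cast Fintype.card_pos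
  set R := Rop (fun i => LT _ (a i)) with hR
  let c : EuclideanSpace ℂ (SLp p) := WithLp.toLp 2 fun _ => ((1 / n : ℝ) : ℂ)
  have hc : R c = c := by
    ext g
    have hs : ∀ i, (LT _ (a i)).symm = LT _ (a i)⁻¹ := fun i => by rw [map_inv]; rfl
    simp only [hR, Rop_apply, hs, PiLp.add_apply, PiLp.smul_apply, WithLp.ofLp_sum, Finset.sum_apply,
      LT_apply, inv_inv, smul_eq_mul, c, Fin.sum_univ_three]
    ring
  have hck : ∀ k, (R ^ k) c = c := by
    intro k
    induction k with
    | zero => rfl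
    | succ k ih => rw [pow_succ, Module.End.mul_apply, hc, ih]
  set δ : EuclideanSpace ℂ (SLp p) := EuclideanSpace.single 1 (1 : ℂ) with hδ
  have hd : ∑ g, (δ - c) g = 0 := by
    simp only [PiLp.sub_apply, Finset.sum_sub_distrib, c, hδ, EuclideanSpace.single_apply]
    simp
    rw [← Complex.ofReal_natCast, ← hn]
    exact_mod_cast (by field_simp; ring)
  have hdk : ∀ k, ∑ g, (R ^ k) (δ - c) g = 0 ∧ ‖(R ^ k) (δ - c)‖ ≤ rate ^ k * ‖δ - c‖ := by
    intro k
    induction k with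
    | zero => exact ⟨by simpa using hd, by simp⟩
    | succ k ih =>
      rw [pow_succ', Module.End.mul_apply]
      refine ⟨by rw [hR, Rop_sum, ← hR]; exact ih.1, ?_⟩
      refine (Rop_rate a h0 h1 _ ih.1).trans ?_
      rw [pow_succ', mul_assoc]
      exact mul_le_mul_of_nonneg_left ih.2 rate_pos.le
  have hcn : ‖c‖ ≤ 1 := by
    rw [EuclideanSpace.norm_eq]
    refine Real.sqrt_le_one.2 ?_
    simp only [c, Complex.norm_real, Finset.sum_const, Finset.card_univ, nsmul_eq_mul, ← hn]
    rw [Real.norm_of_nonneg (by positivity)]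
    rw [div_pow, one_pow, mul_one_div, div_le_one (by positivity)]
    nlinarith
  have hδn : ‖δ‖ = 1 := by simp [hδ]
  have h2 : ‖δ - c‖ ≤ 2 := (norm_sub_le _ _).trans (by linarith)
  have e := Rop_pow_single a k 1 1
  rw [← hR, ← hδ, inv_one, mul_one] at e
  have e2 : (R ^ k) δ = c + (R ^ k) (δ - c) := by rw [map_sub, hck]; abel
  have e3 : (wk a k 1 : ℂ) = ((1 / n : ℝ) : ℂ) + (R ^ k) (δ - c) 1 := by
    rw [← e, e2]; rfl
  have e4 : wk a k 1 = 1 / n + ((R ^ k) (δ - c) 1).re := by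
    have := congrArg Complex.re e3
    rwa [Complex.add_re, Complex.ofReal_re, Complex.ofReal_re] at this
  rw [e4]
  have h5 := (Complex.re_le_norm _).trans
    ((PiLp.norm_apply_le ((R ^ k) (δ - c)) 1).trans (hdk k).2)
  have : rate ^ k * ‖δ - c‖ ≤ rate ^ k * 2 := by
    have := rate_pos
    gcongr
  linarith

variable {B : Type} [Group B] [Fintype B]

/-- Right translation in the `SL₃(𝔽_p)`-coordinate on functions on `SL₃(𝔽_p) × B`. -/
noncomputable def RTA : SLp p →* (EuclideanSpace ℂ (SLp p × B) →ₗ[ℂ] EuclideanSpace ℂ (SLp p × B)) where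
  toFun a :=
    { toFun := fun f => WithLp.toLp 2 fun g => f (g.1 * a, g.2)
      map_add' := fun f g => rfl
      map_smul' := fun c f => rfl }
  map_one' := by ext f h; simp
  map_mul' a b := by
    ext f h
    change f (h.1 * (a * b), h.2) = f (h.1 * a * b, h.2)
    rw [mul_assoc]

lemma RTA_apply (a : SLp p) (f : EuclideanSpace ℂ (SLp p × B)) (g : SLp p × B) :
    RTA a f g = f (g.1 * a, g.2) := rfl

/-- Functions on `SL₃(𝔽_p) × B` with mean zero along each `SL₃(𝔽_p)`-coset. -/
noncomputable def H0 (p : ℕ) [Fact p.Prime] (B : Type) [Group B] [Fintype B] :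
    Submodule ℂ (EuclideanSpace ℂ (SLp p × B)) where
  carrier := {f | ∀ b, ∑ a, f (a, b) = 0}
  add_mem' := fun {f g} hf hg b => by
    simp only [PiLp.add_apply, Finset.sum_add_distrib, hf b, hg b, add_zero]
  zero_mem' := fun b => by simp
  smul_mem' := fun c f hf b => by
    simp only [PiLp.smul_apply, ← Finset.smul_sum, hf b, smul_zero]

lemma mem_H0 (f : EuclideanSpace ℂ (SLp p × B)) : f ∈ H0 p B ↔ ∀ b, ∑ a, f (a, b) = 0 := Iff.rfl

lemma Rop_RTA (s : Fin 3 → SLp p × B) (a : SLp p) (f : EuclideanSpace ℂ (SLp p × B)) :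
    Rop (fun i => LT _ (s i)) (RTA a f) = RTA a (Rop (fun i => LT _ (s i)) f) := by
  have hs : ∀ i, (LT _ (s i)).symm = LT _ (s i)⁻¹ := fun i => by rw [map_inv]; rfl
  ext g
  simp only [RTA_apply, Rop_apply, hs, PiLp.add_apply, PiLp.smul_apply, WithLp.ofLp_sum,
    Finset.sum_apply, LT_apply, Prod.fst_mul, Prod.snd_mul, mul_assoc]
  congr! 4 <;> simp [RTA_apply, LT_apply, mul_assoc, Prod.ext_iff]

lemma Rop_H0 (s : Fin 3 → SLp p × B) (f : EuclideanSpace ℂ (SLp p × B)) (hf : f ∈ H0 p B) :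
    Rop (fun i => LT _ (s i)) f ∈ H0 p B := by
  have hs : ∀ i, (LT _ (s i)).symm = LT _ (s i)⁻¹ := fun i => by rw [map_inv]; rfl
  have h1 : ∀ (g : SLp p) (b : B), ∑ h, f (g * h, b) = 0 := fun g b =>
    (Equiv.sum_comp (Equiv.mulLeft g) fun a => f (a, b)).trans (hf b)
  intro b
  simp only [Rop_apply, hs, PiLp.add_apply, PiLp.smul_apply, WithLp.ofLp_sum, Finset.sum_apply,
    LT_apply, inv_inv, smul_eq_mul]
  rw [Finset.sum_add_distrib, ← Finset.mul_sum, ← Finset.mul_sum, Finset.sum_comm]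
  have e : ∀ (g : SLp p × B) (a : SLp p), g * (a, b) = (g.1 * a, g.2 * b) := fun _ _ => rfl
  simp only [Finset.sum_add_distrib, e, Prod.fst_inv, Prod.snd_inv, h1, hf b]
  simp

/-- The trace argument: an eigenvalue on `H0` has multiplicity at least `p`, while the trace of
an even power of the walk operator is bounded by the return probability times the order of the group. -/
lemma eig_bound (s : Fin 3 → SLp p × B) (h0 : (s 0).1 = el 0 1 1) (h1 : (s 1).1 = cyc)
    (μ : ℝ) (f : EuclideanSpace ℂ (SLp p × B)) (hf : f ∈ H0 p B) (hf0 : f ≠ 0)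
    (hμ : Rop (fun i => LT _ (s i)) f = (μ : ℂ) • f) (k : ℕ) :
    p * μ ^ (2 * k) ≤ Fintype.card B * (1 + 2 * Fintype.card (SLp p) * rate ^ (2 * k)) := by
  classical
  set R := Rop (fun i => LT _ (s i)) with hR
  let E : Submodule ℂ (EuclideanSpace ℂ (SLp p × B)) := 
    H0 p B ⊓ LinearMap.ker (R - (μ : ℂ) • LinearMap.id)
  have memE : ∀ f, f ∈ E ↔ f ∈ H0 p B ∧ R f = (μ : ℂ) • f := by
    intro f
    rw [Submodule.mem_inf, LinearMap.mem_ker, LinearMap.sub_apply, sub_eq_zero]; rfl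
  have inv : ∀ a : SLp p, ∀ f ∈ E, RTA a f ∈ E := by
    intro a f hf
    rw [memE] at hf ⊢
    refine ⟨fun b => ?_, ?_⟩
    · exact (Equiv.sum_comp (Equiv.mulRight a) fun a' => f (a', b)).trans (hf.1 b)
    · rw [hR, Rop_RTA, ← hR, hf.2, map_smul]
  let σ : SLp p →* (E →ₗ[ℂ] E) :=
    { toFun := fun a => (RTA a).restrict (inv a)
      map_one' := by
        ext f : 2
        rw [LinearMap.restrict_coe_apply, map_one]; rfl
      map_mul' := fun a b => by
        ext f : 2
        rw [LinearMap.restrict_coe_apply, map_mul]; rfl }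
  have hfE : f ∈ E := (memE f).2 ⟨hf, hμ⟩
  have nt : Nontrivial E := ⟨⟨⟨f, hfE⟩, 0, fun h => hf0 (congrArg Subtype.val h)⟩⟩
  have hfin : p ≤ Module.finrank ℂ E := by
    refine quasirandom σ fun v hv => ?_
    have h2 : ∀ a : SLp p, ∀ g, v.1 (g.1 * a, g.2) = v.1 g := fun a g => by
      have := congrArg Subtype.val (hv a)
      rw [← RTA_apply]
      exact congrFun (congrArg WithLp.ofLp this) g
    apply Subtype.ext
    ext g
    have h3 := ((memE v).1 v.2).1 g.2
    have h4 : ∀ a, v.1 (a, g.2) = v.1 g := fun a => by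
      have := h2 (g.1⁻¹ * a) g
      rwa [mul_inv_cancel_left] at this
    simp only [h4, Finset.sum_const, Finset.card_univ, nsmul_eq_mul] at h3
    rcases mul_eq_zero.1 h3 with h5 | h5
    · exact absurd h5 (by exact_mod_cast Fintype.card_ne_zero)
    · exact h5
  let e := stdOrthonormalBasis ℂ E
  have symk : ∀ k, (R ^ k).IsSymmetric := fun k => (Rop_symm _).pow k
  have eigk : ∀ k j, (R ^ k) (e j : EuclideanSpace ℂ _) = ((μ ^ k : ℝ) : ℂ) • (e j).1 := by
    intro k j
    induction k with
    | zero => simp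
    | succ k ih => 
      rw [pow_succ', Module.End.mul_apply, ih, map_smul, ((memE _).1 (e j).2).2, smul_smul]
      push_cast; ring_nf
  have on : Orthonormal ℂ fun j => (e j : EuclideanSpace ℂ (SLp p × B)) :=
    e.orthonormal.comp_linearIsometry E.subtypeₗᵢ
  have bes : ∀ g : SLp p × B, ∑ j, μ ^ (2 * k) * ‖(e j).1 g‖ ^ 2 ≤ wk s (2 * k) 1 := by
    intro g
    have b1 := on.sum_inner_products_le ((R ^ k) (EuclideanSpace.single g (1 : ℂ))) (s := Finset.univ)
    have b2 : ‖(R ^ k) (EuclideanSpace.single g (1 : ℂ))‖ ^ 2 = wk s (2 * k) 1 := by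
      rw [← @inner_self_eq_norm_sq ℂ, symk k, ← Module.End.mul_apply, ← pow_add, ← two_mul,
        EuclideanSpace.inner_single_left, hR, Rop_pow_single]
      simp
    rw [b2] at b1
    refine le_trans (le_of_eq ?_) b1
    refine Finset.sum_congr rfl fun j _ => ?_
    rw [← symk k, eigk, inner_smul_left, EuclideanSpace.inner_single_right]
    simp only [norm_mul, Complex.conj_ofReal, Complex.norm_real, one_mul, RCLike.norm_conj]
    rw [mul_pow, Real.norm_eq_abs, sq_abs]; ring
  have tot := Finset.sum_le_sum fun g (_ : g ∈ Finset.univ) => bes g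
  rw [Finset.sum_comm] at tot
  have nrm : ∀ j, ∑ g, ‖(e j).1 g‖ ^ 2 = 1 := fun j => by
    rw [← EuclideanSpace.norm_sq_eq, on.1 j, one_pow]
  simp only [← Finset.mul_sum, nrm, Finset.sum_const, Finset.card_univ, nsmul_eq_mul, mul_one,
    Fintype.card_fin, Fintype.card_prod] at tot
  have hw := (wk_prod_le (fun i => (s i).1) (fun i => (s i).2) (2 * k) 1).trans
    (ret_le _ h0 h1 (2 * k))
  have hμ0 : 0 ≤ μ ^ (2 * k) := by rw [pow_mul]; positivity
  have h7 : (p : ℝ) ≤ Module.finrank ℂ E := by exact_mod_cast hfin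
  have hA : (0 : ℝ) < Fintype.card (SLp p) := by exact_mod_cast Fintype.card_pos
  calc p * μ ^ (2 * k) ≤ Module.finrank ℂ E * μ ^ (2 * k) := by gcongr
    _ ≤ _ := tot
    _ ≤ (Fintype.card (SLp p) * Fintype.card B : ℕ) * (1 / Fintype.card (SLp p) + 2 * rate ^ (2 * k)) := by
      gcongr
    _ = _ := by push_cast; field_simp

end Trace
end WC

namespace WC

/-! ### Uniform relative Poincaré inequality -/

section Poincare

lemma card_SLp (p : ℕ) [Fact p.Prime] : Fintype.card (SLp p) ≤ p ^ 9 := by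
  have h := Fintype.card_le_of_injective (fun g : SLp p => (fun i j => g i j : Fin 3 → Fin 3 → ZMod p))
    fun g h e => Subtype.ext (Matrix.ext fun i j => congrFun (congrFun e i) j)
  refine h.trans (le_of_eq ?_)
  simp [ZMod.card, ← pow_mul]

/-- Eigenvalues on `H0` are bounded away from `1`, uniformly in `p` and `B`. After a number of
steps proportional to `log p`, the trace is at most `2 |B|`, while the eigenvalue contributes at
least `p` times its power; this forces the eigenvalue down because `p ≥ 8 |B|²`. -/
lemma eig_unif : ∃ μ₀ : ℝ, μ₀ < 1 ∧ ∀ (p : ℕ) [Fact p.Prime] (B : Type) [Group B] [Fintype B],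
    8 * Fintype.card B ^ 2 ≤ p → ∀ (s : Fin 3 → SLp p × B), (s 0).1 = el 0 1 1 → (s 1).1 = cyc →
    ∀ (μ : ℝ) (f : EuclideanSpace ℂ (SLp p × B)), f ∈ H0 p B → f ≠ 0 →
    Rop (fun i => LT _ (s i)) f = (μ : ℂ) • f → μ ≤ μ₀ := by
  obtain ⟨m, hm⟩ := exists_pow_lt_of_lt_one (show (0 : ℝ) < 1 / 2 by norm_num) rate_lt
  have hm0 : 0 < m := Nat.pos_of_ne_zero fun h => by subst h; norm_num at hm
  -- with `2 ^ l` of the order of `p`, the group order is at most `2 ^ (9 l)`, so that after `18 m l`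
  -- steps the term `2 |SL₃| rate ^ (18 m l)` is at most `1` and `p * μ ^ (18 m l) ≤ 2 |B|`; as
  -- `p ≥ 8 |B| ^ 2`, squaring is incompatible with `μ ^ (36 m) > 1 / 2`
  refine ⟨1 - 1 / (2 * (36 * m : ℕ)), ?_, ?_⟩
  · have : (0 : ℝ) < 1 / (2 * (36 * m : ℕ)) := by positivity
    linarith
  intro p hp B _ _ hB s h0 h1 μ f hf hf0 hμ
  by_contra! hlt
  have hM : (1 : ℝ) ≤ (36 * m : ℕ) := by exact_mod_cast (by omega)
  have hsmall : 1 / (2 * (36 * m : ℕ) : ℝ) ≤ 1 / 2 := by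
    apply one_div_le_one_div_of_le <;> linarith
  have hμ0 : 0 < μ := by linarith
  -- Bernoulli's inequality gives `μ ^ (36 m) > 1/2`
  have hbern : 1 / 2 < μ ^ (36 * m) := by
    have h2 := one_add_mul_le_pow (a := -(1 / (2 * (36 * m : ℕ) : ℝ))) (by linarith) (36 * m)
    have h3 : 1 + (36 * m : ℕ) * -(1 / (2 * (36 * m : ℕ) : ℝ)) = 1 / 2 := by
      field_simp; ring
    rw [h3] at h2
    refine h2.trans_lt (pow_lt_pow_left₀ (by linarith) (by linarith) (by omega))
  set l := Nat.log 2 p + 1 with hl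
  have hpl : p < 2 ^ l := Nat.lt_pow_succ_log_self (by norm_num) p
  have hpl2 : 2 ^ l ≤ 2 * p := by
    rw [hl, pow_succ, mul_comm]
    exact Nat.mul_le_mul_left _ (Nat.pow_log_le_self 2 hp.out.ne_zero)
  have hb := eig_bound s h0 h1 μ f hf hf0 hμ (9 * m * l)
  have hA : (Fintype.card (SLp p) : ℝ) ≤ (2 : ℝ) ^ (9 * l) := by
    have : Fintype.card (SLp p) ≤ 2 ^ (9 * l) := by
      refine (card_SLp p).trans ?_
      rw [mul_comm, pow_mul]
      exact Nat.pow_le_pow_left hpl.le 9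
    exact_mod_cast this
  have hr : rate ^ (2 * (9 * m * l)) ≤ (1 / 2 : ℝ) ^ (18 * l) := by
    have : 2 * (9 * m * l) = m * (18 * l) := by ring
    rw [this, pow_mul]
    exact pow_le_pow_left₀ (pow_nonneg rate_pos.le _) hm.le _
  have hAr : 2 * (Fintype.card (SLp p) : ℝ) * rate ^ (2 * (9 * m * l)) ≤ 1 := by
    calc 2 * (Fintype.card (SLp p) : ℝ) * rate ^ (2 * (9 * m * l))
        ≤ 2 * (2 : ℝ) ^ (9 * l) * (1 / 2 : ℝ) ^ (18 * l) := by
          have := rate_pos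
          gcongr
      _ = 2 * (1 / 2 : ℝ) ^ (9 * l) := by
          have : 18 * l = 9 * l + 9 * l := by ring
          rw [this, pow_add (1 / 2 : ℝ), mul_assoc, ← mul_assoc (2 ^ (9 * l) : ℝ), ← mul_pow]
          norm_num
      _ ≤ 2 * (1 / 2 : ℝ) ^ 1 := by
          gcongr 2 * ?_
          exact pow_le_pow_of_le_one (by norm_num) (by norm_num) (by omega)
      _ = 1 := by norm_num
  set b : ℝ := (Fintype.card B : ℝ) with hbdef
  have hb1 : 1 ≤ b := by rw [hbdef]; exact_mod_cast Fintype.card_pos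
  have hBp : 8 * b ^ 2 ≤ p := by rw [hbdef]; exact_mod_cast hB
  have hx : p * μ ^ (18 * m * l) ≤ 2 * b := by
    have e : 2 * (9 * m * l) = 18 * m * l := by ring
    rw [e] at hb hAr
    nlinarith
  set x := μ ^ (18 * m * l) with hxd
  have hx0 : 0 < x := by positivity
  have hp0 : (0 : ℝ) < p := by exact_mod_cast hp.out.pos
  have hsq : (μ ^ (36 * m)) ^ l = x ^ 2 := by
    rw [hxd, ← pow_mul, ← pow_mul]; congr 1; ring
  have h5 : 2 * p * x ^ 2 ≤ 1 := by
    have h6 : (p * x) ^ 2 ≤ (2 * b) ^ 2 := by gcongr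
    have h7 : p * (2 * p * x ^ 2) ≤ p * 1 := by nlinarith
    exact le_of_mul_le_mul_left h7 hp0
  have h8 : (1 / 2 : ℝ) ^ l < x ^ 2 := by
    rw [← hsq]
    exact pow_lt_pow_left₀ hbern (by norm_num) (by omega)
  have h9 : (2 : ℝ) ^ l ≤ 2 * p := by exact_mod_cast hpl2
  have h10 : (2 : ℝ) ^ l * (1 / 2 : ℝ) ^ l = 1 := by rw [← mul_pow]; norm_num
  have h11 : (2 : ℝ) ^ l * (1 / 2 : ℝ) ^ l < (2 * p) * x ^ 2 := by
    refine mul_lt_mul' h9 h8 (by positivity) (by positivity)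
  linarith

/-- The eigenvalue bound as a spectral gap of the Dirichlet energy, by diagonalising the
self-adjoint walk operator. -/
lemma gap_H0 : ∃ κ : ℝ, 0 < κ ∧ ∀ (p : ℕ) [Fact p.Prime] (B : Type) [Group B] [Fintype B],
    8 * Fintype.card B ^ 2 ≤ p → ∀ (s : Fin 3 → SLp p × B), (s 0).1 = el 0 1 1 → (s 1).1 = cyc →
    ∀ f : EuclideanSpace ℂ (SLp p × B), f ∈ H0 p B →
    κ * ‖f‖ ^ 2 ≤ ∑ i, ‖LT _ (s i) f - f‖ ^ 2 := by
  obtain ⟨μ₀, hμ₀, H⟩ := eig_unif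
  refine ⟨12 * (1 - μ₀), by linarith, ?_⟩
  intro p hp B _ _ hB s h0 h1 f hf
  have hE := Rop_energy (fun i => LT _ (s i)) f
  set R := Rop (fun i => LT _ (s i)) with hR
  let T : H0 p B →ₗ[ℂ] H0 p B := R.restrict (Rop_H0 s)
  have hT : LinearMap.IsSymmetric (𝕜 := ℂ) (E := H0 p B) T := by
    intro x y
    exact Rop_symm _ x.1 y.1
  let e := hT.eigenvectorBasis rfl
  let F : H0 p B := ⟨f, hf⟩
  have hle : ∀ i, hT.eigenvalues rfl i ≤ μ₀ := by
    intro i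
    refine H p B hB s h0 h1 _ (e i).1 (e i).2 ?_ ?_
    · intro h
      exact e.orthonormal.ne_zero i (Subtype.ext h)
    · exact congrArg Subtype.val (hT.apply_eigenvectorBasis rfl i)
  have hn : ‖f‖ ^ 2 = ∑ i, ‖inner ℂ (e i) F‖ ^ 2 := (e.sum_sq_norm_inner_right F).symm
  have hr : RCLike.re (inner ℂ (R f) f) = ∑ i, hT.eigenvalues rfl i * ‖inner ℂ (e i) F‖ ^ 2 := by
    have h2 : inner ℂ (R f) f = inner ℂ (T F) F := rfl
    rw [h2, ← e.sum_inner_mul_inner, map_sum]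
    refine Finset.sum_congr rfl fun i _ => ?_
    rw [hT, hT.apply_eigenvectorBasis, inner_smul_right, mul_assoc, ← inner_conj_symm F,
      RCLike.conj_mul]
    norm_cast
  have h3 : RCLike.re (inner ℂ (R f) f) ≤ μ₀ * ‖f‖ ^ 2 := by
    rw [hr, hn, Finset.mul_sum]
    gcongr with i
    exact hle i
  linarith

/-- The relative Poincaré inequality for real functions. Subtracting from a function its means
over the `SL₃(𝔽_p)`-fibres lands in `H0` and does not increase the energy. -/
lemma poincare_real : ∃ C : ℝ, 0 < C ∧ ∀ (p : ℕ) [Fact p.Prime] (B : Type) [Group B] [Fintype B],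
    8 * Fintype.card B ^ 2 ≤ p → ∀ (s : Fin 3 → SLp p × B), (s 0).1 = el 0 1 1 → (s 1).1 = cyc →
    ∀ φ : SLp p × B → ℝ, 
    ∑ b, ∑ a, ∑ a', (φ (a, b) - φ (a', b)) ^ 2 ≤
      C * Fintype.card (SLp p) * ∑ i, ∑ g, (φ (s i * g) - φ g) ^ 2 := by
  obtain ⟨κ, hκ, H⟩ := gap_H0
  refine ⟨2 / κ, by positivity, ?_⟩
  intro p hp B _ _ hB s h0 h1 φ
  set n : ℝ := (Fintype.card (SLp p) : ℝ) with hn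
  have hn0 : 0 < n := by rw [hn]; exact_mod_cast Fintype.card_pos
  set m : B → ℝ := fun b => (∑ a, φ (a, b)) / n with hm
  set f : SLp p × B → ℝ := fun g => φ g - m g.2 with hf
  have hsum : ∀ b, ∑ a, f (a, b) = 0 := by
    intro b
    simp only [hf, Finset.sum_sub_distrib, Finset.sum_const, Finset.card_univ, nsmul_eq_mul, ← hn, hm]
    field_simp
    ring
  let F : EuclideanSpace ℂ (SLp p × B) := WithLp.toLp 2 fun g => (f g : ℂ)
  have hF : F ∈ H0 p B := by
    intro b
    change ∑ a, (f (a, b) : ℂ) = 0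
    exact_mod_cast congrArg Complex.ofReal (hsum b)
  have h2 := H p B hB s h0 h1 F hF
  have hFn : ‖F‖ ^ 2 = ∑ g, f g ^ 2 := by
    rw [EuclideanSpace.norm_sq_eq]
    refine Finset.sum_congr rfl fun g _ => ?_
    change ‖(f g : ℂ)‖ ^ 2 = _
    rw [Complex.norm_real, Real.norm_eq_abs, sq_abs]
  have hUF : ∀ i, ‖LT _ (s i) F - F‖ ^ 2 = ∑ g, (f (s i * g) - f g) ^ 2 := by
    intro i
    rw [EuclideanSpace.norm_sq_eq]
    rw [← Equiv.sum_comp (Equiv.mulLeft (s i))]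
    refine Finset.sum_congr rfl fun g _ => ?_
    rw [PiLp.sub_apply, LT_apply, Equiv.coe_mulLeft, inv_mul_cancel_left]
    change ‖(f g : ℂ) - (f (s i * g) : ℂ)‖ ^ 2 = _
    rw [← Complex.ofReal_sub, Complex.norm_real, Real.norm_eq_abs, sq_abs]
    ring
  have hen : ∀ i, ∑ g, (f (s i * g) - f g) ^ 2 ≤ ∑ g, (φ (s i * g) - φ g) ^ 2 := by
    intro i
    have e1 : ∀ g, (φ (s i * g) - φ g) ^ 2 = (f (s i * g) - f g) ^ 2 + 
        (m ((s i).2 * g.2) - m g.2) ^ 2 + 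
        2 * ((f (s i * g) - f g) * (m ((s i).2 * g.2) - m g.2)) := by
      intro g
      simp only [hf, Prod.snd_mul]; ring
    have e2 : ∑ g, ((f (s i * g) - f g) * (m ((s i).2 * g.2) - m g.2)) = 0 := by
      rw [Fintype.sum_prod_type_right]
      refine Finset.sum_eq_zero fun b _ => ?_
      dsimp only
      rw [← Finset.sum_mul, Finset.sum_sub_distrib, hsum b]
      have : ∑ a, f (s i * (a, b)) = 0 := 
        (Equiv.sum_comp (Equiv.mulLeft (s i).1) fun a => f (a, (s i).2 * b)).trans (hsum _)
      rw [this]; ring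
    simp only [e1, Finset.sum_add_distrib, ← Finset.mul_sum, e2]
    have : 0 ≤ ∑ g : SLp p × B, (m ((s i).2 * g.2) - m g.2) ^ 2 := 
      Finset.sum_nonneg fun g _ => sq_nonneg _
    linarith
  have hl : ∑ b, ∑ a, ∑ a', (φ (a, b) - φ (a', b)) ^ 2 = 2 * n * ∑ g, f g ^ 2 := by
    rw [Fintype.sum_prod_type_right, Finset.mul_sum]
    refine Finset.sum_congr rfl fun b _ => ?_
    have e1 : ∀ a a', (φ (a, b) - φ (a', b)) ^ 2 = f (a, b) ^ 2 + f (a', b) ^ 2 - 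
        2 * (f (a, b) * f (a', b)) := by
      intro a a'; simp only [hf]; ring
    simp only [e1, Finset.sum_sub_distrib, Finset.sum_add_distrib, Finset.sum_const, Finset.card_univ,
      ← Finset.mul_sum, hsum b, nsmul_eq_mul, ← hn, mul_zero, Finset.sum_const_zero]
    ring
  rw [hl]
  have h3 := h2.trans (Finset.sum_le_sum fun i _ => (hUF i).le.trans (hen i))
  rw [hFn] at h3
  calc 2 * n * ∑ g, f g ^ 2 = 2 / κ * n * (κ * ∑ g, f g ^ 2) := by field_simp
    _ ≤ _ := by gcongr

/-- Relative Poincaré inequality along the `SL₃(𝔽_p)`-factor for maps into Hilbert spaces, with a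
constant that depends neither on `p` nor on the second factor `B`. -/
lemma poincare : ∃ C : ℝ, 0 < C ∧ ∀ (p : ℕ) [Fact p.Prime] (B : Type) [Group B] [Fintype B],
    8 * Fintype.card B ^ 2 ≤ p → ∀ (s : Fin 3 → SLp p × B), (s 0).1 = el 0 1 1 → (s 1).1 = cyc →
    ∀ (H : Type) [NormedAddCommGroup H] [InnerProductSpace ℝ H] (h : SLp p × B → H), 
    ∑ b, ∑ a, ∑ a', ‖h (a, b) - h (a', b)‖ ^ 2 ≤
      C * Fintype.card (SLp p) * ∑ i, ∑ g, ‖h (s i * g) - h g‖ ^ 2 := by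
  obtain ⟨C, hC, P⟩ := poincare_real
  refine ⟨C, hC, ?_⟩
  intro p hp B _ _ hB s h0 h1 H _ _ h
  let W := Submodule.span ℝ (Set.range h)
  have : FiniteDimensional ℝ W := FiniteDimensional.span_of_finite ℝ (Set.finite_range h)
  let e := stdOrthonormalBasis ℝ W
  let k : SLp p × B → W := fun g => ⟨h g, Submodule.subset_span ⟨g, rfl⟩⟩
  have hk : ∀ g g', ‖h g - h g'‖ ^ 2 = ∑ j, (inner ℝ (e j) (k g) - inner ℝ (e j) (k g')) ^ 2 := by
    intro g g'
    have : ‖h g - h g'‖ = ‖k g - k g'‖ := rfl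
    rw [this, ← e.sum_sq_norm_inner_right]
    simp [inner_sub_right]
  simp only [hk]
  have h2 : ∀ j, _ := fun j => P p B hB s h0 h1 fun g => inner ℝ (e j) (k g)
  have h3 := Finset.sum_le_sum fun j (_ : j ∈ Finset.univ) => h2 j
  rw [← Finset.mul_sum] at h3
  refine (le_of_eq ?_).trans (h3.trans (le_of_eq ?_))
  · refine Eq.trans (Finset.sum_congr rfl fun b _ => ?_) Finset.sum_comm
    refine Eq.trans (Finset.sum_congr rfl fun a _ => ?_) Finset.sum_comm
    exact Finset.sum_comm
  · refine congrArg _ ?_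
    refine Eq.trans Finset.sum_comm (Finset.sum_congr rfl fun i _ => ?_)
    exact Finset.sum_comm

end Poincare
end WC

namespace WC

/-! ### Relative expansion in finite quotients of `F₃` -/

/-- The free group on three generators. -/
abbrev F3 : Type := FreeGroup (Fin 3)

section Rel

variable (p : ℕ) [Fact p.Prime]

/-- The homomorphism `F₃ → SL₃(𝔽_p)` sending the generators to an elementary matrix, the cyclic
permutation matrix and the identity. -/
def phi : F3 →* SLp p := FreeGroup.lift ![el 0 1 1, cyc, 1]

lemma phi_surj : Function.Surjective (phi p) := by
  have h0 : phi p (FreeGroup.of 0) = el 0 1 1 := by simp [phi]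
  have h1 : phi p (FreeGroup.of 1) = cyc := by simp [phi]
  have hc : cyc ∈ (phi p).range := ⟨_, h1⟩
  have h01 : ∀ t, el 0 1 t ∈ (phi p).range := by
    intro t
    have := (phi p).range.pow_mem ⟨_, h0⟩ t.val
    rw [el_pow (by decide)] at this
    simpa using this
  have conj : ∀ i j t, el i j t ∈ (phi p).range → el (i + 1) (j + 1) t ∈ (phi p).range := by
    intro i j t h
    rw [cyc_el rfl rfl]
    exact mul_mem (mul_mem hc h) (inv_mem hc)
  have h12 : ∀ t, el 1 2 t ∈ (phi p).range := fun t => conj 0 1 t (h01 t)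
  have h20 : ∀ t, el 2 0 t ∈ (phi p).range := fun t => conj 1 2 t (h12 t)
  have h02 : ∀ t, el 0 2 t ∈ (phi p).range := by
    intro t
    have := el_act (p := p) (i := 0) (j := 1) (k := 2) (by decide) (by decide) (by decide) 0 t
    rw [el_zero, one_mul, zero_add] at this
    have e : el 0 2 t = el 0 1 1 * el 1 2 t * (el 0 1 1)⁻¹ * (el 1 2 t)⁻¹ := by rw [this]; group
    rw [e]
    exact mul_mem (mul_mem (mul_mem (h01 1) (h12 t)) (inv_mem (h01 1))) (inv_mem (h12 t))
  have h10 : ∀ t, el 1 0 t ∈ (phi p).range := fun t => conj 0 2 t (h02 t)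
  have h21 : ∀ t, el 2 1 t ∈ (phi p).range := fun t => conj 1 0 t (h10 t)
  intro g
  refine bddgen (fun _ g => g ∈ (phi p).range) ?_ (fun _ _ _ _ => mul_mem) (fun _ _ _ _ h => h) g
  intro i j hij t
  fin_cases i <;> fin_cases j <;> first | exact absurd rfl hij | apply_assumption

/-- `F₃` surjects onto `SL₃(𝔽_p) × F₃/M` as soon as `p` exceeds the index of `M`. -/
lemma joint_surj (M : Subgroup F3) [M.Normal] [Finite (F3 ⧸ M)] (hp : Nat.card (F3 ⧸ M) < p)
    (a : SLp p) (b : F3 ⧸ M) : ∃ γ : F3, phi p γ = a ∧ (γ : F3 ⧸ M) = b := by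
  set n := Nat.card (F3 ⧸ M) with hn
  have hn0 : (n : ZMod p) ≠ 0 := by
    rw [Ne, ZMod.natCast_eq_zero_iff]
    exact fun h => absurd (Nat.le_of_dvd Nat.card_pos h) (not_le.2 hp)
  have nK : (M.map (phi p)).Normal := Subgroup.Normal.map inferInstance _ (phi_surj p)
  have hK : ∀ g, g ∈ M.map (phi p) := by
    refine normal_top _ ?_
    obtain ⟨γ, hγ⟩ := phi_surj p (el 0 2 ((n : ZMod p)⁻¹))
    refine ⟨γ ^ n, ?_, ?_⟩
    · have : ((γ ^ n : F3) : F3 ⧸ M) = 1 := by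
        rw [QuotientGroup.mk_pow, hn, pow_card_eq_one']
      exact (QuotientGroup.eq_one_iff _).1 this
    · rw [map_pow, hγ, el_pow (by decide), mul_inv_cancel₀ hn0]
  obtain ⟨β, rfl⟩ := QuotientGroup.mk_surjective b
  obtain ⟨η, hη, e⟩ := hK (a * (phi p β)⁻¹)
  refine ⟨η * β, by rw [map_mul, e, inv_mul_cancel_right], ?_⟩
  rw [QuotientGroup.mk_mul, (QuotientGroup.eq_one_iff η).2 hη, one_mul]

/-- Expansion of the cosets of `N` relative to the cosets of `M` containing them: a map from
`F₃/N` to a Hilbert space that moves adjacent points by at most `D` identifies, up to `√K D`, two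
distinct points of some `M`-fibre. -/
def RelExp (K : ℝ) (M N : Subgroup F3) : Prop :=
  ∀ (H : Type) [NormedAddCommGroup H] [InnerProductSpace ℝ H] (h : F3 → H) (D : ℝ),
    (∀ γ γ', γ⁻¹ * γ' ∈ N → h γ = h γ') → (∀ i γ, ‖h (FreeGroup.of i * γ) - h γ‖ ≤ D) →
    ∃ γ γ', γ⁻¹ * γ' ∈ M ∧ γ⁻¹ * γ' ∉ N ∧ ‖h γ - h γ'‖ ^ 2 ≤ K * D ^ 2

/-- Every finite-index normal subgroup `M` contains an `N` expanding relative to it, with one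
constant for all `M`: the intersection of `M` with the kernel of a map onto `SL₃(𝔽_p)`, for `p`
large. The Poincaré inequality bounds the average square distance in the `M`-fibres, and some pair
of distinct points is at most average up to the factor for the diagonal. -/
lemma rel_step : ∃ K : ℝ, 0 < K ∧ ∀ (M : Subgroup F3) [M.Normal] [Finite (F3 ⧸ M)],
    ∃ N : Subgroup F3, N.Normal ∧ Finite (F3 ⧸ N) ∧ N ≤ M ∧ RelExp K M N := by
  obtain ⟨C, hC, P⟩ := poincare
  refine ⟨6 * C, by positivity, ?_⟩
  intro M _ _
  have : Fintype (F3 ⧸ M) := Fintype.ofFinite _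
  obtain ⟨p, hp1, hp2⟩ := Nat.exists_infinite_primes (8 * Fintype.card (F3 ⧸ M) ^ 2)
  have : Fact p.Prime := ⟨hp2⟩
  have hB : Nat.card (F3 ⧸ M) < p := by
    have : 0 < Nat.card (F3 ⧸ M) := Nat.card_pos
    rw [← Nat.card_eq_fintype_card] at hp1
    nlinarith
  let ψ : F3 →* SLp p × (F3 ⧸ M) := (phi p).prod (QuotientGroup.mk' M)
  have memN : ∀ γ, γ ∈ ψ.ker ↔ phi p γ = 1 ∧ γ ∈ M := by
    intro γ
    rw [MonoidHom.mem_ker, MonoidHom.prod_apply, Prod.mk_eq_one, ← QuotientGroup.eq_one_iff]; rfl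
  have hψ : ∀ g, ∃ γ, ψ γ = g := fun g => by
    obtain ⟨γ, h1, h2⟩ := joint_surj p M hB g.1 g.2
    exact ⟨γ, Prod.ext h1 h2⟩
  refine ⟨ψ.ker, inferInstance, ?_, fun γ hγ => ((memN γ).1 hγ).2, ?_⟩
  · exact Finite.of_injective _ (QuotientGroup.kerLift_injective ψ)
  intro H _ _ h D hN hD
  choose l hl using hψ
  have hcong : ∀ γ, h (l (ψ γ)) = h γ := fun γ => hN _ _ (by
    rw [MonoidHom.mem_ker, map_mul, map_inv, hl, inv_mul_cancel])
  have hPP := P p (F3 ⧸ M) hp1 (fun i => ψ (FreeGroup.of i)) (by simp [ψ, phi]) (by simp [ψ, phi])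
    H (fun g => h (l g))
  by_contra! hcon
  set n : ℝ := (Fintype.card (SLp p) : ℝ) with hn
  set b : ℝ := (Fintype.card (F3 ⧸ M) : ℝ) with hb
  have hb0 : 0 < b := by rw [hb]; exact_mod_cast Fintype.card_pos
  have hn2 : 2 ≤ n := by
    have : Nontrivial (SLp p) := ⟨⟨el 0 1 1, 1, fun e => by
      rw [← el_zero 0 1] at e
      exact one_ne_zero (el_inj (by decide) e)⟩⟩
    have := Fintype.one_lt_card (α := SLp p)
    rw [hn]; exact_mod_cast this
  have hupper : ∑ i, ∑ g, ‖h (l (ψ (FreeGroup.of i) * g)) - h (l g)‖ ^ 2 ≤ 3 * (n * b * D ^ 2) := by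
    have h1 : ∀ i g, ‖h (l (ψ (FreeGroup.of i) * g)) - h (l g)‖ ^ 2 ≤ D ^ 2 := by
      intro i g
      have : ψ (FreeGroup.of i) * g = ψ (FreeGroup.of i * l g) := by rw [map_mul, hl]
      rw [this, hcong]
      exact pow_le_pow_left₀ (norm_nonneg _) (hD _ _) 2
    refine (Finset.sum_le_sum fun i _ => Finset.sum_le_sum fun g _ => h1 i g).trans (le_of_eq ?_)
    simp only [Finset.sum_const, Finset.card_univ, Fintype.card_prod, nsmul_eq_mul, Fintype.card_fin]
    push_cast; rw [hn, hb]; 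
  have hoff : ∀ b a a', a ≠ a' → 6 * C * D ^ 2 < ‖h (l (a, b)) - h (l (a', b))‖ ^ 2 := by
    intro b a a' hne
    refine hcon _ _ ?_ ?_
    · rw [← QuotientGroup.eq]
      have e1 := congrArg Prod.snd (hl (a, b))
      have e2 := congrArg Prod.snd (hl (a', b))
      exact e1.trans e2.symm
    · rw [MonoidHom.mem_ker, map_mul, map_inv, hl, hl, inv_mul_eq_one]
      exact fun e => hne (congrArg Prod.fst e)
  have hlower : b * (n * ((n - 1) * (6 * C * D ^ 2))) <
      ∑ b, ∑ a, ∑ a', ‖h (l (a, b)) - h (l (a', b))‖ ^ 2 := by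
    have e : b * (n * ((n - 1) * (6 * C * D ^ 2))) = 
        ∑ _ : F3 ⧸ M, ∑ _ : SLp p, (n - 1) * (6 * C * D ^ 2) := by
      simp [hn, hb]
    rw [e]
    refine Finset.sum_lt_sum_of_nonempty Finset.univ_nonempty fun b _ => ?_
    refine Finset.sum_lt_sum_of_nonempty Finset.univ_nonempty fun a _ => ?_
    classical
    rw [← Finset.add_sum_erase _ _ (Finset.mem_univ a)]
    have hcard : ((Finset.univ.erase a).card : ℝ) = n - 1 := by
      rw [Finset.card_erase_of_mem (Finset.mem_univ a), Finset.card_univ, Nat.cast_sub Fintype.card_pos]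
      simp [hn]
    have : ∑ a' ∈ Finset.univ.erase a, 6 * C * D ^ 2 < 
        ∑ a' ∈ Finset.univ.erase a, ‖h (l (a, b)) - h (l (a', b))‖ ^ 2 := by
      refine Finset.sum_lt_sum_of_nonempty ?_ fun a' ha' => hoff b a a' (Finset.ne_of_mem_erase ha').symm
      rw [← Finset.card_pos]
      have : (0 : ℝ) < ((Finset.univ.erase a).card : ℝ) := by rw [hcard]; linarith
      exact_mod_cast this
    rw [Finset.sum_const, nsmul_eq_mul, hcard] at this
    simpa using this
  have h9 : C * n * ∑ i, ∑ g, ‖h (l (ψ (FreeGroup.of i) * g)) - h (l g)‖ ^ 2 ≤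
    C * n * (3 * (n * b * D ^ 2)) := by gcongr
  have h10 := hlower.trans_le (hPP.trans h9)
  have : C * n * (3 * (n * b * D ^ 2)) ≤ b * (n * ((n - 1) * (6 * C * D ^ 2))) := by
    have : 0 ≤ C * n * b * D ^ 2 := by positivity
    nlinarith
  linarith

end Rel
end WC

namespace WC

/-! ### Residual finiteness of `F₃` -/

section ResFin

/-- The free group is residually finite, quantitatively: there are finite-index normal subgroups
avoiding any given ball. -/
lemma resfin (R : ℕ) : ∃ K : Subgroup F3, K.Normal ∧ Finite (F3 ⧸ K) ∧
    (∀ γ ∈ K, γ ≠ 1 → R < γ.norm) ∧ R ≤ Nat.card (F3 ⧸ K) := by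
  classical
  let X : Type := {g : F3 // g.norm ≤ R}
  have : Finite X := by
    have : Finite {l : List (Fin 3 × Bool) // l.length ≤ R} := List.finite_length_le _ _
    exact Finite.of_injective (fun g : X => (⟨g.1.toWord, g.2⟩ : {l : List (Fin 3 × Bool) // l.length ≤ R}))
      fun a b e => Subtype.ext (FreeGroup.toWord_injective (congrArg Subtype.val e))
  have : Fintype X := Fintype.ofFinite _
  let P : Fin 3 → X → Prop := fun i g => (FreeGroup.of i * g.1).norm ≤ R
  let Q : Fin 3 → X → Prop := fun i g => ((FreeGroup.of i)⁻¹ * g.1).norm ≤ R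
  let e : ∀ i, {x // P i x} ≃ {x // Q i x} := fun i =>
    { toFun := fun x => ⟨⟨_, x.2⟩, by
        change ((FreeGroup.of i)⁻¹ * (FreeGroup.of i * x.1.1)).norm ≤ R
        rw [inv_mul_cancel_left]; exact x.1.2⟩
      invFun := fun x => ⟨⟨_, x.2⟩, by
        change (FreeGroup.of i * ((FreeGroup.of i)⁻¹ * x.1.1)).norm ≤ R
        rw [mul_inv_cancel_left]; exact x.1.2⟩
      left_inv := fun x => by ext; simp
      right_inv := fun x => by ext; simp }
  let π : Fin 3 → Equiv.Perm X := fun i => (e i).extendSubtype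
  have hπ : ∀ i (x : X) (h : (FreeGroup.of i * x.1).norm ≤ R), π i x = ⟨_, h⟩ := fun i x h =>
    Equiv.extendSubtype_apply_of_mem (e i) x h
  let Λ : F3 →* Equiv.Perm X := FreeGroup.lift π
  have key : ∀ L : List (Fin 3 × Bool), ∀ hL : L.length ≤ R,
      Λ (FreeGroup.mk L) ⟨1, by simp⟩ = ⟨FreeGroup.mk L, FreeGroup.norm_mk_le.trans hL⟩ := by
    intro L
    induction L with
    | nil => intro _; rfl
    | cons a L ih =>
      intro hL
      have hL1 : L.length ≤ R := by simp at hL; omega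
      obtain ⟨i, b⟩ := a
      have em : FreeGroup.mk ((i, b) :: L) = FreeGroup.mk [(i, b)] * FreeGroup.mk L := by
        rw [FreeGroup.mul_mk]; rfl
      have hn := FreeGroup.norm_mk_le.trans hL
      have e1 : Λ (FreeGroup.mk ((i, b) :: L)) ⟨1, by simp⟩ = 
          Λ (FreeGroup.mk [(i, b)]) ⟨FreeGroup.mk L, FreeGroup.norm_mk_le.trans hL1⟩ := by
        rw [em, map_mul, Equiv.Perm.mul_apply, ih hL1]
      rw [e1]
      cases b with
      | true =>
        have e2 : FreeGroup.mk [(i, true)] = FreeGroup.of i := rfl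
        have e3 : Λ (FreeGroup.of i) = π i := FreeGroup.lift_apply_of
        rw [e2, e3, hπ _ _ (by rw [em] at hn; exact hn)]
        rfl
      | false =>
        have e2 : FreeGroup.mk [(i, false)] = (FreeGroup.of i)⁻¹ := rfl
        have e3 : Λ (FreeGroup.of i) = π i := FreeGroup.lift_apply_of
        rw [e2, map_inv, e3, Equiv.Perm.inv_eq_iff_eq]
        have e4 : FreeGroup.of i * FreeGroup.mk ((i, false) :: L) = FreeGroup.mk L := by
          rw [em, e2, mul_inv_cancel_left]
        rw [hπ i ⟨FreeGroup.mk ((i, false) :: L), hn⟩ (by rw [e4]; exact FreeGroup.norm_mk_le.trans hL1)]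
        exact Subtype.ext e4.symm
  have girth : ∀ γ ∈ Λ.ker, γ ≠ 1 → R < γ.norm := by
    intro γ hγ h1
    by_contra! hle
    have := key γ.toWord hle
    simp only [FreeGroup.mk_toWord] at this
    rw [MonoidHom.mem_ker.1 hγ] at this
    exact h1 (congrArg Subtype.val this).symm
  have fin : Finite (F3 ⧸ Λ.ker) := Finite.of_injective _ (QuotientGroup.kerLift_injective Λ)
  refine ⟨Λ.ker, inferInstance, fin, girth, ?_⟩
  have inj : Function.Injective fun i : Fin R => (((FreeGroup.of (0 : Fin 3)) ^ (i : ℕ) : F3) : F3 ⧸ Λ.ker) := by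
    have main : ∀ i j : Fin R, i ≤ j → (((FreeGroup.of (0 : Fin 3)) ^ (i : ℕ) : F3) : F3 ⧸ Λ.ker) = 
        (((FreeGroup.of (0 : Fin 3)) ^ (j : ℕ) : F3) : F3 ⧸ Λ.ker) → i = j := by
      intro i j hij h
      rw [QuotientGroup.eq] at h
      have e5 : ((FreeGroup.of (0 : Fin 3)) ^ (i : ℕ))⁻¹ * (FreeGroup.of (0 : Fin 3)) ^ (j : ℕ) = 
          (FreeGroup.of (0 : Fin 3)) ^ ((j : ℕ) - i) := by
        rw [inv_mul_eq_iff_eq_mul, ← pow_add, Nat.add_sub_cancel' hij]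
      rw [e5] at h
      by_contra hne
      have hlt : (i : ℕ) < j := lt_of_le_of_ne hij fun e => hne (Fin.ext e)
      have := girth _ h (fun e => by
        have := congrArg FreeGroup.norm e
        rw [FreeGroup.norm_of_pow, FreeGroup.norm_one] at this
        omega)
      rw [FreeGroup.norm_of_pow] at this
      omega
    intro i j h
    rcases le_total i j with hij | hij
    · exact main i j hij h
    · exact (main j i hij h.symm).symm
  have := Nat.card_le_card_of_injective _ inj
  simpa using this

end ResFin
end WC

namespace WC

/-! ### Mod-`2` homology covers -/

section Cover

variable (P : Subgroup F3) [P.Normal]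

/-- Functions on the edges of the Cayley graph of `F₃/P`, modulo two. -/
abbrev Edg : Type := (F3 ⧸ P) × Fin 3

open Classical in
/-- The indicator of an edge. -/
noncomputable def sg (e : Edg P) : Edg P → ZMod 2 := Pi.single e 1

/-- The lift of the `i`-th generator to the mod-`2` homology cover: it moves a vertex along the
`i`-th edge and records that edge. -/
noncomputable def Tgen (i : Fin 3) : Equiv.Perm ((F3 ⧸ P) × (Edg P → ZMod 2)) where
  toFun x := ((FreeGroup.of i : F3) * x.1, x.2 + sg P (x.1, i))
  invFun x := (((FreeGroup.of i : F3) : F3 ⧸ P)⁻¹ * x.1, x.2 + sg P (((FreeGroup.of i : F3) : F3 ⧸ P)⁻¹ * x.1, i))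
  left_inv x := by
    ext1
    · simp
    · simp only [inv_mul_cancel_left, add_assoc]
      rw [← two_nsmul]
      ext e; simp [CharTwo.two_eq_zero]
  right_inv x := by
    ext1
    · simp
    · simp only [add_assoc]
      rw [← two_nsmul]
      ext e; simp [CharTwo.two_eq_zero]

/-- The action of the free group on the mod-`2` homology cover. -/
noncomputable def Tact : F3 →* Equiv.Perm ((F3 ⧸ P) × (Edg P → ZMod 2)) := FreeGroup.lift (Tgen P)

/-- The chain, modulo two, traversed by the path labelled `γ` that starts at `v`. -/
noncomputable def ch (γ : F3) (v : F3 ⧸ P) : Edg P → ZMod 2 := (Tact P γ (v, 0)).2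

lemma char2_self (u : Edg P → ZMod 2) : u + u = 0 := by
  ext e; simp [CharTwo.add_self_eq_zero]

lemma Tact_apply (γ : F3) (v : F3 ⧸ P) (u : Edg P → ZMod 2) :
    Tact P γ (v, u) = (γ * v, u + ch P γ v) := by
  have h : ∀ γ : F3, ∃ c : (F3 ⧸ P) → Edg P → ZMod 2, ∀ v u, Tact P γ (v, u) = (γ * v, u + c v) := by
    intro γ
    induction γ using FreeGroup.induction_on with
    | C1 => exact ⟨fun _ => 0, fun v u => by simp⟩
    | of i => exact ⟨fun v => sg P (v, i), fun v u => by rw [Tact, FreeGroup.lift_apply_of]; rfl⟩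
    | inv_of i _ => 
      refine ⟨fun v => sg P (((FreeGroup.of i : F3) : F3 ⧸ P)⁻¹ * v, i), fun v u => ?_⟩
      rw [map_inv, Tact, FreeGroup.lift_apply_of]; rfl
    | mul a b ha hb =>
      obtain ⟨c, hc⟩ := ha
      obtain ⟨d, hd⟩ := hb
      refine ⟨fun v => d v + c (b * v), fun v u => ?_⟩
      rw [map_mul, Equiv.Perm.mul_apply, hd, hc, QuotientGroup.mk_mul, mul_assoc, add_assoc]
  obtain ⟨c, hc⟩ := h γ
  rw [ch, hc, hc, zero_add]

lemma ch_mul (γ δ : F3) (v : F3 ⧸ P) : ch P (γ * δ) v = ch P δ v + ch P γ (δ * v) := by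
  have h := Tact_apply P (γ * δ) v 0
  rw [map_mul, Equiv.Perm.mul_apply, Tact_apply, Tact_apply] at h
  have := congrArg Prod.snd h
  simpa using this.symm

lemma ch_one (v : F3 ⧸ P) : ch P 1 v = 0 := by simp [ch]

lemma ch_of (i : Fin 3) (v : F3 ⧸ P) : ch P (FreeGroup.of i) v = sg P (v, i) := by
  rw [ch, Tact, FreeGroup.lift_apply_of]
  simp [Tgen]

lemma ch_inv (γ : F3) (v : F3 ⧸ P) : ch P γ⁻¹ (γ * v) = ch P γ v := by
  have h := ch_mul P γ⁻¹ γ v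
  rw [inv_mul_cancel, ch_one] at h
  have h2 := char2_self P (ch P γ v)
  exact (add_left_cancel (h2.trans h)).symm

lemma ch_inv' (γ : F3) (v : F3 ⧸ P) : ch P γ⁻¹ v = ch P γ ((γ : F3 ⧸ P)⁻¹ * v) := by
  rw [← ch_inv P γ, mul_inv_cancel_left]

/-- Right translations are deck transformations: they act on the Cayley graph and on chains of
paths. -/
lemma ch_right (γ : F3) (v w : F3 ⧸ P) (e : Edg P) : ch P γ (v * w) e = ch P γ v (e.1 * w⁻¹, e.2) := by
  classical
  induction γ using FreeGroup.induction_on generalizing v with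
  | C1 => simp [ch_one]
  | of i =>
    simp only [ch_of, sg, Pi.single_apply, Prod.ext_iff, mul_inv_eq_iff_eq_mul]
  | inv_of i _ => 
    simp only [ch_inv', ch_of, sg, Pi.single_apply, Prod.ext_iff, mul_inv_eq_iff_eq_mul, mul_assoc]
  | mul a b ha hb =>
    rw [ch_mul, ch_mul, Pi.add_apply, Pi.add_apply, hb, ← mul_assoc, ha]

variable [Finite (F3 ⧸ P)]

/-- The subgroup of `F₃` that corresponds to the mod-`2` homology cover of the Cayley graph
of `F₃/P`. -/
noncomputable def HC : Subgroup F3 := (Tact P).ker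

instance : (HC P).Normal := by unfold HC; infer_instance
instance : Finite (F3 ⧸ HC P) := Finite.of_injective _ (QuotientGroup.kerLift_injective (Tact P))

lemma mem_HC (γ : F3) : γ ∈ HC P ↔ γ ∈ P ∧ ∀ v, ch P γ v = 0 := by
  rw [HC, MonoidHom.mem_ker, ← QuotientGroup.eq_one_iff]
  constructor
  · intro h
    constructor
    · have := congrArg Prod.fst (Tact_apply P γ 1 0)
      rw [h] at this
      simpa using this.symm
    · intro v
      rw [ch, h]; rfl
  · rintro ⟨h1, h2⟩
    ext1 ⟨v, u⟩
    rw [Tact_apply, h1, h2]; simp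

/-- A deck transformation that fixes one point is trivial. -/
lemma mem_HC' (γ : F3) (h : γ ∈ P) (v : F3 ⧸ P) (hv : ch P γ v = 0) : γ ∈ HC P := by
  rw [mem_HC]
  refine ⟨h, fun w => ?_⟩
  ext e
  have := ch_right P γ v (v⁻¹ * w) e
  rw [mul_inv_cancel_left, hv] at this
  exact this

open Classical in
/-- The mod-`2` boundary of the chain of a path is the sum of its endpoints. -/
lemma ch_bdry [Fintype (F3 ⧸ P)] (γ : F3) (v x : F3 ⧸ P) :
    ∑ e : Edg P, ch P γ v e * ((if x = e.1 then 1 else 0) + (if x = (FreeGroup.of e.2 : F3) * e.1 then 1 else 0))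
      = (if x = v then 1 else 0) + (if x = γ * v then 1 else 0) := by
  induction γ using FreeGroup.induction_on generalizing v with
  | C1 => simp [ch_one, CharTwo.add_self_eq_zero]
  | of i => 
    simp only [ch_of, sg, Pi.single_apply]
    simp
  | inv_of i _ => 
    simp only [ch_inv', ch_of, sg, Pi.single_apply]
    simp [add_comm]
    congr
  | mul a b ha hb =>
    simp only [ch_mul, Pi.add_apply, add_mul, Finset.sum_add_distrib, hb]
    rw [ha, QuotientGroup.mk_mul, mul_assoc]
    have h2 := CharTwo.add_self_eq_zero (if x = (b : F3 ⧸ P) * v then (1 : ZMod 2) else 0)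
    linear_combination h2


variable [Fintype (F3 ⧸ P)]

open Classical in
lemma hN_sg (e : Edg P) (u : Edg P → ZMod 2) : hammingNorm (u + sg P e) ≤ hammingNorm u + 1 := by
  have h1 : hammingNorm (sg P e) ≤ 1 := by
    refine (Finset.card_le_card (t := {e}) fun x hx => ?_).trans (by simp)
    simp only [sg, Finset.mem_filter, Finset.mem_univ, true_and, Pi.single_apply] at hx
    simpa using hx
  have := hammingDist_triangle (u + sg P e) u 0
  rw [hammingDist_zero_right, hammingDist_zero_right, hammingDist_comm, hammingDist_eq_hammingNorm,
    neg_add_cancel_left] at this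
  omega

open Classical in
lemma hN_ch (γ : F3) (v : F3 ⧸ P) : hammingNorm (ch P γ v) ≤ γ.norm := by
  have h : ∀ (L : List (Fin 3 × Bool)) (v : F3 ⧸ P), hammingNorm (ch P (FreeGroup.mk L) v) ≤ L.length := by
    intro L
    induction L with
    | nil => 
      intro v
      have : FreeGroup.mk ([] : List (Fin 3 × Bool)) = 1 := rfl
      rw [this, ch_one]; simp
    | cons a L ih =>
      intro v
      obtain ⟨i, b⟩ := a
      have em : FreeGroup.mk ((i, b) :: L) = FreeGroup.mk [(i, b)] * FreeGroup.mk L := by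
        rw [FreeGroup.mul_mk]; rfl
      have hs : ∀ w, ∃ e, ch P (FreeGroup.mk [(i, b)]) w = sg P e := by
        intro w
        cases b with
        | true => exact ⟨_, ch_of P i w⟩
        | false =>
          have e2 : FreeGroup.mk [(i, false)] = (FreeGroup.of i)⁻¹ := rfl
          rw [e2, ch_inv', ch_of]
          exact ⟨_, rfl⟩
      obtain ⟨e, he⟩ := hs (FreeGroup.mk L * v)
      rw [em, ch_mul, he]
      refine (hN_sg P e _).trans ?_
      have := ih v
      simp only [List.length_cons]
      omega
  have := h γ.toWord v
  rwa [FreeGroup.mk_toWord] at this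

open Classical in
lemma hN_strip (e : Edg P) (u : Edg P → ZMod 2) (h : u e ≠ 0) :
    hammingNorm (u + sg P e) < hammingNorm u := by
  have h1 : u e = 1 := by
    revert h
    generalize u e = x
    revert x; decide
  refine Finset.card_lt_card ?_
  rw [Finset.ssubset_iff_of_subset]
  · refine ⟨e, by simp [h1], ?_⟩
    intro hx
    refine (Finset.mem_filter.1 hx).2 ?_
    rw [Pi.add_apply, sg, Pi.single_eq_same, h1, CharTwo.add_self_eq_zero]
  · intro x hx
    simp only [Finset.mem_filter, Finset.mem_univ, true_and, sg, Pi.add_apply, Pi.single_apply] at hx ⊢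
    by_cases hxe : x = e
    · subst hxe; rw [h1]; exact one_ne_zero
    · simpa [hxe] using hx

open Classical in
/-- The first edge of a path that is used an odd number of times can be split off. -/
lemma ch_strip (η : F3) (v : F3 ⧸ P) (e : Edg P) (he : ch P η v e ≠ 0)
    (hv : v = e.1 ∨ v = (FreeGroup.of e.2 : F3) * e.1) : ∃ s : F3, s.norm = 1 ∧
    hammingNorm (ch P (η * s⁻¹) (s * v)) < hammingNorm (ch P η v) := by
  rcases hv with hv | hv
  · refine ⟨FreeGroup.of e.2, FreeGroup.norm_of _, ?_⟩
    rw [ch_mul, ch_inv, ch_of, ← mul_assoc, ← QuotientGroup.mk_mul, inv_mul_cancel,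
      QuotientGroup.mk_one, one_mul, hv, add_comm]
    rw [hv] at he
    exact hN_strip P e _ he
  · refine ⟨(FreeGroup.of e.2)⁻¹, by rw [FreeGroup.norm_inv_eq, FreeGroup.norm_of], ?_⟩
    rw [ch_mul, ch_inv, ch_inv', ch_of, ← mul_assoc, ← QuotientGroup.mk_mul, inv_mul_cancel,
      QuotientGroup.mk_one, one_mul, add_comm]
    rw [hv] at he ⊢
    rw [inv_mul_cancel_left]
    exact hN_strip P e _ he

open Classical in
/-- Below the girth, the geodesic distance in the homology cover is the size of the chain. -/
lemma ch_short (g : ℕ) (hg : ∀ γ ∈ P, γ ≠ 1 → g ≤ γ.norm) (m : ℕ) : ∀ (η : F3) (v : F3 ⧸ P),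
    hammingNorm (ch P η v) = m → m < g →
    ∃ η' : F3, η'.norm ≤ m ∧ (η' : F3 ⧸ P) = η ∧ ch P η' v = ch P η v := by
  induction m using Nat.strong_induction_on with
  | _ m ih =>
  intro η v hm hmg
  -- splitting off a letter and applying the induction hypothesis to the rest
  have step : ∀ (η : F3) (v : F3 ⧸ P), hammingNorm (ch P η v) = m → ∀ e : Edg P, ch P η v e ≠ 0 →
      (v = e.1 ∨ v = (FreeGroup.of e.2 : F3) * e.1) →
      ∃ η' : F3, η'.norm ≤ m ∧ (η' : F3 ⧸ P) = η ∧ ch P η' v = ch P η v := by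
    intro η v hm e he hv
    obtain ⟨s, hs1, hs2⟩ := ch_strip P η v e he hv
    obtain ⟨η3, h1, h2, h3⟩ := ih _ (hm ▸ hs2) _ _ rfl ((hm ▸ hs2).trans hmg)
    refine ⟨η3 * s, ?_, ?_, ?_⟩
    · have := FreeGroup.norm_mul_le η3 s
      omega
    · rw [QuotientGroup.mk_mul, h2, QuotientGroup.mk_mul, QuotientGroup.mk_inv, inv_mul_cancel_right]
    · rw [ch_mul, h3, ← ch_mul, inv_mul_cancel_right]
  by_cases hv : (η : F3 ⧸ P) * v = v
  · by_cases h0 : ch P η v = 0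
    · refine ⟨1, by simp, ?_, by rw [ch_one, h0]⟩
      rw [QuotientGroup.mk_one]
      exact (mul_eq_right.1 hv).symm
    · exfalso
      have hη : (η : F3 ⧸ P) = 1 := mul_eq_right.1 hv
      obtain ⟨e, he⟩ := Function.ne_iff.1 h0
      obtain ⟨ω, hω⟩ := QuotientGroup.mk_surjective (e.1 * v⁻¹)
      have hωv : (ω : F3 ⧸ P) * v = e.1 := by rw [hω, inv_mul_cancel_right]
      have hωv2 : ((ω⁻¹ : F3) : F3 ⧸ P) * e.1 = v := by
        rw [← hωv, ← mul_assoc, ← QuotientGroup.mk_mul, inv_mul_cancel, QuotientGroup.mk_one, one_mul]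
      -- the loop based at the tail of the edge `e`
      have hc : ch P (ω * η * ω⁻¹) e.1 = ch P η v := by
        rw [ch_mul, ch_mul, hωv2, hη, one_mul]
        have h4 := ch_mul P ω ω⁻¹ e.1
        rw [mul_inv_cancel, ch_one, hωv2] at h4
        rw [add_left_comm, ← h4, add_zero]
      obtain ⟨η', h1, h2, h3⟩ := step (ω * η * ω⁻¹) e.1 (by rw [hc]; exact hm) e (by rw [hc]; exact he) (Or.inl rfl)
      have hP : η' ∈ P := by
        rw [← QuotientGroup.eq_one_iff, h2, QuotientGroup.mk_mul, QuotientGroup.mk_mul, hη, mul_one,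
          QuotientGroup.mk_inv, mul_inv_cancel]
      by_cases h5 : η' = 1
      · rw [h5, ch_one, hc] at h3
        exact h0 h3.symm
      · have := hg η' hP h5
        omega
  · have hb := ch_bdry P η v v
    rw [if_pos rfl, if_neg (fun h => hv h.symm), add_zero] at hb
    obtain ⟨e, -, he⟩ := Finset.exists_ne_zero_of_sum_ne_zero (hb.trans_ne one_ne_zero)
    refine step η v hm e (left_ne_zero_of_mul he) ?_
    have h6 := right_ne_zero_of_mul he
    by_contra hcon
    push Not at hcon
    exact h6 (by rw [if_neg hcon.1, if_neg hcon.2, add_zero])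

end Cover

/-- The finite quotient of `F₃` by `M` maps to an `m`-dimensional Hamming cube in a `1`-Lipschitz
way, and the map is isometric from below at distances less than `g`. -/
def CubeEmb (g : ℕ) (M : Subgroup F3) (m : ℕ) : Prop :=
  ∃ C : F3 → Fin m → ZMod 2, (∀ γ δ, γ⁻¹ * δ ∈ M → C γ = C δ) ∧
    (∀ η γ, hammingDist (C (η * γ)) (C γ) ≤ η.norm) ∧
    ∀ γ δ, hammingDist (C γ) (C δ) < g →
      ∃ η : F3, η.norm ≤ hammingDist (C γ) (C δ) ∧ (η * γ)⁻¹ * δ ∈ M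

/-- The quotient by the homology cover embeds into a cube: a group element is sent to the chain of
the path from the base point that it spells. -/
lemma HC_cube (P : Subgroup F3) [P.Normal] [Finite (F3 ⧸ P)] (g : ℕ)
    (hg : ∀ γ ∈ P, γ ≠ 1 → g ≤ γ.norm) : ∃ m, CubeEmb g (HC P) m := by
  classical
  have : Fintype (F3 ⧸ P) := Fintype.ofFinite _
  let E := Fintype.equivFin (Edg P)
  have hre : ∀ u v : Edg P → ZMod 2, hammingDist (u ∘ E.symm) (v ∘ E.symm) = hammingDist u v := by
    intro u v
    refine Finset.card_equiv E.symm fun i => ?_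
    simp
  have hd : ∀ η γ : F3, hammingDist (ch P (η * γ) 1) (ch P γ 1) = hammingNorm (ch P η γ) := by
    intro η γ
    rw [ch_mul, mul_one, hammingDist_comm, hammingDist_eq_hammingNorm, neg_add_cancel_left]
  refine ⟨_, fun γ => ch P γ 1 ∘ E.symm, ?_, ?_, ?_⟩
  · intro γ δ h
    have : δ = γ * (γ⁻¹ * δ) := by group
    dsimp only
    conv_rhs => rw [this, ch_mul, ((mem_HC P _).1 h).2,
      (QuotientGroup.eq_one_iff _).2 ((mem_HC P _).1 h).1, zero_add, mul_one]
  · intro η γ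
    rw [hre, hd]
    convert hN_ch P η γ
  · intro γ δ h
    rw [hre, hammingDist_comm] at h ⊢
    have e1 : δ = (δ * γ⁻¹) * γ := by group
    have e2 := hd (δ * γ⁻¹) γ
    rw [← e1] at e2
    rw [e2] at h ⊢
    obtain ⟨η, h1, h2, h3⟩ := ch_short P g hg _ (δ * γ⁻¹) γ rfl (by convert h)
    refine ⟨η, by convert h1, ?_⟩
    have e3 : (η * γ)⁻¹ * δ = γ⁻¹ * (η⁻¹ * (δ * γ⁻¹)) * γ⁻¹⁻¹ := by group
    rw [e3]
    refine Subgroup.Normal.conj_mem inferInstance _ (mem_HC' P _ ?_ γ ?_) _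
    · rw [← QuotientGroup.eq_one_iff, QuotientGroup.mk_mul, ← h2, QuotientGroup.mk_inv, inv_mul_cancel]
    · rw [ch_mul, ← h3, ← h2, ch_inv, char2_self]

end WC

namespace WC

/-! ### Interlaced chains of subgroups -/

/-- Two interlaced chains of finite-index normal subgroups: passing from `M k` to `N (k + 1)` keeps
a uniform spectral gap, and `M (k + 1)` is a mod-`2` homology cover, so that its quotient embeds
into a cube. -/
structure Chain (M N : ℕ → Subgroup F3) (m : ℕ → ℕ) (K : ℝ) : Prop where
  nM : ∀ k, (M k).Normal
  nN : ∀ k, (N k).Normal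
  fM : ∀ k, Finite (F3 ⧸ M k)
  fN : ∀ k, Finite (F3 ⧸ N k)
  M0 : M 0 = ⊤
  N0 : N 0 = ⊤
  NM : ∀ k, N (k + 1) ≤ M k
  MN : ∀ k, M (k + 1) ≤ N (k + 1)
  girth : ∀ k, ∀ γ ∈ M k, γ ≠ 1 → k ≤ γ.norm
  cube : ∀ k, CubeEmb k (M k) (m k)
  rel : ∀ k, RelExp K (M k) (N (k + 1))
  inj : ∀ k, ∃ J : F3 → F3, (∀ γ, J γ ∈ M k) ∧ (∀ γ δ, γ⁻¹ * δ ∈ N (k + 1) → J γ = J δ) ∧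
    ∀ γ δ, (J γ)⁻¹ * J δ ∈ M (k + 1) → γ⁻¹ * δ ∈ N (k + 1)

/-- A counting argument: when `M/M'` has at least as many elements as `F₃/N`, the latter injects
into the former. -/
lemma exists_inj (M N M' : Subgroup F3) [Finite (F3 ⧸ M)] [Finite (F3 ⧸ N)] [Finite (F3 ⧸ M')]
    (hMM : M' ≤ M) (hc : Nat.card (F3 ⧸ M) * Nat.card (F3 ⧸ N) ≤ Nat.card (F3 ⧸ M')) :
    ∃ J : F3 → F3, (∀ γ, J γ ∈ M) ∧ (∀ γ δ, γ⁻¹ * δ ∈ N → J γ = J δ) ∧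
    ∀ γ δ, (J γ)⁻¹ * J δ ∈ M' → γ⁻¹ * δ ∈ N := by
  have h1 := Subgroup.relIndex_mul_index hMM
  have hpos : 0 < Nat.card (F3 ⧸ M) := Nat.card_pos
  have h2 : Nat.card (F3 ⧸ N) ≤ Nat.card (M ⧸ M'.subgroupOf M) := by
    have : Nat.card (M ⧸ M'.subgroupOf M) * Nat.card (F3 ⧸ M) = Nat.card (F3 ⧸ M') := h1
    rw [← this, mul_comm] at hc
    exact Nat.le_of_mul_le_mul_right hc hpos
  have hfin : Finite (M ⧸ M'.subgroupOf M) := by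
    refine Nat.finite_of_card_ne_zero ?_
    have : 0 < Nat.card (F3 ⧸ N) := Nat.card_pos
    omega
  have := Fintype.ofFinite (M ⧸ M'.subgroupOf M)
  have := Fintype.ofFinite (F3 ⧸ N)
  rw [Nat.card_eq_fintype_card, Nat.card_eq_fintype_card] at h2
  obtain ⟨j⟩ := Function.Embedding.nonempty_of_card_le h2
  refine ⟨fun γ => ((j (γ : F3 ⧸ N)).out : M), fun γ => SetLike.coe_mem _, fun γ δ h => ?_, fun γ δ h => ?_⟩
  · dsimp only; rw [QuotientGroup.eq.2 h]
  · refine QuotientGroup.eq.1 (j.injective ?_)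
    rw [← QuotientGroup.out_eq' (j (γ : F3 ⧸ N)), ← QuotientGroup.out_eq' (j (δ : F3 ⧸ N))]
    rw [QuotientGroup.eq, Subgroup.mem_subgroupOf]
    exact h

/-- One step of the chain: first a relative expander `N`, then the homology cover of `N`
intersected with a subgroup `Q` of girth and index large enough. -/
lemma chain_step (K : ℝ) (hrs : ∀ (M : Subgroup F3) [M.Normal] [Finite (F3 ⧸ M)],
      ∃ N : Subgroup F3, N.Normal ∧ Finite (F3 ⧸ N) ∧ N ≤ M ∧ RelExp K M N)
    (k : ℕ) (M : Subgroup F3) (h1 : M.Normal) (h2 : Finite (F3 ⧸ M)) :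
    ∃ (N M' : Subgroup F3) (m : ℕ), N.Normal ∧ Finite (F3 ⧸ N) ∧ N ≤ M ∧ RelExp K M N ∧
      M'.Normal ∧ Finite (F3 ⧸ M') ∧ M' ≤ N ∧ (∀ γ ∈ M', γ ≠ 1 → k ≤ γ.norm) ∧
      CubeEmb k M' m ∧
      ∃ J : F3 → F3, (∀ γ, J γ ∈ M) ∧ (∀ γ δ, γ⁻¹ * δ ∈ N → J γ = J δ) ∧
        ∀ γ δ, (J γ)⁻¹ * J δ ∈ M' → γ⁻¹ * δ ∈ N := by
  obtain ⟨N, hN1, hN2, hN3, hN4⟩ := hrs M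
  obtain ⟨Q, hQ1, hQ2, hQ3, hQ4⟩ := resfin (k + Nat.card (F3 ⧸ M) * Nat.card (F3 ⧸ N))
  have hfi : ∀ H : Subgroup F3, H.FiniteIndex ↔ Finite (F3 ⧸ H) := fun H => Subgroup.finiteIndex_iff_finite_quotient
  have : N.FiniteIndex := (hfi N).2 hN2
  have : Q.FiniteIndex := (hfi Q).2 hQ2
  have hP2 : Finite (F3 ⧸ (N ⊓ Q : Subgroup F3)) := (hfi _).1 inferInstance
  have hle : HC (N ⊓ Q) ≤ N ⊓ Q := fun γ hγ => ((mem_HC _ γ).1 hγ).1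
  have hg : ∀ γ ∈ N ⊓ Q, γ ≠ 1 → k ≤ γ.norm := fun γ hγ h => by
    have := hQ3 γ hγ.2 h
    omega
  obtain ⟨m, hm⟩ := HC_cube (N ⊓ Q) k hg
  refine ⟨N, HC (N ⊓ Q), m, hN1, hN2, hN3, hN4, inferInstance, inferInstance,
    hle.trans inf_le_left, fun γ hγ => hg γ (hle hγ), hm, exists_inj M N _ ?_ ?_⟩
  · exact (hle.trans inf_le_left).trans hN3
  · have h3 : Nat.card (F3 ⧸ Q) ≤ Nat.card (F3 ⧸ HC (N ⊓ Q)) :=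
      Nat.le_of_dvd Nat.card_pos (Subgroup.index_dvd_of_le (hle.trans inf_le_right))
    omega

/-- Interlaced chains exist, by iterating the step from `M = F₃`. -/
lemma chain_exists : ∃ (M N : ℕ → Subgroup F3) (m : ℕ → ℕ) (K : ℝ), 0 < K ∧ Chain M N m K := by
  obtain ⟨K, hK, hrs⟩ := rel_step
  have st := chain_step K hrs
  choose Nf Mf mf hNf1 hNf2 hNf3 hNf4 hMf1 hMf2 hMf3 hMf4 hMf5 hMf6 using st
  -- the state: a subgroup `M k` with the previously constructed data
  let T := {M : Subgroup F3 // M.Normal ∧ Finite (F3 ⧸ M)}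
  have htop : Finite (F3 ⧸ (⊤ : Subgroup F3)) := inferInstance
  let T0 : T := ⟨⊤, inferInstance, htop⟩
  let nx : ℕ → T → T := fun k M => ⟨Mf (k + 1) M.1 M.2.1 M.2.2, hMf1 _ _ _ _, hMf2 _ _ _ _⟩
  let Ms : ℕ → T := fun n => Nat.rec T0 (fun k M => nx k M) n
  let Ns : ℕ → Subgroup F3 := fun n => Nat.casesOn n ⊤ (fun k => Nf (k + 1) (Ms k).1 (Ms k).2.1 (Ms k).2.2)
  let ms : ℕ → ℕ := fun n => Nat.casesOn n 0 (fun k => mf (k + 1) (Ms k).1 (Ms k).2.1 (Ms k).2.2)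
  refine ⟨fun k => (Ms k).1, Ns, ms, K, hK, ?_⟩
  constructor
  · exact fun k => (Ms k).2.1
  · intro k
    cases k with
    | zero => exact (inferInstance : (⊤ : Subgroup F3).Normal)
    | succ k => exact hNf1 _ _ _ _
  · exact fun k => (Ms k).2.2
  · intro k
    cases k with
    | zero => exact htop
    | succ k => exact hNf2 _ _ _ _
  · rfl
  · rfl
  · exact fun k => hNf3 _ _ _ _
  · exact fun k => hMf3 _ _ _ _
  · intro k
    cases k with
    | zero => exact fun _ _ _ => Nat.zero_le _
    | succ k => exact hMf4 _ _ _ _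
  · intro k
    cases k with
    | zero => exact ⟨fun _ i => 0, fun _ _ _ => rfl, fun _ _ => by simp, fun _ _ h => absurd h (Nat.not_lt_zero _)⟩
    | succ k => exact hMf5 _ _ _ _
  · exact fun k => hNf4 _ _ _ _
  · exact fun k => hMf6 _ _ _ _

end WC

namespace WC

/-! ### Scales and ultrametrics -/

/-- A rapidly decreasing sequence of scales. The ratio `m k + k + 2` exceeds the dimension `m k` of
the cube attached to level `k`, and it tends to infinity. -/
structure Scale (m : ℕ → ℕ) (a : ℕ → ℝ) : Prop where
  a0 : a 0 = 1
  pos : ∀ k, 0 < a k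
  q : ∀ k, ((m k : ℝ) + k + 2) * a (k + 1) = a k

lemma scale_exists (m : ℕ → ℕ) : ∃ a, Scale m a := by
  let a : ℕ → ℝ := fun n => Nat.rec 1 (fun k x => x / ((m k : ℝ) + k + 2)) n
  have hs : ∀ k, a (k + 1) = a k / ((m k : ℝ) + k + 2) := fun k => rfl
  have hp : ∀ k : ℕ, (0 : ℝ) < (m k : ℝ) + k + 2 := fun k => by positivity
  refine ⟨a, rfl, fun k => ?_, fun k => ?_⟩
  · induction k with
    | zero => exact one_pos
    | succ k ih => rw [hs]; exact div_pos ih (hp k)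
  · rw [hs]; field_simp [(hp k).ne']

namespace Scale
variable {m : ℕ → ℕ} {a : ℕ → ℝ} (h : Scale m a)
include h

lemma half (k : ℕ) : 2 * a (k + 1) ≤ a k := by
  rw [← h.q k]
  have : (0 : ℝ) ≤ (m k : ℝ) + k := by positivity
  nlinarith [h.pos (k + 1)]

lemma anti : StrictAnti a := strictAnti_nat_of_succ_lt fun k => by
  have := h.half k; have := h.pos (k + 1); linarith

lemma small (ε : ℝ) (he : 0 < ε) : ∃ k, a k < ε := by
  have h1 : ∀ k, a k ≤ (1 / 2 : ℝ) ^ k := by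
    intro k
    induction k with
    | zero => rw [h.a0]; simp
    | succ k ih => have := h.half k; rw [pow_succ]; linarith
  obtain ⟨k, hk⟩ := exists_pow_lt_of_lt_one he (by norm_num : (1 / 2 : ℝ) < 1)
  exact ⟨k, (h1 k).trans_lt hk⟩

end Scale

open Classical in
/-- The ultrametric attached to a decreasing sequence of equivalence relations and a sequence
of scales: the scale at the first relation that fails, and `0` if none fails. -/
noncomputable def um {Y : Type} (E : ℕ → Y → Y → Prop) (a : ℕ → ℝ) (x y : Y) : ℝ :=
  if h : ∃ k, ¬ E k x y then a (Nat.find h) else 0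

section um
variable {Y Z : Type} {E : ℕ → Y → Y → Prop} {a : ℕ → ℝ} (pos : ∀ k, 0 < a k) (anti : StrictAnti a)
include pos anti

lemma um_lt_iff (mono : ∀ j k x y, j ≤ k → E k x y → E j x y) (k : ℕ) (x y : Y) :
    um E a x y < a k ↔ E k x y := by
  classical
  unfold um
  split_ifs with h
  · rw [anti.lt_iff_gt, Nat.lt_find_iff]
    constructor
    · intro h1; exact not_not.1 (h1 k le_rfl)
    · intro h1 j hj; exact not_not.2 (mono j k x y hj h1)
  · push Not at h
    exact ⟨fun _ => h k, fun _ => pos k⟩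

omit pos in
lemma um_le_iff (pos : ∀ k, 0 < a k) (mono : ∀ j k x y, j ≤ k → E k x y → E j x y) (k : ℕ) (x y : Y) :
    um E a x y ≤ a (k + 1) ↔ E k x y := by
  classical
  unfold um
  split_ifs with h
  · rw [anti.le_iff_ge, Nat.add_one_le_iff, Nat.lt_find_iff]
    constructor
    · intro h1; exact not_not.1 (h1 k le_rfl)
    · intro h1 j hj; exact not_not.2 (mono j k x y hj h1)
  · push Not at h
    exact ⟨fun _ => h k, fun _ => (pos _).le⟩

omit pos anti in
lemma um_congr {E' : ℕ → Z → Z → Prop} {x y : Y} {x' y' : Z} (h : ∀ k, E k x y ↔ E' k x' y') :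
    um E a x y = um E' a x' y' := by
  classical
  have key : ∀ p p' : ℕ → Prop, p = p' → (if h : ∃ k, ¬ p k then a (Nat.find h) else 0)
      = (if h : ∃ k, ¬ p' k then a (Nat.find h) else 0) := by
    rintro p _ rfl; rfl
  unfold um
  convert key _ _ (funext fun k => propext (h k))

omit anti in
lemma um_nonneg (x y : Y) : 0 ≤ um E a x y := by
  unfold um; split_ifs
  exacts [(pos _).le, le_rfl]

lemma um_ultra (mono : ∀ j k x y, j ≤ k → E k x y → E j x y)
    (tr : ∀ k x y z, E k x y → E k y z → E k x z) (x y z : Y) :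
    um E a x z ≤ max (um E a x y) (um E a y z) := by
  classical
  by_cases h : ∃ k, ¬ E k x z
  · have e : um E a x z = a (Nat.find h) := by rw [um, dif_pos h]
    by_contra hc
    rw [not_le, max_lt_iff, e, um_lt_iff pos anti mono, um_lt_iff pos anti mono] at hc
    exact Nat.find_spec h (tr _ _ _ _ hc.1 hc.2)
  · rw [um, dif_neg h]
    exact (um_nonneg pos x y).trans (le_max_left _ _)

lemma um_metric (mono : ∀ j k x y, j ≤ k → E k x y → E j x y)
    (tr : ∀ k x y z, E k x y → E k y z → E k x z) (rf : ∀ k x, E k x x)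
    (sy : ∀ k x y, E k x y → E k y x) (sep : ∀ x y, (∀ k, E k x y) → x = y) : IsMetricOn (um E a) := by
  classical
  refine ⟨fun y => ?_, fun x y hxy => ?_, fun x y => ?_, fun x y z => ?_⟩
  · rw [um, dif_neg]
    push Not
    exact fun k => rf k y
  · rw [um, dif_pos]
    · exact pos _
    · by_contra hc
      push Not at hc
      exact hxy (sep x y hc)
  · exact um_congr fun k => ⟨sy k x y, sy k y x⟩
  · refine (um_ultra pos anti mono tr x y z).trans (max_le ?_ ?_)
    · linarith [um_nonneg (E := E) pos y z]
    · linarith [um_nonneg (E := E) pos x y]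

end um

/-- A family of rescaled ultrametrics has asymptotic Assouad-Nagata dimension zero. -/
lemma andim_ultra {Y : Type} (d : Y → Y → ℝ) (h0 : ∀ x, d x x = 0)
    (h : ∀ x y z, d x z ≤ max (d x y) (d y z)) :
    FamANdimZero (fun t : {t : ℝ // 0 < t} => fun y y' : Y => t.1 * d y y') := by
  refine ⟨1, one_pos, fun R hR t a b hab => ?_⟩
  rw [one_mul]
  dsimp only
  unfold RConn at hab
  induction hab with
  | refl => rw [h0, mul_zero]; exact hR.le
  | @tail b c _ h2 ih =>
    refine (mul_le_mul_of_nonneg_left (h a b c) t.2.le).trans ?_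
    rw [mul_max_of_nonneg _ _ t.2.le]
    exact max_le ih h2.2.2.le

/-! ### The profinite space -/

/-- The inverse limit of the finite quotients `F₃ / M k`. -/
abbrev Pt (M : ℕ → Subgroup F3) : Type :=
  {x : (k : ℕ) → F3 ⧸ M k // ∀ n, ∃ γ : F3, ∀ k ≤ n, x k = (γ : F3 ⧸ M k)}

/-- The left translation action on the inverse limit. -/
def act (M : ℕ → Subgroup F3) (g : F3) (x : Pt M) : Pt M :=
  ⟨fun k => g • x.1 k, fun n => by
    obtain ⟨γ, hγ⟩ := x.2 n
    exact ⟨g * γ, fun k hk => by dsimp only; rw [hγ k hk]; rfl⟩⟩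

/-- The base point of the inverse limit. -/
def pt0 (M : ℕ → Subgroup F3) : Pt M := ⟨fun k => ((1 : F3) : F3 ⧸ M k), fun _ => ⟨1, fun _ _ => rfl⟩⟩

/-- Two points agree modulo `L k`. -/
def EL (M L : ℕ → Subgroup F3) (k : ℕ) (x y : Pt M) : Prop :=
  ∃ γ δ : F3, x.1 k = (γ : F3 ⧸ M k) ∧ y.1 k = (δ : F3 ⧸ M k) ∧ γ⁻¹ * δ ∈ L k

/-- A chain `L` of normal subgroups interlaced with the chain `M`. -/
structure Good (M L : ℕ → Subgroup F3) : Prop where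
  nL : ∀ k, (L k).Normal
  fM : ∀ k, Finite (F3 ⧸ M k)
  L0 : L 0 = ⊤
  ML : ∀ k, M k ≤ L k
  LM : ∀ k, L (k + 1) ≤ M k
  girth : ∀ k, ∀ γ ∈ M k, γ ≠ 1 → k ≤ γ.norm

lemma Chain.goodM {M N : ℕ → Subgroup F3} {m : ℕ → ℕ} {K : ℝ} (h : Chain M N m K) : Good M M :=
  ⟨h.nM, h.fM, h.M0, fun _ => le_rfl, fun k => (h.MN k).trans (h.NM k), h.girth⟩

lemma Chain.goodN {M N : ℕ → Subgroup F3} {m : ℕ → ℕ} {K : ℝ} (h : Chain M N m K) : Good M N :=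
  ⟨h.nN, h.fM, h.N0, fun k => by
    cases k with
    | zero => rw [h.N0]; exact le_top
    | succ k => exact h.MN k, h.NM, h.girth⟩

lemma act_one (M : ℕ → Subgroup F3) (x : Pt M) : act M 1 x = x :=
  Subtype.ext (funext fun k => one_smul F3 (x.1 k))

lemma act_mul (M : ℕ → Subgroup F3) (g h : F3) (x : Pt M) : act M (g * h) x = act M g (act M h x) :=
  Subtype.ext (funext fun k => mul_smul g h (x.1 k))

lemma exists_rep {M : ℕ → Subgroup F3} (x : Pt M) (k : ℕ) : ∃ γ : F3, x.1 k = (γ : F3 ⧸ M k) := by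
  obtain ⟨γ, h⟩ := x.2 k
  exact ⟨γ, h k le_rfl⟩

namespace Good
variable {M L : ℕ → Subgroup F3} (h : Good M L)
include h

lemma EL_iff {k : ℕ} {x y : Pt M} {γ δ : F3} (hx : x.1 k = (γ : F3 ⧸ M k)) (hy : y.1 k = (δ : F3 ⧸ M k)) :
    EL M L k x y ↔ γ⁻¹ * δ ∈ L k := by
  constructor
  · rintro ⟨γ', δ', h1, h2, h3⟩
    have e1 := h.ML k (QuotientGroup.eq.1 (hx.symm.trans h1))
    have e2 := h.ML k (QuotientGroup.eq.1 (h2.symm.trans hy))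
    have := (L k).mul_mem ((L k).mul_mem e1 h3) e2
    have e : γ⁻¹ * γ' * (γ'⁻¹ * δ') * (δ'⁻¹ * δ) = γ⁻¹ * δ := by group
    rwa [e] at this
  · exact fun h3 => ⟨γ, δ, hx, hy, h3⟩

lemma anti (j k : ℕ) (hjk : j ≤ k) : L k ≤ L j := by
  induction k, hjk using Nat.le_induction with
  | base => exact le_rfl
  | succ k _ ih => exact ((h.LM k).trans (h.ML k)).trans ih

lemma mono (j k : ℕ) (x y : Pt M) (hjk : j ≤ k) (hE : EL M L k x y) : EL M L j x y := by
  obtain ⟨γ, hγ⟩ := x.2 k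
  obtain ⟨δ, hδ⟩ := y.2 k
  rw [h.EL_iff (hγ k le_rfl) (hδ k le_rfl)] at hE
  rw [h.EL_iff (hγ j hjk) (hδ j hjk)]
  exact h.anti j k hjk hE

lemma rf (k : ℕ) (x : Pt M) : EL M L k x x := by
  obtain ⟨γ, hγ⟩ := exists_rep x k
  rw [h.EL_iff hγ hγ, inv_mul_cancel]; exact (L k).one_mem

lemma sy (k : ℕ) (x y : Pt M) (hE : EL M L k x y) : EL M L k y x := by
  obtain ⟨γ, hγ⟩ := exists_rep x k
  obtain ⟨δ, hδ⟩ := exists_rep y k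
  rw [h.EL_iff hγ hδ] at hE
  rw [h.EL_iff hδ hγ]
  simpa using (L k).inv_mem hE

lemma tr (k : ℕ) (x y z : Pt M) (h1 : EL M L k x y) (h2 : EL M L k y z) : EL M L k x z := by
  obtain ⟨γ, hγ⟩ := exists_rep x k
  obtain ⟨δ, hδ⟩ := exists_rep y k
  obtain ⟨η, hη⟩ := exists_rep z k
  rw [h.EL_iff hγ hδ] at h1
  rw [h.EL_iff hδ hη] at h2
  rw [h.EL_iff hγ hη]
  simpa [mul_assoc] using (L k).mul_mem h1 h2

lemma E_coord (k : ℕ) (x y : Pt M) (hE : EL M L (k + 1) x y) : x.1 k = y.1 k := by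
  obtain ⟨γ, hγ⟩ := x.2 (k + 1)
  obtain ⟨δ, hδ⟩ := y.2 (k + 1)
  rw [h.EL_iff (hγ _ le_rfl) (hδ _ le_rfl)] at hE
  rw [hγ k (Nat.le_succ k), hδ k (Nat.le_succ k), QuotientGroup.eq]
  exact h.LM k hE

lemma E_of_coord (k : ℕ) (x y : Pt M) (hE : x.1 k = y.1 k) : EL M L k x y := by
  obtain ⟨γ, hγ⟩ := exists_rep x k
  exact ⟨γ, γ, hγ, hE ▸ hγ, by rw [inv_mul_cancel]; exact (L k).one_mem⟩

lemma sep (x y : Pt M) (hE : ∀ k, EL M L k x y) : x = y :=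
  Subtype.ext (funext fun k => h.E_coord k x y (hE (k + 1)))

lemma E_zero (x y : Pt M) : EL M L 0 x y := by
  obtain ⟨γ, hγ⟩ := exists_rep x 0
  obtain ⟨δ, hδ⟩ := exists_rep y 0
  rw [h.EL_iff hγ hδ, h.L0]; trivial

omit h in
lemma act_coord {k : ℕ} {x : Pt M} {γ : F3} (g : F3) (hx : x.1 k = (γ : F3 ⧸ M k)) :
    (act M g x).1 k = ((g * γ : F3) : F3 ⧸ M k) := by
  change g • x.1 k = _
  rw [hx]; rfl

lemma act_inv (g : F3) (k : ℕ) (x y : Pt M) : EL M L k (act M g x) (act M g y) ↔ EL M L k x y := by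
  obtain ⟨γ, hγ⟩ := exists_rep x k
  obtain ⟨δ, hδ⟩ := exists_rep y k
  rw [h.EL_iff (act_coord g hγ) (act_coord g hδ), h.EL_iff hγ hδ]
  have : (g * γ)⁻¹ * (g * δ) = γ⁻¹ * δ := by group
  rw [this]

lemma act_rel (g g' : F3) (k : ℕ) (x : Pt M) : EL M L k (act M g x) (act M g' x) ↔ g⁻¹ * g' ∈ L k := by
  obtain ⟨γ, hγ⟩ := exists_rep x k
  rw [h.EL_iff (act_coord g hγ) (act_coord g' hγ)]
  have e : (g * γ)⁻¹ * (g' * γ) = γ⁻¹ * (g⁻¹ * g') * γ⁻¹⁻¹ := by group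
  have e2 : g⁻¹ * g' = γ * (γ⁻¹ * (g⁻¹ * g') * γ⁻¹⁻¹) * γ⁻¹ := by group
  constructor
  · intro h1
    rw [e] at h1; rw [e2]
    exact (h.nL k).conj_mem _ h1 _
  · intro h1
    rw [e]
    exact (h.nL k).conj_mem _ h1 _

lemma girthL (k : ℕ) (γ : F3) (h1 : γ ∈ L (k + 1)) (h2 : γ ≠ 1) : k ≤ γ.norm :=
  h.girth k γ (h.LM k h1) h2

lemma act_free (g : F3) (x : Pt M) (hg : act M g x = x) : g = 1 := by
  by_contra hne
  have h1 := (h.act_rel 1 g (g.norm + 2) x).1 (by rw [act_one, hg]; exact h.rf _ x)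
  have := h.girthL _ g (by simpa using h1) hne
  omega

variable {m : ℕ → ℕ} {a : ℕ → ℝ} (ha : Scale m a)
include ha

lemma d_metric : IsMetricOn (um (EL M L) a) := um_metric ha.pos ha.anti h.mono h.tr h.rf h.sy h.sep

lemma d_ultra (x y z : Pt M) : um (EL M L) a x z ≤ max (um (EL M L) a x y) (um (EL M L) a y z) :=
  um_ultra ha.pos ha.anti h.mono h.tr x y z

lemma d_lt (k : ℕ) (x y : Pt M) : um (EL M L) a x y < a k ↔ EL M L k x y := um_lt_iff ha.pos ha.anti h.mono k x y

lemma d_le (k : ℕ) (x y : Pt M) : um (EL M L) a x y ≤ a (k + 1) ↔ EL M L k x y :=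
  um_le_iff ha.anti ha.pos h.mono k x y

omit ha in
lemma d_act (g : F3) (x y : Pt M) : um (EL M L) a (act M g x) (act M g y) = um (EL M L) a x y :=
  um_congr fun k => h.act_inv g k x y

lemma d_dense (y z : Pt M) (ε : ℝ) (he : 0 < ε) : ∃ g, um (EL M L) a (act M g z) y < ε := by
  obtain ⟨k, hk⟩ := ha.small ε he
  obtain ⟨γ, hγ⟩ := exists_rep z k
  obtain ⟨δ, hδ⟩ := exists_rep y k
  refine ⟨δ * γ⁻¹, lt_trans ?_ hk⟩
  rw [h.d_lt ha, h.EL_iff (act_coord _ hγ) hδ]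
  simp

lemma d_top {L' : ℕ → Subgroup F3} (h' : Good M L') (ε : ℝ) (he : 0 < ε) :
    ∃ δ, 0 < δ ∧ ∀ x y, um (EL M L) a x y < δ → um (EL M L') a x y < ε := by
  obtain ⟨k, hk⟩ := ha.small ε he
  refine ⟨a (k + 1), ha.pos _, fun x y hxy => lt_trans ?_ hk⟩
  rw [h.d_lt ha] at hxy
  rw [h'.d_lt ha]
  exact h'.E_of_coord k x y (h.E_coord k x y hxy)

lemma d_compact : SeqCompactWith (um (EL M L) a) := by
  intro u
  have := h.fM
  letI : ∀ k, TopologicalSpace (F3 ⧸ M k) := fun k => ⊥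
  haveI : ∀ k, DiscreteTopology (F3 ⧸ M k) := fun k => ⟨rfl⟩
  obtain ⟨x, φ, hφ, hx⟩ := CompactSpace.tendsto_subseq (fun n => (u n).1)
  rw [tendsto_pi_nhds] at hx
  have hev : ∀ k, ∀ᶠ n in Filter.atTop, (u (φ n)).1 k = x k := fun k => by
    have := hx k
    rw [nhds_discrete, Filter.tendsto_pure] at this
    exact this
  have hev2 : ∀ K, ∀ᶠ n in Filter.atTop, ∀ k ≤ K, (u (φ n)).1 k = x k := by
    intro K
    have := (Filter.eventually_all_finite (Set.finite_Iic K)).2 fun k _ => hev k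
    exact this
  let y : Pt M := ⟨x, fun n => by
    obtain ⟨i, hi⟩ := (hev2 n).exists
    obtain ⟨γ, hγ⟩ := (u (φ i)).2 n
    exact ⟨γ, fun k hk => by rw [← hi k hk, hγ k hk]⟩⟩
  refine ⟨y, φ, hφ, fun ε he => ?_⟩
  obtain ⟨k, hk⟩ := ha.small ε he
  obtain ⟨N, hN⟩ := Filter.eventually_atTop.1 (hev k)
  refine ⟨N, fun n hn => lt_trans ?_ hk⟩
  rw [h.d_lt ha]
  exact h.E_of_coord k _ _ (hN n hn)

end Good

/-- The metric space built from the chain `N` embeds isometrically into the one built from `M`. -/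
lemma isom_emb {M N : ℕ → Subgroup F3} {m : ℕ → ℕ} {K : ℝ} (h : Chain M N m K) (a : ℕ → ℝ) :
    ∃ e : Pt M → Pt M, ∀ x y, um (EL M M) a (e x) (e y) = um (EL M N) a x y := by
  choose J hJ1 hJ2 hJ3 using h.inj
  -- `e_k` is a lift of the map `F₃ / N k → F₃ / M k`
  let e : ℕ → F3 → F3 := fun n => Nat.rec (fun _ => 1) (fun k f γ => f γ * J k γ) n
  have hs : ∀ k γ, e (k + 1) γ = e k γ * J k γ := fun _ _ => rfl
  have anN := h.goodN.anti
  have anM := h.goodM.anti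
  have e_wd : ∀ k γ δ, γ⁻¹ * δ ∈ N k → e k γ = e k δ := by
    intro k
    induction k with
    | zero => intro γ δ _; rfl
    | succ k ih =>
      intro γ δ hγ
      rw [hs, hs, ih γ δ (anN k (k + 1) (Nat.le_succ k) hγ), hJ2 k γ δ hγ]
  have e_inj : ∀ k γ δ, (e k γ)⁻¹ * e k δ ∈ M k → γ⁻¹ * δ ∈ N k := by
    intro k
    induction k with
    | zero => intro γ δ _; rw [h.N0]; trivial
    | succ k ih =>
      intro γ δ hγ
      rw [hs, hs] at hγ
      have h1 : γ⁻¹ * δ ∈ N k := by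
        refine ih γ δ ?_
        have e1 : (e k γ)⁻¹ * e k δ = J k γ * ((e k γ * J k γ)⁻¹ * (e k δ * J k δ)) * (J k δ)⁻¹ := by group
        rw [e1]
        exact (M k).mul_mem ((M k).mul_mem (hJ1 k γ) (anM k (k + 1) (Nat.le_succ k) hγ)) ((M k).inv_mem (hJ1 k δ))
      rw [e_wd k γ δ h1] at hγ
      refine hJ3 k γ δ ?_
      have e1 : (J k γ)⁻¹ * J k δ = (e k δ * J k γ)⁻¹ * (e k δ * J k δ) := by group
      rwa [e1]
  have e_compat : ∀ j k γ, j ≤ k → (e j γ)⁻¹ * e k γ ∈ M j := by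
    intro j k γ hjk
    induction k, hjk using Nat.le_induction with
    | base => rw [inv_mul_cancel]; exact (M j).one_mem
    | succ k hk ih =>
      rw [hs, ← mul_assoc]
      exact (M j).mul_mem ih (anM j k hk (hJ1 k γ))
  choose r hr using fun x : Pt M => exists_rep x
  let f : Pt M → Pt M := fun x => ⟨fun k => QuotientGroup.mk (e k (r x k)), fun n => by
    obtain ⟨γ, hγ⟩ := x.2 n
    refine ⟨e n γ, fun k hk => ?_⟩
    have h1 : e k (r x k) = e k γ := by
      refine e_wd k _ _ (h.goodN.ML k (QuotientGroup.eq.1 ?_))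
      rw [← hr x k, hγ k hk]
    refine QuotientGroup.eq.2 ?_
    rw [h1]
    exact e_compat k n γ hk⟩
  refine ⟨f, fun x y => um_congr fun k => ?_⟩
  rw [h.goodN.EL_iff (hr x k) (hr y k), h.goodM.EL_iff (x := f x) (y := f y) rfl rfl]
  constructor
  · exact e_inj k _ _
  · intro h1
    rw [e_wd k _ _ h1, inv_mul_cancel]
    exact (M k).one_mem

end WC

namespace WC

/-! ### Warped metrics -/

section Warp
variable {Y : Type} {act : F3 → Y → Y} {d ρ : Y → Y → ℝ} {t : ℝ}

/-- The warped distance is bounded by moving along a group element and then in the space. -/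
lemma warp_upper (a1 : ∀ y, act 1 y = y) (am : ∀ g h y, act (g * h) y = act g (act h y))
    (hw : IsWarpedMetric act S3 d t ρ) (γ : F3) (x y : Y) :
    ρ x y ≤ γ.norm + t * d (act γ x) y := by
  obtain ⟨⟨m1, m2, m3, m4⟩, w1, w2, -⟩ := hw
  have hl : ∀ (l : List (Fin 3 × Bool)) (x : Y), ρ x (act (FreeGroup.mk l) x) ≤ l.length := by
    intro l
    induction l with
    | nil =>
      intro x
      have : FreeGroup.mk ([] : List (Fin 3 × Bool)) = 1 := rfl
      rw [this, a1, m1]; simp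
    | cons p l ih =>
      intro x
      obtain ⟨i, b⟩ := p
      have em : FreeGroup.mk ((i, b) :: l) = FreeGroup.mk [(i, b)] * FreeGroup.mk l := by
        rw [FreeGroup.mul_mk]; rfl
      have hs : FreeGroup.mk [(i, b)] ∈ S3 := by
        cases b with
        | true => exact ⟨i, Or.inl rfl⟩
        | false => exact ⟨i, Or.inr rfl⟩
      rw [em, am]
      have h1 := m4 x (act (FreeGroup.mk l) x) (act (FreeGroup.mk [(i, b)]) (act (FreeGroup.mk l) x))
      have h2 := w2 _ hs (act (FreeGroup.mk l) x)
      have h3 := ih x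
      push_cast [List.length_cons]
      linarith
  have h1 := hl γ.toWord x
  rw [FreeGroup.mk_toWord] at h1
  have h2 := m4 x (act γ x) y
  have h3 := w1 (act γ x) y
  have h4 : (γ.toWord.length : ℝ) = (γ.norm : ℝ) := rfl
  linarith

/-- For an isometric action, the warped distance is realised up to `1` by one group element and
one jump. -/
lemma warp_lower (a1 : ∀ y, act 1 y = y) (am : ∀ g h y, act (g * h) y = act g (act h y))
    (hd : IsMetricOn d) (hi : ∀ g x y, d (act g x) (act g y) = d x y) (ht : 0 < t)
    (hw : IsWarpedMetric act S3 d t ρ) (x y : Y) :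
    ∃ γ : F3, γ.norm + t * d (act γ x) y ≤ ρ x y + 1 := by
  obtain ⟨m1, m2, m3, m4⟩ := hd
  have dn : ∀ x y, 0 ≤ d x y := fun x y => by
    by_cases h : x = y
    · rw [h, m1]
    · exact (m2 x y h).le
  let c : Y → Y → F3 → ℝ := fun x y γ => γ.norm + t * d (act γ x) y
  have cn : ∀ x y γ, 0 ≤ c x y γ := fun x y γ =>
    add_nonneg (Nat.cast_nonneg _) (mul_nonneg ht.le (dn _ _))
  have bd : ∀ x y, BddBelow (Set.range (c x y)) := fun x y =>
    ⟨0, by rintro _ ⟨γ, rfl⟩; exact cn x y γ⟩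
  have le : ∀ x y γ, ⨅ γ, c x y γ ≤ c x y γ := fun x y γ => ciInf_le (bd x y) γ
  have sy : ∀ x y, ⨅ γ, c x y γ ≤ ⨅ γ, c y x γ := fun x y => by
    refine le_ciInf fun γ => (le x y γ⁻¹).trans (le_of_eq ?_)
    change ((γ⁻¹ : F3).norm : ℝ) + t * d (act γ⁻¹ x) y = γ.norm + t * d (act γ y) x
    rw [FreeGroup.norm_inv_eq, ← hi γ, ← am, mul_inv_cancel, a1, m3]
  have main : ∀ x y, ⨅ γ, c x y γ ≤ ρ x y := by
    refine hw.2.2.2 (fun x y => ⨅ γ, c x y γ) ⟨fun y => ?_, fun x y hxy => ?_, fun x y => ?_, fun x y z => ?_⟩ ?_ ?_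
    · refine le_antisymm ((le y y 1).trans (le_of_eq ?_)) (le_ciInf (cn y y))
      change ((1 : F3).norm : ℝ) + t * d (act 1 y) y = 0
      rw [a1, m1, FreeGroup.norm_one]; simp
    · have hp : 0 < min 1 (t * d x y) := lt_min one_pos (mul_pos ht (m2 x y hxy))
      refine hp.trans_le (le_ciInf fun γ => ?_)
      by_cases hγ : γ = 1
      · subst hγ
        refine (min_le_right _ _).trans (le_of_eq ?_)
        change _ = ((1 : F3).norm : ℝ) + t * d (act 1 x) y
        rw [a1, FreeGroup.norm_one]; simp
      · refine (min_le_left _ _).trans ?_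
        have h1 : (1 : ℝ) ≤ γ.norm := by
          have : γ.norm ≠ 0 := fun h => hγ (FreeGroup.norm_eq_zero.1 h)
          exact_mod_cast Nat.one_le_iff_ne_zero.2 this
        have := mul_nonneg ht.le (dn (act γ x) y)
        change (1 : ℝ) ≤ γ.norm + t * d (act γ x) y
        linarith
    · exact le_antisymm (sy x y) (sy y x)
    · refine le_ciInf_add_ciInf fun γ δ => (le x z (δ * γ)).trans ?_
      change ((δ * γ).norm : ℝ) + t * d (act (δ * γ) x) z ≤ (γ.norm + t * d (act γ x) y) + (δ.norm + t * d (act δ y) z)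
      have h1 := m4 (act (δ * γ) x) (act δ y) z
      have h2 : d (act (δ * γ) x) (act δ y) = d (act γ x) y := by rw [am, hi]
      have h3 : ((δ * γ).norm : ℝ) ≤ δ.norm + γ.norm := by exact_mod_cast FreeGroup.norm_mul_le δ γ
      have h4 := mul_le_mul_of_nonneg_left h1 ht.le
      rw [mul_add, h2] at h4
      linarith
    · intro x y
      refine (le x y 1).trans (le_of_eq ?_)
      change ((1 : F3).norm : ℝ) + t * d (act 1 x) y = _
      rw [a1, FreeGroup.norm_one]; simp
    · intro s hs y
      refine (le y (act s y) s).trans (le_of_eq ?_)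
      change (s.norm : ℝ) + t * d (act s y) (act s y) = 1
      rw [m1]
      obtain ⟨i, rfl | rfl⟩ := hs
      · rw [FreeGroup.norm_of]; simp
      · rw [FreeGroup.norm_inv_eq, FreeGroup.norm_of]; simp
  obtain ⟨γ, hγ⟩ := exists_lt_of_ciInf_lt (lt_of_le_of_lt (main x y) (lt_add_one (ρ x y)))
  exact ⟨γ, hγ.le⟩

end Warp

/-! ### The warped cone of the first metric does not embed -/

/-- Warped distance between points of one orbit: either large, or realised by the word metric of
the finite quotient. -/
lemma Good.warp_orbit {M L : ℕ → Subgroup F3} (h : Good M L) {m : ℕ → ℕ} {a : ℕ → ℝ} (ha : Scale m a)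
    {t : ℝ} (ht : 0 < t) {ρ : Pt M → Pt M → ℝ} (hw : IsWarpedMetric (act M) S3 (um (EL M L) a) t ρ)
    (k : ℕ) (x y : Pt M) : t * a k ≤ ρ x y + 1 ∨ ∃ η : F3, η.norm ≤ ρ x y + 1 ∧ EL M L k (act M η x) y := by
  obtain ⟨η, hη⟩ := warp_lower (act_one M) (act_mul M) (h.d_metric ha) h.d_act ht hw x y
  by_cases hE : EL M L k (act M η x) y
  · right
    refine ⟨η, ?_, hE⟩
    have := mul_nonneg ht.le (um_nonneg (E := EL M L) ha.pos (act M η x) y)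
    linarith
  · left
    rw [← h.d_lt ha, not_lt] at hE
    have := mul_le_mul_of_nonneg_left hE ht.le
    have h2 : (0 : ℝ) ≤ η.norm := Nat.cast_nonneg _
    linarith

/-- The warped cone of the first metric does not embed: at the level `t = 1 / a (n + 2)` a coarse
embedding into a Hilbert space restricts to a Lipschitz map on `F₃/N (n + 1)`, and relative
expansion brings two points of an `M n`-fibre close to each other, although their warped distance
is at least of the order of the girth of `M n`. -/
lemma notCE {M N : ℕ → Subgroup F3} {m : ℕ → ℕ} {K : ℝ} (h : Chain M N m K) {a : ℕ → ℝ}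
    (ha : Scale m a) (dw : {t : ℝ // 0 < t} → Pt M → Pt M → ℝ)
    (hw : ∀ t, IsWarpedMetric (act M) S3 (um (EL M N) a) t.1 (dw t))
    (H : Type) [NormedAddCommGroup H] [InnerProductSpace ℝ H] :
    ¬ FamCEinto dw (fun a b : H => dist a b) := by
  rintro ⟨f, ρm, ρp, hm, hp, hmt, -, hf⟩
  have hN := h.goodN
  obtain ⟨r0, hr0⟩ := Filter.eventually_atTop.1 (hmt.eventually_gt_atTop (Real.sqrt (K * ρp 2 ^ 2)))
  obtain ⟨n, hn⟩ := exists_nat_ge (r0 + 2)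
  -- the level at which the `n + 1`-st quotient is visible
  let t : {t : ℝ // 0 < t} := ⟨1 / a (n + 2), one_div_pos.2 (ha.pos _)⟩
  have := h.nN (n + 1)
  let y : F3 → Pt M := fun γ => act M ((γ : F3 ⧸ N (n + 1)).out) (pt0 M)
  have hout : ∀ γ : F3, γ⁻¹ * (γ : F3 ⧸ N (n + 1)).out ∈ N (n + 1) := fun γ =>
    QuotientGroup.eq.1 (QuotientGroup.out_eq' (γ : F3 ⧸ N (n + 1))).symm
  have hyy : ∀ γ η, EL M N (n + 1) (act M η (y γ)) (y (η * γ)) := by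
    intro γ η
    simp only [y]
    rw [← act_mul, hN.act_rel]
    have e : (η * (γ : F3 ⧸ N (n + 1)).out)⁻¹ * ((η * γ : F3) : F3 ⧸ N (n + 1)).out
        = (γ⁻¹ * (γ : F3 ⧸ N (n + 1)).out)⁻¹ * ((η * γ)⁻¹ * ((η * γ : F3) : F3 ⧸ N (n + 1)).out) := by group
    rw [e]
    exact (N (n + 1)).mul_mem ((N (n + 1)).inv_mem (hout γ)) (hout _)
  obtain ⟨γ, γ', h1, h2, h3⟩ := h.rel n H (fun γ => f t (y γ)) (ρp 2)
    (fun γ γ' hγ => by simp only [y]; rw [QuotientGroup.eq.2 hγ])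
    (fun i γ => by
      rw [← dist_eq_norm, dist_comm]
      refine (hf t _ _).2.trans (hp ?_)
      have h1 := warp_upper (act_one M) (act_mul M) (hw t) (FreeGroup.of i) (y γ) (y (FreeGroup.of i * γ))
      have h2 : um (EL M N) a (act M (FreeGroup.of i) (y γ)) (y (FreeGroup.of i * γ)) ≤ a (n + 2) :=
        (hN.d_le ha _ _ _).2 (hyy _ _)
      have h3 : t.1 * um (EL M N) a (act M (FreeGroup.of i) (y γ)) (y (FreeGroup.of i * γ)) ≤ 1 := by
        refine (mul_le_mul_of_nonneg_left h2 t.2.le).trans (le_of_eq ?_)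
        exact one_div_mul_cancel (ha.pos _).ne'
      rw [FreeGroup.norm_of] at h1
      push_cast at h1
      linarith)
  have hlow : (n : ℝ) ≤ dw t (y γ) (y γ') + 1 := by
    rcases hN.warp_orbit ha t.2 (hw t) (n + 1) (y γ) (y γ') with h4 | ⟨η, h4, h5⟩
    · refine le_trans ?_ h4
      have h6 : t.1 * a (n + 1) = (m (n + 1) : ℝ) + (n + 1 : ℕ) + 2 := by
        rw [← ha.q (n + 1)]
        change 1 / a (n + 2) * (_ * a (n + 2)) = _
        have := (ha.pos (n + 2)).ne'
        field_simp
      rw [h6]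
      push_cast
      have : (0 : ℝ) ≤ m (n + 1) := Nat.cast_nonneg _
      linarith
    · refine le_trans ?_ h4
      have h6 : EL M N (n + 1) (y (η * γ)) (y γ') := hN.tr _ _ _ _ (hN.sy _ _ _ (hyy γ η)) h5
      simp only [y] at h6
      rw [hN.act_rel] at h6
      have h7 : (η * γ)⁻¹ * γ' ∈ N (n + 1) := by
        have e : (η * γ)⁻¹ * γ' = ((η * γ)⁻¹ * ((η * γ : F3) : F3 ⧸ N (n + 1)).out) *
          ((((η * γ : F3) : F3 ⧸ N (n + 1)).out)⁻¹ * (γ' : F3 ⧸ N (n + 1)).out) *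
            (γ'⁻¹ * (γ' : F3 ⧸ N (n + 1)).out)⁻¹ := by group
        rw [e]
        exact (N (n + 1)).mul_mem ((N (n + 1)).mul_mem (hout _) h6) ((N (n + 1)).inv_mem (hout _))
      have h8 : η ∈ M n := by
        have e : η = γ * ((γ⁻¹ * γ') * ((η * γ)⁻¹ * γ')⁻¹) * γ⁻¹ := by group
        rw [e]
        exact (h.nM n).conj_mem _ ((M n).mul_mem h1 ((M n).inv_mem (h.NM n h7))) _
      have h9 : η ≠ 1 := by
        rintro rfl
        rw [one_mul] at h7
        exact h2 h7
      exact_mod_cast h.girth n η h8 h9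
  have h5 := (hf t (y γ) (y γ')).1
  have h6 := hr0 (dw t (y γ) (y γ')) (by linarith)
  have h7 : Real.sqrt (K * ρp 2 ^ 2) < ‖f t (y γ) - f t (y γ')‖ := by
    rw [← dist_eq_norm]; exact h6.trans_le h5
  have h8 := Real.lt_sq_of_sqrt_lt h7
  linarith

end WC

namespace WC

/-! ### Failure of property A -/

/-- Reduced words that end in a given letter. -/
def endsIn (i : Fin 3) (b : Bool) : Set F3 := {γ | γ⁻¹ ∈ FreeGroup.startsWith (i, !b)}

lemma endsIn_mul (i : Fin 3) (b : Bool) (γ : F3) (h : γ ∉ endsIn i (!b)) : γ * FreeGroup.mk [(i, b)] ∈ endsIn i b := by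
  unfold endsIn at h ⊢
  rw [Set.mem_setOf_eq] at h ⊢
  have e : (γ * FreeGroup.mk [(i, b)])⁻¹ = FreeGroup.mk [(i, !b)] * γ⁻¹ := by
    rw [mul_inv_rev, FreeGroup.inv_mk]; rfl
  rw [e]
  exact FreeGroup.startsWith_mk_mul (w := (i, !b)) _ (by simpa using h)

lemma endsIn_inj {γ : F3} {i j : Fin 3} {b c : Bool} (h1 : γ ∈ endsIn i b) (h2 : γ ∈ endsIn j c) : i = j ∧ b = c := by
  by_contra hne
  have : ((i, !b) : Fin 3 × Bool) ≠ (j, !c) := by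
    intro h
    rw [Prod.mk.injEq] at h
    exact hne ⟨h.1, by simpa using h.2⟩
  exact Set.disjoint_left.1 (FreeGroup.startsWith.disjoint_iff_ne.2 this) h1 h2

/-- A finite quotient of the free group that is injective on a large ball carries no almost
invariant family of probability measures supported in small balls: a paradoxical decomposition
argument. -/
lemma no_reiter (L : Subgroup F3) [L.Normal] [Finite (F3 ⧸ L)] [Fintype (F3 ⧸ L)] (r : ℕ)
    (hinj : ∀ γ γ' : F3, γ.norm ≤ r + 1 → γ'.norm ≤ r + 1 → γ⁻¹ * γ' ∈ L → γ = γ')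
    (F : F3 ⧸ L → F3 ⧸ L → ℝ) (h0 : ∀ g h, 0 ≤ F g h) (h1 : ∀ g, ∑ h, F g h = 1)
    (hs : ∀ g h, F g h ≠ 0 → ∃ γ : F3, γ.norm ≤ r ∧ h = γ • g)
    (hv : ∀ i b g, ∑ h, |F ((FreeGroup.mk [(i, b)] : F3) • g) h - F g h| ≤ 1 / 3) : False := by
  classical
  let I : Fin 3 → Bool → F3 ⧸ L → F3 ⧸ L → ℝ := fun i b g h =>
    if ∃ γ ∈ endsIn i b, γ.norm ≤ r + 1 ∧ h = γ • g then 1 else 0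
  have I0 : ∀ i b g h, 0 ≤ I i b g h := fun i b g h => by
    simp only [I]; split_ifs
    exacts [zero_le_one, le_rfl]
  have I1 : ∀ i b g h, I i b g h ≤ 1 := fun i b g h => by
    simp only [I]; split_ifs
    exacts [le_rfl, zero_le_one]
  let ν : Fin 3 → Bool → ℝ := fun i b => ∑ g, ∑ h, F g h * I i b g h
  have step : ∀ i b, (Fintype.card (F3 ⧸ L) : ℝ) ≤ ν i (!b) + ν i b + Fintype.card (F3 ⧸ L) * (1 / 3) := by
    intro i b
    let s : F3 := FreeGroup.mk [(i, b)]
    have hsn : s.norm ≤ 1 := FreeGroup.norm_mk_le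
    have key : ∀ g h, F (s • g) h ≤ F (s • g) h * I i (!b) (s • g) h
        + (F g h * I i b g h + |F (s • g) h - F g h|) := by
      intro g h
      by_cases hF : F (s • g) h = 0
      · rw [hF, zero_mul, zero_add]
        exact add_nonneg (mul_nonneg (h0 _ _) (I0 _ _ _ _)) (abs_nonneg _)
      · obtain ⟨γ, hγ1, hγ2⟩ := hs _ _ hF
        by_cases hW : γ ∈ endsIn i (!b)
        · have : I i (!b) (s • g) h = 1 := if_pos ⟨γ, hW, by omega, hγ2⟩
          rw [this, mul_one]
          linarith [mul_nonneg (h0 g h) (I0 i b g h), abs_nonneg (F (s • g) h - F g h)]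
        · have : I i b g h = 1 := by
            refine if_pos ⟨γ * s, endsIn_mul i b γ hW, ?_, by rw [hγ2, mul_smul]⟩
            have := FreeGroup.norm_mul_le γ s
            omega
          rw [this, mul_one]
          linarith [mul_nonneg (h0 (s • g) h) (I0 i (!b) (s • g) h), le_abs_self (F (s • g) h - F g h)]
    have tot := Finset.sum_le_sum fun g (_ : g ∈ Finset.univ) =>
      Finset.sum_le_sum fun h (_ : h ∈ Finset.univ) => key g h
    simp only [Finset.sum_add_distrib, h1] at tot
    have e1 : ∑ g, ∑ h, F (s • g) h * I i (!b) (s • g) h = ν i (!b) :=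
      Equiv.sum_comp (MulAction.toPerm s) (fun g => ∑ h, F g h * I i (!b) g h)
    have e2 : ∑ g : F3 ⧸ L, ∑ h, |F (s • g) h - F g h| ≤ Fintype.card (F3 ⧸ L) * (1 / 3) := by
      refine (Finset.sum_le_sum fun g _ => hv i b g).trans (le_of_eq ?_)
      rw [Finset.sum_const, nsmul_eq_mul, Finset.card_univ]
    rw [e1] at tot
    simp only [Finset.sum_const, Finset.card_univ, nsmul_eq_mul, mul_one] at tot
    linarith
  have disj : ν 0 false + ν 0 true + (ν 1 false + ν 1 true) ≤ Fintype.card (F3 ⧸ L) := by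
    simp only [ν, ← Finset.sum_add_distrib, ← mul_add]
    have : ∀ g h, I 0 false g h + I 0 true g h + (I 1 false g h + I 1 true g h) ≤ 1 := by
      intro g h
      have two : ∀ i b j c, (i ≠ j ∨ b ≠ c) → I i b g h = 1 → I j c g h = 0 := by
        intro i b j c hne h2
        simp only [I] at h2 ⊢
        rw [if_neg]
        rintro ⟨γ', hγ1, hγ2, hγ3⟩
        split_ifs at h2 with h3
        · obtain ⟨γ, h4, h5, h6⟩ := h3
          have e : γ = γ' := by
            refine hinj γ γ' h5 hγ2 ?_
            rw [h6] at hγ3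
            obtain ⟨δ, rfl⟩ := QuotientGroup.mk_surjective g
            have := QuotientGroup.eq.1 (show ((γ * δ : F3) : F3 ⧸ L) = (γ' * δ : F3) from hγ3)
            have e3 : γ⁻¹ * γ' = δ * ((γ * δ)⁻¹ * (γ' * δ)) * δ⁻¹ := by group
            rw [e3]
            exact Subgroup.Normal.conj_mem inferInstance _ this _
          subst e
          have := endsIn_inj h4 hγ1
          tauto
        · exact zero_ne_one h2
      have dich : ∀ i b, I i b g h = 0 ∨ I i b g h = 1 := fun i b => by
        simp only [I]; split_ifs <;> simp
      rcases dich 0 false with h2 | h2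
      · rcases dich 0 true with h3 | h3
        · rcases dich 1 false with h4 | h4
          · have := I1 1 true g h; linarith
          · have := two _ _ 1 true (by simp) h4; linarith
        · have h4 := two _ _ 1 true (by simp) h3
          have h5 := two _ _ 1 false (by simp) h3
          linarith
      · have h3 := two _ _ 0 true (by simp) h2
        have h4 := two _ _ 1 true (by simp) h2
        have h5 := two _ _ 1 false (by simp) h2
        linarith
    refine (Finset.sum_le_sum fun g _ => Finset.sum_le_sum fun h _ =>
      mul_le_of_le_one_right (h0 g h) (this g h)).trans (le_of_eq ?_)
    simp [h1]
  have s0 := step 0 true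
  have s1 := step 1 true
  simp only [Bool.not_true] at s0 s1
  have hpos : (0 : ℝ) < Fintype.card (F3 ⧸ L) := by exact_mod_cast Fintype.card_pos
  linarith

/-- Neither warped cone has property A: at the level `t = 1 / a (n + 2)` the probability measures
are pushed forward to the quotient `F₃/L (n + 1)`, whose girth exceeds the radius of their
supports. -/
lemma notA {M L : ℕ → Subgroup F3} (h : Good M L) {m : ℕ → ℕ} {a : ℕ → ℝ} (ha : Scale m a)
    (dw : {t : ℝ // 0 < t} → Pt M → Pt M → ℝ)
    (hw : ∀ t, IsWarpedMetric (act M) S3 (um (EL M L) a) t.1 (dw t)) : ¬ FamPropA' dw := by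
  classical
  intro hA
  obtain ⟨Sb, hSb⟩ := hA 3 (by norm_num)
  obtain ⟨n, hn⟩ : ∃ n, n = 2 * Sb + 5 := ⟨_, rfl⟩
  -- at this level the quotient by `L (n + 1)` is visible, at scale `1`
  let t : {t : ℝ // 0 < t} := ⟨1 / a (n + 2), one_div_pos.2 (ha.pos _)⟩
  obtain ⟨f, f0, f1, f2, f3⟩ := hSb t
  have := h.nL (n + 1)
  have hfM := h.fM (n + 1)
  have hle := h.ML (n + 1)
  have hfin : Finite (F3 ⧸ L (n + 1)) := by
    have h1 : (M (n + 1)).FiniteIndex := Subgroup.finiteIndex_iff_finite_quotient.2 hfM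
    have h2 : (L (n + 1)).FiniteIndex := Subgroup.finiteIndex_of_le hle
    exact Subgroup.finiteIndex_iff_finite_quotient.1 h2
  have : Fintype (F3 ⧸ L (n + 1)) := Fintype.ofFinite _
  choose r hr using fun x : Pt M => exists_rep x (n + 1)
  let π : Pt M → F3 ⧸ L (n + 1) := fun x => (r x : F3 ⧸ L (n + 1))
  let y : F3 ⧸ L (n + 1) → Pt M := fun g => act M g.out (pt0 M)
  have hy : ∀ g, (y g).1 (n + 1) = (g.out : F3 ⧸ M (n + 1)) := by
    intro g
    have := Good.act_coord (M := M) (k := n + 1) (x := pt0 M) (γ := 1) g.out rfl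
    rw [mul_one] at this
    exact this
  have hyE : ∀ (η : F3) g x, EL M L (n + 1) (act M η (y g)) x ↔ π x = η • g := by
    intro η g x
    rw [h.EL_iff (Good.act_coord η (hy g)) (hr x)]
    have e : η • g = ((η * g.out : F3) : F3 ⧸ L (n + 1)) := by
      conv_lhs => rw [← QuotientGroup.out_eq' g]
      rfl
    rw [e, eq_comm]
    exact QuotientGroup.eq.symm
  have hπy : ∀ g, π (y g) = g := by
    intro g
    have := (hyE 1 g (y g)).1 (by rw [act_one]; exact h.rf _ _)
    rwa [one_smul] at this
  let F : F3 ⧸ L (n + 1) → F3 ⧸ L (n + 1) → ℝ := fun g k => ∑' x, if π x = k then f (y g) x else 0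
  have sm : ∀ g k, Summable fun x => if π x = k then f (y g) x else 0 := fun g k => by
    refine Summable.of_nonneg_of_le (fun x => ?_) (fun x => ?_) (f1 (y g)).summable
    · split_ifs
      exacts [f0 _ _, le_rfl]
    · split_ifs
      exacts [le_rfl, f0 _ _]
  refine no_reiter (L (n + 1)) (Sb + 1) ?_ F ?_ ?_ ?_ ?_
  · intro γ γ' h1 h2 h3
    by_contra hne
    have h4 := h.girthL n _ h3 (fun h5 => hne (inv_mul_eq_one.1 h5))
    have h5 := FreeGroup.norm_mul_le γ⁻¹ γ'
    rw [FreeGroup.norm_inv_eq] at h5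
    omega
  · intro g k
    refine tsum_nonneg fun x => ?_
    split_ifs
    exacts [f0 _ _, le_rfl]
  · intro g
    simp only [F]
    rw [← Summable.tsum_finsetSum fun k _ => sm g k]
    simp only [Finset.sum_ite_eq, Finset.mem_univ, if_true]
    exact (f1 (y g)).tsum_eq
  · intro g k hF
    have : ∃ x, (if π x = k then f (y g) x else 0) ≠ 0 := by
      by_contra hc
      push Not at hc
      refine hF ?_
      simp only [F]
      simp only [hc, tsum_zero]
    obtain ⟨x, hx⟩ := this
    split_ifs at hx with hk
    · have h1 := f2 _ _ hx
      rcases h.warp_orbit ha t.2 (hw t) (n + 1) (y g) x with h4 | ⟨η, h4, h5⟩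
      · exfalso
        have h6 : t.1 * a (n + 1) = (m (n + 1) : ℝ) + (n + 1 : ℕ) + 2 := by
          rw [← ha.q (n + 1)]
          change 1 / a (n + 2) * (_ * a (n + 2)) = _
          have := (ha.pos (n + 2)).ne'
          field_simp
        rw [h6, hn] at h4
        push_cast at h4
        have : (0 : ℝ) ≤ m (n + 1) := Nat.cast_nonneg _
        rw [hn] at this
        have : (0 : ℝ) ≤ Sb := Nat.cast_nonneg _
        linarith
      · refine ⟨η, ?_, ?_⟩
        · have : (η.norm : ℝ) ≤ Sb + 1 := h4.trans (by linarith)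
          exact_mod_cast this
        · rw [← hk]
          exact (hyE η g x).1 h5
    · exact absurd rfl hx
  · intro i b g
    have hsn : (FreeGroup.mk [(i, b)] : F3).norm ≤ 1 := FreeGroup.norm_mk_le
    generalize hs : (FreeGroup.mk [(i, b)] : F3) = s at hsn ⊢
    have hd : dw t (y (s • g)) (y g) ≤ (3 : ℕ) := by
      have h1 := warp_upper (act_one M) (act_mul M) (hw t) s (y g) (y (s • g))
      rw [(hw t).1.2.2.1]
      have h2 : um (EL M L) a (act M s (y g)) (y (s • g)) ≤ a (n + 2) :=
        (h.d_le ha _ _ _).2 ((hyE s g _).2 (hπy _))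
      have h3 : t.1 * um (EL M L) a (act M s (y g)) (y (s • g)) ≤ 1 := by
        refine (mul_le_mul_of_nonneg_left h2 t.2.le).trans (le_of_eq ?_)
        exact one_div_mul_cancel (ha.pos _).ne'
      have h4 : (s.norm : ℝ) ≤ 1 := by exact_mod_cast hsn
      push_cast
      linarith
    have hf3 := f3 _ _ hd
    have sd : Summable fun x => |f (y (s • g)) x - f (y g) x| :=
      ((f1 _).summable.sub (f1 _).summable).abs
    have sdk : ∀ k, Summable fun x => if π x = k then |f (y (s • g)) x - f (y g) x| else 0 := fun k => by
      refine Summable.of_nonneg_of_le (fun x => ?_) (fun x => ?_) sd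
      · split_ifs
        exacts [abs_nonneg _, le_rfl]
      · split_ifs
        exacts [le_rfl, abs_nonneg _]
    calc ∑ k, |F (s • g) k - F g k|
        ≤ ∑ k, ∑' x, (if π x = k then |f (y (s • g)) x - f (y g) x| else 0) := by
          refine Finset.sum_le_sum fun k _ => ?_
          simp only [F]
          rw [← (sm _ k).tsum_sub (sm _ k), ← Real.norm_eq_abs]
          refine (norm_tsum_le_tsum_norm ((sm _ k).sub (sm _ k)).norm).trans (le_of_eq ?_)
          refine tsum_congr fun x => ?_
          split_ifs
          · rfl
          · simp
      _ = ∑' x, |f (y (s • g)) x - f (y g) x| := by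
          rw [← Summable.tsum_finsetSum fun k _ => sdk k]
          simp only [Finset.sum_ite_eq, Finset.mem_univ, if_true]
      _ ≤ 1 / 3 := by exact_mod_cast hf3

end WC

namespace WC

/-! ### Embedding Hamming cubes into `ℓ²` -/

/-- Every finite-dimensional Euclidean space embeds isometrically into `ℓ²`. -/
lemma ell2_emb (ι : Type) [Fintype ι] : ∃ E : (ι → ℝ) → ell2, ∀ u v, dist (E u) (E v) ^ 2 = ∑ i, (u i - v i) ^ 2 := by
  classical
  let e := Fintype.equivFin ι
  let g : (ι → ℝ) → ℕ → ℝ := fun u k => if h : k < Fintype.card ι then u (e.symm ⟨k, h⟩) else 0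
  refine ⟨fun u => ∑ k ∈ Finset.range (Fintype.card ι), lp.single (E := fun _ : ℕ => ℝ) 2 k (g u k), fun u v => ?_⟩
  rw [dist_eq_norm, ← Finset.sum_sub_distrib]
  have h1 := lp.norm_sum_single (E := fun _ : ℕ => ℝ) (p := 2) (by norm_num) (fun k => g u k - g v k) (Finset.range (Fintype.card ι))
  simp only [ENNReal.toReal_ofNat, Real.rpow_ofNat] at h1
  have h2 : ∀ k, lp.single (E := fun _ : ℕ => ℝ) 2 k (g u k) - lp.single (E := fun _ : ℕ => ℝ) 2 k (g v k)
      = lp.single (E := fun _ : ℕ => ℝ) 2 k (g u k - g v k) := fun k => (lp.single_sub 2 k _ _).symm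
  simp only [h2]
  rw [h1, Finset.sum_range, ← Equiv.sum_comp e]
  refine Finset.sum_congr rfl fun i _ => ?_
  have hi : ∀ u : ι → ℝ, g u (e i) = u i := fun u => by simp [g]
  rw [hi, hi, Real.norm_eq_abs, sq_abs]

/-- The normalised exponential kernel on the Hamming cube, realised by product vectors. -/
lemma cube_map (m : ℕ) (κ : ℝ) (h0 : -1 ≤ κ) (h1 : κ ≤ 1) : ∃ u : (Fin m → ZMod 2) → (Fin m → Bool) → ℝ,
    ∀ v w, ∑ A, (u v A - u w A) ^ 2 = 2 * (1 - κ ^ hammingDist v w) := by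
  classical
  let c := Real.sqrt ((1 + κ) / 2)
  let s := Real.sqrt ((1 - κ) / 2)
  have hc : c * c = (1 + κ) / 2 := Real.mul_self_sqrt (by linarith)
  have hs : s * s = (1 - κ) / 2 := Real.mul_self_sqrt (by linarith)
  let f : ZMod 2 → Bool → ℝ := fun x b => if b then (if x = 0 then s else -s) else c
  have hf : ∀ x y, ∑ b, f x b * f y b = if x = y then 1 else κ := by
    intro x y
    have h01 : ∀ x : ZMod 2, x = 0 ∨ x = 1 := by decide
    rw [Fintype.sum_bool]
    simp only [f, if_true, Bool.false_eq_true, if_false, hc]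
    rcases h01 x with rfl | rfl <;> rcases h01 y with rfl | rfl <;> simp [hs] <;> ring
  let u : (Fin m → ZMod 2) → (Fin m → Bool) → ℝ := fun v A => ∏ i, f (v i) (A i)
  have hu : ∀ v w, ∑ A, u v A * u w A = κ ^ hammingDist v w := by
    intro v w
    simp only [u, ← Finset.prod_mul_distrib]
    have := Finset.prod_univ_sum (fun _ : Fin m => (Finset.univ : Finset Bool)) (fun i b => f (v i) b * f (w i) b)
    rw [Fintype.piFinset_univ] at this
    rw [← this]
    simp only [hf]
    rw [Finset.prod_ite]
    simp [hammingDist]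
  refine ⟨u, fun v w => ?_⟩
  have : ∀ A, (u v A - u w A) ^ 2 = u v A * u v A + u w A * u w A - 2 * (u v A * u w A) := fun A => by ring
  simp only [this, Finset.sum_sub_distrib, Finset.sum_add_distrib, ← Finset.mul_sum, hu, hammingDist_self]
  ring

/-- The Hamming distance is a squared Euclidean distance. -/
lemma cube_triv (m : ℕ) : ∃ u : (Fin m → ZMod 2) → Fin m → ℝ,
    ∀ v w, ∑ i, (u v i - u w i) ^ 2 = hammingDist v w := by
  classical
  refine ⟨fun v i => if v i = 0 then 0 else 1, fun v w => ?_⟩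
  rw [hammingDist, Finset.card_filter, Nat.cast_sum]
  refine Finset.sum_congr rfl fun i _ => ?_
  have h01 : ∀ x : ZMod 2, x = 0 ∨ x = 1 := by decide
  rcases h01 (v i) with h | h <;> rcases h01 (w i) with h' | h' <;> simp [h, h']

/-- Both kernels together, in `ℓ²`. -/
lemma cube_ell2 (m m' : ℕ) (T : ℝ) (hT : 1 ≤ T) :
    ∃ E : (Fin m → ZMod 2) → (Fin m' → ZMod 2) → ell2, ∀ v w v' w', dist (E v v') (E w w') ^ 2 =
      2 * T * (1 - (1 - 1 / T) ^ hammingDist v w) + hammingDist v' w' := by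
  have hT0 : 0 < T := by linarith
  have h1 : 1 / T ≤ 1 := by rw [div_le_one hT0]; exact hT
  have h2 : 0 < 1 / T := one_div_pos.2 hT0
  obtain ⟨u, hu⟩ := cube_map m (1 - 1 / T) (by linarith) (by linarith)
  obtain ⟨u', hu'⟩ := cube_triv m'
  obtain ⟨E, hE⟩ := ell2_emb ((Fin m → Bool) ⊕ Fin m')
  refine ⟨fun v v' => E (Sum.elim (fun A => Real.sqrt T * u v A) (u' v')), fun v w v' w' => ?_⟩
  rw [hE, Fintype.sum_sum_type]
  simp only [Sum.elim_inl, Sum.elim_inr, hu', ← mul_sub, mul_pow, Real.sq_sqrt hT0.le, ← Finset.mul_sum, hu]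
  ring

/-- A family of maps whose squared distances are at most linear, and that separates far points
uniformly, is a coarse embedding. -/
lemma famCE_of {ι Y E : Type} (ρ : ι → Y → Y → ℝ) (dE : E → E → ℝ) (hdE : ∀ a b, 0 ≤ dE a b) (f : ι → Y → E)
    (hup : ∀ i x y, dE (f i x) (f i y) ^ 2 ≤ 3 * (ρ i x y + 1))
    (hlo : ∀ K : ℕ, ∃ R : ℝ, ∀ i x y, dE (f i x) (f i y) ≤ K → ρ i x y ≤ R) : FamCEinto ρ dE := by
  classical
  choose g hg using hlo
  let G : ℕ → ℝ := fun K => K + ∑ i ∈ Finset.range (K + 1), |g i|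
  have hG1 : ∀ K, g K ≤ G K := fun K => by
    have h1 : |g K| ≤ ∑ i ∈ Finset.range (K + 1), |g i| :=
      Finset.single_le_sum (f := fun i => |g i|) (fun i _ => abs_nonneg _) (Finset.self_mem_range_succ K)
    have h2 := le_abs_self (g K)
    have h3 : (0 : ℝ) ≤ K := Nat.cast_nonneg K
    simp only [G]; linarith
  have hGm : Monotone G := monotone_nat_of_le_succ fun K => by
    simp only [G]
    rw [Finset.sum_range_succ _ (K + 1)]
    push_cast
    linarith [abs_nonneg (g (K + 1))]
  have hG2 : ∀ K : ℕ, (K : ℝ) ≤ G K := fun K => by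
    simp only [G]
    linarith [Finset.sum_nonneg (fun i (_ : i ∈ Finset.range (K + 1)) => abs_nonneg (g i))]
  have hex : ∀ r : ℝ, ∃ K : ℕ, r ≤ G K := fun r => by
    obtain ⟨K, hK⟩ := exists_nat_ge r
    exact ⟨K, hK.trans (hG2 K)⟩
  refine ⟨f, fun r => (Nat.find (hex r) : ℝ) - 1, fun r => Real.sqrt (3 * (r + 1)), ?_, ?_, ?_, ?_, ?_⟩
  · intro r r' hr
    have : Nat.find (hex r) ≤ Nat.find (hex r') := Nat.find_min' _ (hr.trans (Nat.find_spec (hex r')))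
    have : (Nat.find (hex r) : ℝ) ≤ Nat.find (hex r') := by exact_mod_cast this
    dsimp only; linarith
  · intro r r' hr
    exact Real.sqrt_le_sqrt (by linarith)
  · refine Filter.tendsto_atTop.2 fun b => ?_
    obtain ⟨K, hK⟩ := exists_nat_ge (b + 1)
    filter_upwards [Filter.eventually_gt_atTop (G K)] with r hr
    have : K ≤ Nat.find (hex r) := by
      by_contra hc
      have h1 := Nat.find_spec (hex r)
      have h2 := hGm (not_le.1 hc).le
      linarith
    have : (K : ℝ) ≤ Nat.find (hex r) := by exact_mod_cast this
    linarith
  · refine Real.tendsto_sqrt_atTop.comp ?_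
    refine Filter.Tendsto.const_mul_atTop (by norm_num) ?_
    exact Filter.tendsto_atTop_add_const_right _ _ Filter.tendsto_id
  · intro i x y
    constructor
    · have h1 := hg ⌈dE (f i x) (f i y)⌉₊ i x y (Nat.le_ceil _)
      have h2 : Nat.find (hex (ρ i x y)) ≤ ⌈dE (f i x) (f i y)⌉₊ := Nat.find_min' _ (h1.trans (hG1 _))
      have h3 : (Nat.find (hex (ρ i x y)) : ℝ) ≤ ⌈dE (f i x) (f i y)⌉₊ := by exact_mod_cast h2
      have h4 := Nat.ceil_lt_add_one (hdE (f i x) (f i y))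
      linarith
    · exact Real.le_sqrt_of_sq_le (hup i x y)

/-- The truncated-linear kernel is at most linear. -/
lemma kern_upper (T : ℝ) (hT : 1 ≤ T) (n : ℕ) : 2 * T * (1 - (1 - 1 / T) ^ n) ≤ 2 * n ∧
    2 * T * (1 - (1 - 1 / T) ^ n) ≤ 2 * T ∧ 0 ≤ 2 * T * (1 - (1 - 1 / T) ^ n) := by
  have hT0 : 0 < T := by linarith
  have h1 : 1 / T ≤ 1 := by rw [div_le_one hT0]; exact hT
  have h2 : 0 < 1 / T := one_div_pos.2 hT0
  have h3 : 0 ≤ (1 - 1 / T) ^ n := pow_nonneg (by linarith) n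
  have h4 : (1 - 1 / T) ^ n ≤ 1 := pow_le_one₀ (by linarith) (by linarith)
  have h5 := one_add_mul_le_pow (a := -(1 / T)) (by linarith) n
  rw [← sub_eq_add_neg] at h5
  have h6 : T * (1 / T) = 1 := mul_one_div_cancel hT0.ne'
  refine ⟨?_, ?_, ?_⟩
  · have : 1 - (1 - 1 / T) ^ n ≤ n * (1 / T) := by linarith
    calc 2 * T * (1 - (1 - 1 / T) ^ n) ≤ 2 * T * (n * (1 / T)) := mul_le_mul_of_nonneg_left this (by linarith)
      _ = 2 * n * (T * (1 / T)) := by ring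
      _ = 2 * n := by rw [h6, mul_one]
  · nlinarith
  · exact mul_nonneg (by linarith) (by linarith)

/-- A small value of the truncated-linear kernel bounds the argument or the truncation level. -/
lemma kern_lower (T K : ℝ) (hT : 1 ≤ T) (hK : K < T) (n : ℕ) (h : 2 * T * (1 - (1 - 1 / T) ^ n) ≤ K) :
    (n : ℝ) ≤ K := by
  have hT0 : 0 < T := by linarith
  have h1 : 1 / T ≤ 1 := by rw [div_le_one hT0]; exact hT
  have h2 : 0 < 1 / T := one_div_pos.2 hT0
  have h6 : T * (1 / T) = 1 := mul_one_div_cancel hT0.ne'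
  have h3 : 0 ≤ (1 - 1 / T) ^ n := pow_nonneg (by linarith) n
  have h5 := one_add_mul_le_pow (a := 1 / T) (by linarith) n
  have h7 : (1 - 1 / T) ^ n * (1 + 1 / T) ^ n ≤ 1 := by
    rw [← mul_pow]
    exact pow_le_one₀ (mul_nonneg (by linarith) (by linarith)) (by nlinarith)
  have h8 : (1 - 1 / T) ^ n * (1 + n * (1 / T)) ≤ 1 := (mul_le_mul_of_nonneg_left h5 h3).trans h7
  set p := (1 - 1 / T) ^ n
  have hn : (0 : ℝ) ≤ n := Nat.cast_nonneg n
  have h9 : p * (T + n) ≤ T := by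
    have : p * (T + n) = T * (p * (1 + n * (1 / T))) := by
      have : T * (p * (1 + n * (1 / T))) = p * (T + n * (T * (1 / T))) := by ring
      rw [this, h6, mul_one]
    rw [this]
    nlinarith
  -- `2 T (1 - p) ≤ K < T` and `p (T + n) ≤ T` give `2 n T ≤ K (T + n)`, hence first `n < T`
  have h10 : 2 * T * n ≤ K * (T + n) := by nlinarith
  have h11 : (n : ℝ) ≤ T := by nlinarith
  have hK0 : 0 ≤ K := le_trans (mul_nonneg (by linarith) (by nlinarith)) h
  have h12 : K * (T + n) ≤ K * (2 * T) := mul_le_mul_of_nonneg_left (by linarith) hK0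
  nlinarith

end WC

namespace WC

/-! ### The warped cone of the second metric embeds -/

/-- Finiteness of the quotients: short representatives. -/
lemma Good.diam {M L : ℕ → Subgroup F3} (h : Good M L) (k : ℕ) :
    ∃ D : ℕ, ∀ x y : Pt M, ∃ η : F3, η.norm ≤ D ∧ EL M L k (act M η x) y := by
  have := h.fM k
  have := Fintype.ofFinite (F3 ⧸ M k)
  refine ⟨∑ c : F3 ⧸ M k, c.out.norm, fun x y => ?_⟩
  obtain ⟨γ, hγ⟩ := exists_rep x k
  obtain ⟨δ, hδ⟩ := exists_rep y k
  refine ⟨((δ * γ⁻¹ : F3) : F3 ⧸ M k).out, ?_, ?_⟩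
  · exact Finset.single_le_sum (f := fun c : F3 ⧸ M k => c.out.norm) (fun _ _ => Nat.zero_le _) (Finset.mem_univ _)
  · rw [h.EL_iff (Good.act_coord _ hγ) hδ]
    generalize hη : ((δ * γ⁻¹ : F3) : F3 ⧸ M k).out = η
    have h1 : η⁻¹ * (δ * γ⁻¹) ∈ L k := h.ML k (QuotientGroup.eq.1 (by rw [← hη, QuotientGroup.out_eq']))
    have e : (η * γ)⁻¹ * δ = γ⁻¹ * (η⁻¹ * (δ * γ⁻¹)) * γ⁻¹⁻¹ := by group
    rw [e]
    exact (h.nL k).conj_mem _ h1 _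

/-- One level of the warped cone of the second metric, mapped to `ℓ²` by combining the cube
embeddings of the two quotients visible at that level. -/
lemma level_emb {M N : ℕ → Subgroup F3} {m : ℕ → ℕ} {K : ℝ} (h : Chain M N m K) {a : ℕ → ℝ}
    (ha : Scale m a) (D : ℕ → ℕ) (hD : ∀ k, ∀ x y : Pt M, ∃ η : F3, η.norm ≤ D k ∧ EL M M k (act M η x) y)
    (t : ℝ) (ht : 0 < t) (ρ : Pt M → Pt M → ℝ) (hw : IsWarpedMetric (act M) S3 (um (EL M M) a) t ρ) :
    ∃ f : Pt M → ell2, (∀ x y, dist (f x) (f y) ^ 2 ≤ 3 * (ρ x y + 1)) ∧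
      ∀ (Q : ℕ) (x y), dist (f x) (f y) ^ 2 ≤ Q →
        ρ x y ≤ Q + ∑ n ∈ Finset.range (Q + 2), (D n : ℝ) + Q + 1 := by
  classical
  have hM := h.goodM
  have hex : ∃ n, t * a (n + 1) ≤ 1 := by
    obtain ⟨k, hk⟩ := ha.small (1 / t) (one_div_pos.2 ht)
    refine ⟨k, ?_⟩
    have h1 : a (k + 1) < 1 / t := (ha.anti (Nat.lt_succ_self k)).trans hk
    have h2 := mul_le_mul_of_nonneg_left h1.le ht.le
    rwa [mul_one_div_cancel ht.ne'] at h2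
  have up := fun (γ : F3) x y => warp_upper (act_one M) (act_mul M) hw γ x y
  have ρ0 : ∀ x y, 0 ≤ ρ x y := fun x y => by
    by_cases hxy : x = y
    · rw [hxy, hw.1.1]
    · exact (hw.1.2.1 x y hxy).le
  have up' : ∀ (η : F3) k x y, EL M M k (act M η x) y → ρ x y ≤ η.norm + t * a (k + 1) := fun η k x y hE => by
    refine (up η x y).trans ?_
    have := mul_le_mul_of_nonneg_left ((hM.d_le ha _ _ _).2 hE) ht.le
    linarith
  have sumD0 : ∀ Q : ℕ, 0 ≤ ∑ n ∈ Finset.range (Q + 2), (D n : ℝ) := fun Q =>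
    Finset.sum_nonneg fun _ _ => Nat.cast_nonneg _
  have sumD : ∀ Q k : ℕ, k < Q + 2 → (D k : ℝ) ≤ ∑ n ∈ Finset.range (Q + 2), (D n : ℝ) := fun Q k hk =>
    Finset.single_le_sum (f := fun n => (D n : ℝ)) (fun _ _ => Nat.cast_nonneg _) (Finset.mem_range.2 hk)
  -- for `n = j + 1` one has `t * a (j + 2) ≤ 1 < t * a (j + 1)`: only the quotients by `M j` and
  -- `M (j + 1)` are visible at this level
  obtain ⟨n, hn⟩ : ∃ n, n = Nat.find hex := ⟨_, rfl⟩
  have hn1 : t * a (n + 1) ≤ 1 := hn ▸ Nat.find_spec hex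
  cases n with
  | zero =>
    refine ⟨fun _ => 0, fun x y => ?_, fun Q x y _ => ?_⟩
    · rw [dist_self]; have := ρ0 x y; norm_num; linarith
    · have h1 := up' 1 0 x y (hM.E_zero _ _)
      rw [FreeGroup.norm_one] at h1
      have := sumD0 Q
      have : (0 : ℝ) ≤ Q := Nat.cast_nonneg Q
      push_cast at h1
      linarith
  | succ j =>
    have hT : 1 < t * a (j + 1) := not_le.1 (Nat.find_min hex (hn ▸ Nat.lt_succ_self j))
    obtain ⟨T, hTd⟩ : ∃ T, T = t * a (j + 1) := ⟨_, rfl⟩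
    rw [← hTd] at hT
    have hTj : t * a j = ((m j : ℝ) + j + 2) * T := by rw [← ha.q j, hTd]; ring
    obtain ⟨C, C1, C2, C3⟩ := h.cube (j + 1)
    obtain ⟨B, B1, B2, B3⟩ := h.cube j
    obtain ⟨E, hE⟩ := cube_ell2 (m (j + 1)) (m j) T hT.le
    choose r hr using fun x : Pt M => exists_rep x (j + 1)
    have hrj : ∀ x : Pt M, x.1 j = (r x : F3 ⧸ M j) := fun x => by
      obtain ⟨γ, hγ⟩ := x.2 (j + 1)
      rw [hγ j (Nat.le_succ j), QuotientGroup.eq]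
      refine hM.anti j (j + 1) (Nat.le_succ j) (QuotientGroup.eq.1 ?_)
      rw [← hγ (j + 1) le_rfl, hr x]
    refine ⟨fun x => E (C (r x)) (B (r x)), fun x y => ?_, fun Q x y hQ => ?_⟩
    · rw [hE]
      obtain ⟨k1, k2, k3⟩ := kern_upper T hT.le (hammingDist (C (r x)) (C (r y)))
      obtain ⟨η, hη⟩ := warp_lower (act_one M) (act_mul M) (hM.d_metric ha) hM.d_act ht hw x y
      have hη0 : (0 : ℝ) ≤ η.norm := Nat.cast_nonneg _
      have hd0 : 0 ≤ t * um (EL M M) a (act M η x) y := mul_nonneg ht.le (um_nonneg ha.pos _ _)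
      have hB : EL M M j (act M η x) y → (hammingDist (B (r x)) (B (r y)) : ℝ) ≤ η.norm := by
        intro hEj
        rw [hM.EL_iff (Good.act_coord η (hrj x)) (hrj y)] at hEj
        have := B2 η (r x)
        rw [B1 _ _ hEj, hammingDist_comm] at this
        exact_mod_cast this
      -- the jump after `η` may stay in the class of `M (j + 1)`, stay in the class of `M j` at a cost
      -- of `T`, or leave it at a cost `t * a j` that exceeds the diameter of the cube of `M j`
      by_cases e1 : EL M M (j + 1) (act M η x) y
      · have h1 := hB (hM.mono j (j + 1) _ _ (Nat.le_succ j) e1)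
        have h2 : (hammingDist (C (r x)) (C (r y)) : ℝ) ≤ η.norm := by
          rw [hM.EL_iff (Good.act_coord η (hr x)) (hr y)] at e1
          have := C2 η (r x)
          rw [C1 _ _ e1, hammingDist_comm] at this
          exact_mod_cast this
        linarith
      · have e1' := e1
        rw [← hM.d_lt ha, not_lt] at e1'
        have e2 := mul_le_mul_of_nonneg_left e1' ht.le
        rw [← hTd] at e2
        by_cases e3 : EL M M j (act M η x) y
        · have h1 := hB e3
          linarith
        · rw [← hM.d_lt ha, not_lt] at e3
          have e4 := mul_le_mul_of_nonneg_left e3 ht.le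
          rw [hTj] at e4
          have h1 : (hammingDist (B (r x)) (B (r y)) : ℝ) ≤ m j := by
            have := hammingDist_le_card_fintype (x := B (r x)) (y := B (r y))
            rw [Fintype.card_fin] at this
            exact_mod_cast this
          have h2 : (0 : ℝ) ≤ m j := Nat.cast_nonneg _
          have h3 : (0 : ℝ) ≤ j := Nat.cast_nonneg _
          nlinarith
    · rw [hE] at hQ
      obtain ⟨k1, k2, k3⟩ := kern_upper T hT.le (hammingDist (C (r x)) (C (r y)))
      have hBQ : (hammingDist (B (r x)) (B (r y)) : ℝ) ≤ Q := by linarith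
      have hB0 : (0 : ℝ) ≤ hammingDist (B (r x)) (B (r y)) := Nat.cast_nonneg _
      have hBQ' : hammingDist (B (r x)) (B (r y)) ≤ Q := by exact_mod_cast hBQ
      have hQ0 : (0 : ℝ) ≤ Q := Nat.cast_nonneg Q
      have s0 := sumD0 Q
      rcases le_or_gt T Q with hTQ | hTQ
      · -- the level is close to one at which only `M j` matters
        have : ∃ η : F3, (η.norm : ℝ) ≤ Q + ∑ n ∈ Finset.range (Q + 2), (D n : ℝ) ∧ EL M M j (act M η x) y := by
          rcases Nat.lt_or_ge Q j with hj | hj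
          · obtain ⟨η, h1, h2⟩ := B3 (r x) (r y) (hBQ'.trans_lt hj)
            refine ⟨η, ?_, ?_⟩
            · have : (η.norm : ℝ) ≤ Q := by exact_mod_cast h1.trans hBQ'
              linarith
            · rwa [hM.EL_iff (Good.act_coord η (hrj x)) (hrj y)]
          · obtain ⟨η, h1, h2⟩ := hD j x y
            refine ⟨η, ?_, h2⟩
            have h3 : (η.norm : ℝ) ≤ D j := by exact_mod_cast h1
            have := sumD Q j (by omega)
            linarith
        obtain ⟨η, h1, h2⟩ := this
        have := up' η j x y h2
        rw [← hTd] at this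
        linarith
      · have hC : hammingDist (C (r x)) (C (r y)) ≤ Q := by
          exact_mod_cast kern_lower T Q hT.le hTQ _ (by linarith)
        have : ∃ η : F3, (η.norm : ℝ) ≤ Q + ∑ n ∈ Finset.range (Q + 2), (D n : ℝ) ∧ EL M M (j + 1) (act M η x) y := by
          rcases Nat.lt_or_ge Q (j + 1) with hj | hj
          · obtain ⟨η, h1, h2⟩ := C3 (r x) (r y) (hC.trans_lt hj)
            refine ⟨η, ?_, ?_⟩
            · have : (η.norm : ℝ) ≤ Q := by exact_mod_cast h1.trans hC
              linarith
            · rwa [hM.EL_iff (Good.act_coord η (hr x)) (hr y)]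
          · obtain ⟨η, h1, h2⟩ := hD (j + 1) x y
            refine ⟨η, ?_, h2⟩
            have h3 : (η.norm : ℝ) ≤ D (j + 1) := by exact_mod_cast h1
            have := sumD Q (j + 1) (by omega)
            linarith
        obtain ⟨η, h1, h2⟩ := this
        have := up' η (j + 1) x y h2
        linarith

/-- The warped cone of the second metric embeds coarsely into `ℓ²`: the level maps have uniform
bounds. -/
lemma isCE {M N : ℕ → Subgroup F3} {m : ℕ → ℕ} {K : ℝ} (h : Chain M N m K) {a : ℕ → ℝ}
    (ha : Scale m a) (dw : {t : ℝ // 0 < t} → Pt M → Pt M → ℝ)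
    (hw : ∀ t, IsWarpedMetric (act M) S3 (um (EL M M) a) t.1 (dw t)) :
    FamCEinto dw (fun a b : ell2 => dist a b) := by
  choose D hD using h.goodM.diam
  choose f hf1 hf2 using fun t : {t : ℝ // 0 < t} => level_emb h ha D hD t.1 t.2 (dw t) (hw t)
  refine famCE_of dw _ (fun _ _ => dist_nonneg) f hf1 fun K => ?_
  refine ⟨_, fun i x y hxy => hf2 i (K ^ 2) x y ?_⟩
  push_cast
  exact pow_le_pow_left₀ dist_nonneg hxy 2

/-! ### Coarse embeddings between families -/

lemma ce_comp {ι κ Y Z : Type} {ρ : ι → Y → Y → ℝ} {σ : κ → Z → Z → ℝ} {E : Type} {dE : E → E → ℝ}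
    (h1 : FamCEfam ρ σ) (h2 : FamCEinto σ dE) : FamCEinto ρ dE := by
  obtain ⟨I, p, q, f, m1, p1, hp, a1, a2, a3, a4, a5⟩ := h1
  obtain ⟨g, m2, p2, b1, b2, b3, b4, b5⟩ := h2
  choose s hs using hp
  refine ⟨fun i x => g (q (s i)) (f (s i) x), m2 ∘ m1, p2 ∘ p1, b1.comp a1, b2.comp a2, b3.comp a3, b4.comp a4,
    fun i x x' => ?_⟩
  have h3 := a5 (s i) x x'
  rw [hs] at h3
  have h4 := b5 (q (s i)) (f (s i) x) (f (s i) x')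
  exact ⟨(b1 h3.1).trans h4.1, h4.2.trans (b2 h3.2)⟩

lemma ce_of_qi {ι κ Y Z : Type} {ρ : ι → Y → Y → ℝ} {σ : κ → Z → Z → ℝ} (h : FamQIfam ρ σ) : FamCEfam ρ σ := by
  obtain ⟨I, p, q, f, C, A, hC, hA, hp, -, h1⟩ := h
  have hC0 : 0 < C := by linarith
  refine ⟨I, p, q, f, fun r => C⁻¹ * r - A, fun r => C * r + A, hp, ?_, ?_, ?_, ?_, fun i x x' =>
    ⟨(h1 i).1 x x', (h1 i).2.1 x x'⟩⟩
  · intro r r' hr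
    have := mul_le_mul_of_nonneg_left hr (inv_pos.2 hC0).le
    dsimp only; linarith
  · intro r r' hr
    have := mul_le_mul_of_nonneg_left hr hC0.le
    dsimp only; linarith
  · exact Filter.tendsto_atTop_add_const_right _ _ (Filter.Tendsto.const_mul_atTop (inv_pos.2 hC0) Filter.tendsto_id)
  · exact Filter.tendsto_atTop_add_const_right _ _ (Filter.Tendsto.const_mul_atTop hC0 Filter.tendsto_id)

end WC

theorem warped_cones_over_conjugate_actions_need_not_be_QI :
    ∃ (Y : Type) (d d' : Y → Y → ℝ) (act : FreeGroup (Fin 3) → Y → Y),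
      IsMetricOn d ∧ IsMetricOn d' ∧ SameTopology d d' ∧
      -- Y is compact (metrisable by either metric)
      SeqCompactWith d ∧
      -- act is an action of F₃
      (∀ y, act 1 y = y) ∧ (∀ g h y, act (g * h) y = act g (act h y)) ∧
      -- free
      (∀ g y, act g y = y → g = 1) ∧
      -- minimal: every orbit is dense
      (∀ y z : Y, ∀ ε : ℝ, 0 < ε → ∃ g, d (act g z) y < ε) ∧
      -- both metrics are invariant
      (∀ g y y', d (act g y) (act g y') = d y y') ∧
      (∀ g y y', d' (act g y) (act g y') = d' y y') ∧
      -- (ii) there is an isometric embedding (Y,d) → (Y,d')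
      (∃ e : Y → Y, ∀ y y', d' (e y) (e y') = d y y') ∧
      -- (i) both open cones have asymptotic Assouad–Nagata dimension 0
      FamANdimZero (fun t : {t : ℝ // 0 < t} => fun y y' : Y => t.1 * d y y') ∧
      FamANdimZero (fun t : {t : ℝ // 0 < t} => fun y y' : Y => t.1 * d' y y') ∧
      -- properties of the warped cones:
      (∀ dw dw' : {t : ℝ // 0 < t} → Y → Y → ℝ,
        (∀ t, IsWarpedMetric act S3 d t.1 (dw t)) →
        (∀ t, IsWarpedMetric act S3 d' t.1 (dw' t)) →
        -- (iii) neither warped cone has property A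
        (¬ FamPropA' dw) ∧ (¬ FamPropA' dw') ∧
        -- (iv) the d-warped cone does not coarsely embed into any Hilbert space
        (∀ (H : Type) [NormedAddCommGroup H] [InnerProductSpace ℝ H],
          ¬ FamCEinto dw (fun a b : H => dist a b)) ∧
        -- while the d'-warped cone does embed into the Hilbert space ℓ²
        (FamCEinto dw' (fun a b : ell2 => dist a b)) ∧
        -- in particular there is no coarse embedding of one into the other,
        (¬ FamCEfam dw dw') ∧
        -- so the warped cones are not quasi-isometric
        (¬ FamQIfam dw dw')) := by
  obtain ⟨M, N, m, K, -, h⟩ := WC.chain_exists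
  obtain ⟨a, ha⟩ := WC.scale_exists m
  have hM := h.goodM
  have hN := h.goodN
  refine ⟨WC.Pt M, WC.um (WC.EL M N) a, WC.um (WC.EL M M) a, WC.act M, hN.d_metric ha, hM.d_metric ha,
    ⟨fun y ε he => ?_, fun y ε he => ?_⟩, hN.d_compact ha, WC.act_one M, WC.act_mul M, hM.act_free,
    hN.d_dense ha, hN.d_act, hM.d_act, WC.isom_emb h a,
    WC.andim_ultra _ (hN.d_metric ha).1 (hN.d_ultra ha), WC.andim_ultra _ (hM.d_metric ha).1 (hM.d_ultra ha),
    fun dw dw' hw hw' => ?_⟩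
  · obtain ⟨δ, hδ, h1⟩ := hN.d_top ha hM ε he
    exact ⟨δ, hδ, h1 y⟩
  · obtain ⟨δ, hδ, h1⟩ := hM.d_top ha hN ε he
    exact ⟨δ, hδ, h1 y⟩
  · have hce := WC.isCE h ha dw' hw'
    have hnot : ¬ FamCEfam dw dw' := fun h1 =>
      WC.notCE h ha dw hw ell2 (WC.ce_comp h1 hce)
    exact ⟨WC.notA hN ha dw hw, WC.notA hM ha dw' hw',
      fun H _ _ => WC.notCE h ha dw hw H, hce, hnot, fun h1 => hnot (WC.ce_of_qi h1)⟩
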